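/- Let (A, m, k) be a commutative Noetherian local ring and let C be a totally acyclic minimal complex of finitely generated free A-modules, with M = Im(d₀ : C₀ → C₋₁) and M* = Hom_A(M, A). Suppose there exists a quasi-deformation A → A' ← B such that the B-module (M ⊗_A A') ⊕ (M* ⊗_A A'), regarded as a B-module by restriction of scalars along the surjection B → A', has finite projective dimension over B. Then C has symmetric growth, i.e. cx⁺(C) = cx⁻(C). -/

import Mathlib

/-!
STATEMENT 6: Let (A, m, k) be a commutative Noetherian local ring and C a totally
acyclic minimal complex of finitely generated free A-modules, with M = Im(d₀) and
M* = Hom_A(M, A).  Suppose there exists a quasi-deformation A → A' ← B such that the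
B-module (M ⊗_A A') ⊕ (M* ⊗_A A') has finite projective dimension over B.  Then C
has symmetric growth, i.e. cx⁺(C) = cx⁻(C).
-/

universe u

open IsLocalRing Filter TensorProduct

/-- A totally acyclic complex of finitely generated free `A`-modules.
Here `d n : C (n+1) → C n`, so the paper's `d₀ : C₀ → C₋₁` is `d (-1)`. -/
structure TotallyAcyclicComplex (A : Type u) [CommRing A] : Type (u + 1) where
  C : ℤ → Type u
  [acg : ∀ n, AddCommGroup (C n)]
  [mod : ∀ n, Module A (C n)]
  free : ∀ n, Module.Free A (C n)
  fin : ∀ n, Module.Finite A (C n)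
  d : ∀ n : ℤ, C (n + 1) →ₗ[A] C n
  exact : ∀ n : ℤ, LinearMap.range (d (n + 1)) = LinearMap.ker (d n)
  dualExact : ∀ n : ℤ,
    LinearMap.range ((d n).dualMap) = LinearMap.ker ((d (n + 1)).dualMap)

attribute [instance] TotallyAcyclicComplex.acg TotallyAcyclicComplex.mod

/-- The polynomial rate of growth of a sequence of Betti numbers `β` in the positive
direction: the infimum (in `ℕ∞`, so `⊤` if no such `t` exists) of all `t ∈ ℕ` such
that `β n ≤ a · n^(t−1)` for some real `a` and all sufficiently large `n`. -/
noncomputable def complexityPlus (β : ℤ → ℕ) : ℕ∞ :=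
  sInf {t : ℕ∞ | ∃ s : ℕ, t = (s : ℕ∞) ∧ ∃ a : ℝ,
    ∀ᶠ n : ℕ in atTop, (β (n : ℤ) : ℝ) ≤ a * (n : ℝ) ^ ((s : ℤ) - 1)}

/-- The polynomial rate of growth of `β` in the negative direction. -/
noncomputable def complexityMinus (β : ℤ → ℕ) : ℕ∞ :=
  complexityPlus fun n => β (-n)

/-- A finite free resolution `0 → F_ℓ → ⋯ → F₁ → F₀ → M → 0` of `M` by finitely
generated free `B`-modules; its existence expresses that `M` has finite projective
dimension over `B`. -/
structure FiniteFreeResolution (B : Type u) [CommRing B]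
    (M : Type u) [AddCommGroup M] [Module B M] : Type (u + 1) where
  len : ℕ
  F : ℕ → Type u
  [acg : ∀ n, AddCommGroup (F n)]
  [mod : ∀ n, Module B (F n)]
  free : ∀ n, Module.Free B (F n)
  fin : ∀ n, Module.Finite B (F n)
  d : ∀ n : ℕ, F (n + 1) →ₗ[B] F n
  aug : F 0 →ₗ[B] M
  augSurj : Function.Surjective aug
  ex0 : LinearMap.range (d 0) = LinearMap.ker aug
  ex : ∀ n : ℕ, LinearMap.range (d (n + 1)) = LinearMap.ker (d n)
  bounded : ∀ n : ℕ, len ≤ n → Subsingleton (F n)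

namespace SG

section II
variable {B : Type u} [CommRing B]

/-- The submodule `(x₀, …, x_{j-1}) M`. -/
def II (x : ℕ → B) (j : ℕ) (M : Type*) [AddCommGroup M] [Module B M] : Submodule B M where
  carrier := {a | ∃ b : ℕ → M, a = ∑ i ∈ Finset.range j, x i • b i}
  add_mem' := by
    rintro _ _ ⟨b, rfl⟩ ⟨b', rfl⟩
    exact ⟨b + b', by simp [Finset.sum_add_distrib]⟩
  zero_mem' := ⟨0, by simp⟩
  smul_mem' := by
    rintro r _ ⟨b, rfl⟩
    exact ⟨fun i => r • b i, by simp [Finset.smul_sum, smul_comm r]⟩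

variable {x : ℕ → B} {M N : Type*} [AddCommGroup M] [Module B M] [AddCommGroup N] [Module B N]

lemma mem_II {j : ℕ} {a : M} :
    a ∈ II x j M ↔ ∃ b : ℕ → M, a = ∑ i ∈ Finset.range j, x i • b i := Iff.rfl

lemma smul_mem_II {j i : ℕ} (h : i < j) (a : M) : x i • a ∈ II x j M := by
  refine ⟨fun k => if k = i then a else 0, ?_⟩
  simp [h]

lemma map_mem_II {j : ℕ} {a : M} (f : M →ₗ[B] N) (h : a ∈ II x j M) : f a ∈ II x j N := by
  obtain ⟨b, rfl⟩ := h
  exact ⟨fun i => f (b i), by simp⟩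

lemma mem_II_succ {j : ℕ} {a : M} : a ∈ II x (j + 1) M ↔ ∃ b, a - x j • b ∈ II x j M := by
  constructor
  · rintro ⟨b, rfl⟩
    exact ⟨b j, b, by simp [Finset.sum_range_succ]⟩
  · rintro ⟨b, b', h⟩
    refine ⟨fun i => if i = j then b else b' i, ?_⟩
    rw [Finset.sum_range_succ]
    beta_reduce
    rw [if_pos rfl, ← sub_eq_iff_eq_add, h]
    refine Finset.sum_congr rfl fun i hi => ?_
    rw [if_neg (Finset.mem_range.1 hi).ne]

lemma II_mono {j j' : ℕ} (h : j ≤ j') : II x j M ≤ II x j' M := by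
  rintro _ ⟨b, rfl⟩
  refine Submodule.sum_mem _ fun i hi => smul_mem_II ((Finset.mem_range.1 hi).trans_le h) _

lemma II_le {j : ℕ} {P : Submodule B M} (h : ∀ i < j, ∀ a : M, x i • a ∈ P) : II x j M ≤ P := by
  rintro _ ⟨b, rfl⟩
  exact Submodule.sum_mem _ fun i hi => h i (Finset.mem_range.1 hi) _

lemma II_zero : II x 0 M = ⊥ := by
  rw [eq_bot_iff]; exact II_le (by simp)

lemma hom_mem_II {ι : Type*} (b : Module.Basis ι B M) {j : ℕ} {f : M →ₗ[B] N} :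
    f ∈ II x j (M →ₗ[B] N) ↔ ∀ i, f (b i) ∈ II x j N := by
  constructor
  · intro h i
    exact map_mem_II (LinearMap.applyₗ (b i)) h
  · intro h
    choose g hg using h
    refine ⟨fun k => b.constr B (fun i => g i k), ?_⟩
    refine b.ext fun i => ?_
    simp [hg i, Module.Basis.constr_basis]

lemma apply_mem_II {j : ℕ} {f : M →ₗ[B] N} (h : f ∈ II x j (M →ₗ[B] N)) (v : M) :
    f v ∈ II x j N := map_mem_II (LinearMap.applyₗ v) h

lemma basis_mem_II {ι : Type*} (b : Module.Basis ι B M) {j : ℕ} {v : M} :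
    v ∈ II x j M ↔ ∀ i, b.repr v i ∈ II x j B := by
  constructor
  · intro h i
    exact map_mem_II (b.coord i) h
  · intro h
    rw [← b.linearCombination_repr v, Finsupp.linearCombination_apply]
    refine Submodule.sum_mem _ fun i _ => ?_
    exact map_mem_II (LinearMap.toSpanSingleton B M (b i)) (h i)

/-- `x₀, …, x_{c-1}` is weakly regular on `M`. -/
def WR (x : ℕ → B) (c : ℕ) (M : Type*) [AddCommGroup M] [Module B M] : Prop :=
  ∀ j < c, ∀ a : M, x j • a ∈ II x j M → a ∈ II x j M

lemma WR.free {ι : Type*} (b : Module.Basis ι B M) {c : ℕ} (h : WR x c B) : WR x c M := by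
  intro j hj a ha
  rw [basis_mem_II b] at ha ⊢
  intro i
  exact h j hj _ (by simpa using ha i)

lemma WR.hom {ι : Type*} (b : Module.Basis ι B M) {c : ℕ} (h : WR x c N) :
    WR x c (M →ₗ[B] N) := by
  intro j hj a ha
  rw [hom_mem_II b] at ha ⊢
  intro i
  exact h j hj _ (by simpa using ha i)

lemma WR.coeff {c : ℕ} (h : WR x c M) : ∀ {j : ℕ}, j ≤ c → ∀ a : ℕ → M,
    ∑ i ∈ Finset.range j, x i • a i = 0 → ∀ i < j, a i ∈ II x j M := by
  intro j
  induction j with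
  | zero => intro _ _ _ i hi; omega
  | succ j ih =>
    intro hj a ha i hi
    rw [Finset.sum_range_succ] at ha
    have h1 : a j ∈ II x j M := by
      refine h j (by omega) _ ?_
      rw [← neg_eq_of_add_eq_zero_right ha]
      exact neg_mem ⟨a, rfl⟩
    rcases Nat.lt_succ_iff_lt_or_eq.1 hi with hi | rfl
    · obtain ⟨b, hb⟩ := h1
      have h2 := ih (by omega) (fun i => a i + x j • b i) (by
        rw [← ha, hb]
        simp [Finset.sum_add_distrib, smul_add, Finset.smul_sum, smul_comm (x j)]) i hi
      have h3 : a i = (a i + x j • b i) - x j • b i := by abel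
      rw [h3]
      exact sub_mem (II_mono (by omega) h2) (smul_mem_II (by omega) _)
    · exact II_mono (by omega) h1

end II

section prj
variable {B : Type u} [CommRing B] {F : Type u} [AddCommGroup F] [Module B F] {ι : Type}

/-- projection to degree `n` -/
noncomputable def prj (b : Module.Basis ι B F) (deg : ι → ℤ) (n : ℤ) : F →ₗ[B] F := by
  classical exact b.constr B (fun i => if deg i = n then b i else 0)

/-- the operator `T` has degree `s` -/
def HD (b : Module.Basis ι B F) (deg : ι → ℤ) (s : ℤ) (T : F →ₗ[B] F) : Prop :=
  ∀ n v, T (prj b deg n v) = prj b deg (n + s) (T v)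

variable (b : Module.Basis ι B F) (deg : ι → ℤ)

lemma prj_basis_same (i : ι) : prj b deg (deg i) (b i) = b i := by
  simp [prj, Module.Basis.constr_basis]

lemma prj_basis (n : ℤ) (i : ι) [Decidable (deg i = n)] :
    prj b deg n (b i) = if deg i = n then b i else 0 := by
  simp [prj, Module.Basis.constr_basis]

lemma prj_prj (n m : ℤ) [Decidable (n = m)] (v : F) :
    prj b deg n (prj b deg m v) = if n = m then prj b deg n v else 0 := by
  classical
  split_ifs with h
  · subst h
    refine LinearMap.congr_fun (f := prj b deg n ∘ₗ prj b deg n) (g := prj b deg n) (b.ext fun i => ?_) v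
    simp only [LinearMap.comp_apply, prj_basis]
    split_ifs with h1 <;> simp [prj_basis, h1]
  · refine LinearMap.congr_fun (f := prj b deg n ∘ₗ prj b deg m) (g := 0) (b.ext fun i => ?_) v
    simp only [LinearMap.comp_apply, prj_basis]
    split_ifs with h1
    · simp only [prj_basis, LinearMap.zero_apply, ite_eq_right_iff]; omega
    · simp

lemma prj_self (n : ℤ) (v : F) : prj b deg n (prj b deg n v) = prj b deg n v := by
  classical rw [prj_prj, if_pos rfl]

lemma prj_ne {n m : ℤ} (h : n ≠ m) (v : F) : prj b deg n (prj b deg m v) = 0 := by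
  classical rw [prj_prj, if_neg h]

/-- every element is the sum of its components -/
lemma exists_sum_prj (v : F) : ∃ s : Finset ℤ, ∀ t, s ⊆ t → v = ∑ n ∈ t, prj b deg n v := by
  classical
  refine ⟨(b.repr v).support.image deg, fun t ht => ?_⟩
  have key : ∀ i ∈ (b.repr v).support, b i = ∑ n ∈ t, prj b deg n (b i) := by
    intro i hi
    simp only [prj_basis]
    rw [Finset.sum_ite_eq, if_pos (ht (Finset.mem_image_of_mem _ hi))]
  conv_lhs => rw [← b.linearCombination_repr v, Finsupp.linearCombination_apply, Finsupp.sum]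
  conv_rhs => rw [← b.linearCombination_repr v, Finsupp.linearCombination_apply, Finsupp.sum]
  simp only [map_sum, map_smul]
  rw [Finset.sum_comm]
  refine Finset.sum_congr rfl fun i hi => ?_
  rw [← Finset.smul_sum, ← key i hi]

lemma prj_mem_of (P : Submodule B F) {v : F} (h : ∀ n, prj b deg n v ∈ P) : v ∈ P := by
  obtain ⟨s, hs⟩ := exists_sum_prj b deg v
  rw [hs s subset_rfl]
  exact Submodule.sum_mem _ fun n _ => h n

variable {b deg}

lemma HD.of_basis {s : ℤ} {T : F →ₗ[B] F} (h : ∀ i, prj b deg (deg i + s) (T (b i)) = T (b i)) :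
    HD b deg s T := by
  classical
  intro n v
  refine LinearMap.congr_fun (f := T ∘ₗ prj b deg n) (g := prj b deg (n+s) ∘ₗ T) (b.ext fun i => ?_) v
  simp only [LinearMap.comp_apply, prj_basis]
  split_ifs with h1
  · rw [← h1, h]
  · rw [map_zero, ← h i, prj_ne]; omega

lemma HD.basis {s : ℤ} {T : F →ₗ[B] F} (h : HD b deg s T) (i : ι) :
    prj b deg (deg i + s) (T (b i)) = T (b i) := by
  rw [← h, prj_basis_same]

lemma HD.comp {s t : ℤ} {T U : F →ₗ[B] F} (h : HD b deg s T) (h' : HD b deg t U) :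
    HD b deg (t + s) (T ∘ₗ U) := by
  intro n v
  simp only [LinearMap.comp_apply]
  rw [h', h, add_assoc]

lemma HD.add {s : ℤ} {T U : F →ₗ[B] F} (h : HD b deg s T) (h' : HD b deg s U) :
    HD b deg s (T + U) := by
  intro n v; simp [h n, h' n]

lemma HD.sub {s : ℤ} {T U : F →ₗ[B] F} (h : HD b deg s T) (h' : HD b deg s U) :
    HD b deg s (T - U) := by
  intro n v; simp [h n, h' n]

lemma HD.smul {s : ℤ} {T : F →ₗ[B] F} (r : B) (h : HD b deg s T) : HD b deg s (r • T) := by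
  intro n v; simp [h n]

lemma HD.id : HD b deg 0 (LinearMap.id : F →ₗ[B] F) := by
  intro n v; simp

lemma HD.zero (s : ℤ) : HD b deg s (0 : F →ₗ[B] F) := by
  intro n v; simp

/-- homogeneous coefficients -/
lemma HD.exists_coeff {x : ℕ → B} {j : ℕ} {s : ℤ} {T : F →ₗ[B] F} (h : HD b deg s T)
    (hT : T ∈ II x j (F →ₗ[B] F)) :
    ∃ g : ℕ → F →ₗ[B] F, (∀ i, HD b deg s (g i)) ∧ T = ∑ i ∈ Finset.range j, x i • g i := by
  obtain ⟨a, ha⟩ := hT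
  refine ⟨fun k => b.constr B (fun i => prj b deg (deg i + s) (a k (b i))), fun k => ?_, ?_⟩
  · refine HD.of_basis fun i => ?_
    rw [Module.Basis.constr_basis, prj_self]
  · refine b.ext fun i => ?_
    rw [← h.basis i, ha]
    simp [Module.Basis.constr_basis]

lemma prj_prod {ι : Type} (b : Module.Basis ι B F) (deg : ι → ℤ) (r n : ℤ) (v : F × F) :
    prj (b.prod b) (Sum.elim deg (fun i => deg i - r)) n v =
      (prj b deg n v.1, prj b deg (n + r) v.2) := by
  classical
  refine LinearMap.congr_fun (f := prj (b.prod b) (Sum.elim deg (fun i => deg i - r)) n)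
    (g := (prj b deg n).prodMap (prj b deg (n + r))) ((b.prod b).ext fun i => ?_) v
  rcases i with i | i
  · simp only [prj_basis, Sum.elim_inl, LinearMap.prodMap_apply]
    split_ifs with h <;> simp [Module.Basis.prod_apply, prj_basis, h] <;> rfl
  · simp only [prj_basis, Sum.elim_inr, LinearMap.prodMap_apply, sub_eq_iff_eq_add]
    split_ifs with h <;> simp [Module.Basis.prod_apply, prj_basis, h] <;> rfl
end prj
end SG

namespace SG
set_option linter.unusedSectionVars false
set_option linter.unusedVariables false

lemma exists_aeval {B : Type*} [CommRing B] {A : Type*} [Ring A] [Algebra B A] {σ : Type*}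
    (f : σ → A) (hf : ∀ i k, f i * f k = f k * f i) :
    ∃ ρ : MvPolynomial σ B →ₐ[B] A, ∀ i, ρ (MvPolynomial.X i) = f i := by
  letI : CommRing (Algebra.adjoin B (Set.range f)) := Algebra.adjoinCommRingOfComm B (by
    rintro _ ⟨i, rfl⟩ _ ⟨k, rfl⟩
    exact hf i k)
  let g : MvPolynomial σ B →ₐ[B] Algebra.adjoin B (Set.range f) :=
    MvPolynomial.aeval (fun i => ⟨f i, Algebra.subset_adjoin ⟨i, rfl⟩⟩)
  refine ⟨(Algebra.adjoin B (Set.range f)).val.comp g, fun i => ?_⟩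
  simp [g]

/-- `x₀, …, x_{c-1}` is a regular sequence in the maximal ideal. -/
class RegSeq {B : Type u} [CommRing B] [IsLocalRing B] (x : ℕ → B) (c : ℕ) : Prop where
  mem : ∀ i < c, x i ∈ maximalIdeal B
  wr : WR x c B

/-- A lifted system: a graded free module with `d² = ∑ xᵢ χᵢ`. -/
structure LS {B : Type u} [CommRing B] (x : ℕ → B) (c j : ℕ) : Type (u+1) where
  F : Type u
  [acg : AddCommGroup F]
  [mod : Module B F]
  ι : Type
  b : Module.Basis ι B F
  deg : ι → ℤ
  fin : ∀ n, {i | deg i = n}.Finite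
  hj : j ≤ c
  d : F →ₗ[B] F
  χ : ℕ → F →ₗ[B] F
  hd : HD b deg 1 d
  hχ : ∀ i, HD b deg 2 (χ i)
  χ0 : ∀ i, j ≤ i → χ i = 0
  dd : ∀ v, d (d v) = ∑ i ∈ Finset.range j, x i • χ i v

attribute [instance] LS.acg LS.mod

namespace LS
variable {B : Type u} [CommRing B] {x : ℕ → B} {c j : ℕ}

/-- exactness modulo `(x₀, …, x_{j-1})` -/
def Ex (S : LS x c j) : Prop := ∀ v : S.F, S.d v ∈ II x j S.F → ∃ w, v - S.d w ∈ II x j S.F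

/-- dual exactness modulo `(x₀, …, x_{j-1})` -/
def DEx (S : LS x c j) : Prop := ∀ φ : S.F →ₗ[B] B, φ ∘ₗ S.d ∈ II x j (S.F →ₗ[B] B) →
  ∃ ψ : S.F →ₗ[B] B, φ - ψ ∘ₗ S.d ∈ II x j (S.F →ₗ[B] B)

/-- projection -/
noncomputable abbrev p (S : LS x c j) (n : ℤ) : S.F →ₗ[B] S.F := prj S.b S.deg n

/-- operators commuting with `d` up to `(x)` -/
def Good (S : LS x c j) (T : S.F →ₗ[B] S.F) : Prop :=
  S.d ∘ₗ T - T ∘ₗ S.d ∈ II x j (S.F →ₗ[B] S.F)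

lemma Good.add {S : LS x c j} {T U : S.F →ₗ[B] S.F} (hT : S.Good T) (hU : S.Good U) :
    S.Good (T + U) := by
  have := add_mem hT hU
  unfold Good
  convert this using 1
  ext v; simp; abel

lemma Good.comp {S : LS x c j} {T U : S.F →ₗ[B] S.F} (hT : S.Good T) (hU : S.Good U) :
    S.Good (T ∘ₗ U) := by
  have h1 := map_mem_II (LinearMap.lcomp B S.F U) hT
  have h2 := map_mem_II (LinearMap.compRight B (M₁ := S.F) T) hU
  have := add_mem h1 h2
  unfold Good
  convert this using 1
  ext v; simp

lemma Good.smul_id {S : LS x c j} (r : B) : S.Good (r • LinearMap.id) := by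
  have : S.d ∘ₗ (r • LinearMap.id) - (r • LinearMap.id) ∘ₗ S.d = 0 := by ext v; simp
  unfold Good
  rw [this]
  exact zero_mem _

section loc
variable [IsLocalRing B] [RegSeq x c]

variable (S : LS x c j)

lemma wrF : WR x c S.F := WR.free S.b RegSeq.wr
lemma wrE : WR x c (S.F →ₗ[B] S.F) := WR.hom S.b S.wrF
lemma wrD : WR x c (S.F →ₗ[B] B) := WR.hom S.b RegSeq.wr

lemma sum_comm_zero : ∑ i ∈ Finset.range j, x i • (S.d ∘ₗ S.χ i - S.χ i ∘ₗ S.d) = 0 := by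
  ext v
  have h1 : S.d (S.d (S.d v)) = ∑ i ∈ Finset.range j, x i • S.χ i (S.d v) := S.dd _
  have h2 : S.d (S.d (S.d v)) = ∑ i ∈ Finset.range j, x i • S.d (S.χ i v) := by
    have := congrArg S.d (S.dd v)
    simpa only [map_sum, map_smul] using this
  simp [smul_sub, Finset.sum_sub_distrib, ← h1, ← h2]

lemma good_χ (i : ℕ) : S.Good (S.χ i) := by
  by_cases hi : i < j
  · exact S.wrE.coeff S.hj _ S.sum_comm_zero i hi
  · unfold Good; rw [S.χ0 i (by omega)]; simp

/-- `𝔪 F` -/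
abbrev mF : Submodule B S.F := maximalIdeal B • (⊤ : Submodule B S.F)

lemma II_le_mF : II x j S.F ≤ S.mF := II_le fun i hi _ =>
  Submodule.smul_mem_smul (RegSeq.mem (c := c) i (hi.trans_le S.hj)) trivial

lemma map_mF {S : LS x c j} {j' : ℕ} {S' : LS x c j'} (f : S.F →ₗ[B] S'.F) {v : S.F} (hv : v ∈ S.mF) :
    f v ∈ S'.mF := by
  have h := Submodule.mem_map_of_mem (f := f) hv
  rw [Submodule.map_smul''] at h
  exact Submodule.smul_mono le_rfl le_top h

/-- cycles modulo `𝔪` -/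
def Z : Submodule B S.F := S.mF.comap S.d
/-- boundaries modulo `𝔪` -/
def Bd : Submodule B S.F := LinearMap.range S.d ⊔ S.mF

lemma mem_Z {v : S.F} : v ∈ S.Z ↔ S.d v ∈ S.mF := Iff.rfl
lemma mem_Bd {v : S.F} : v ∈ S.Bd ↔ ∃ w, v - S.d w ∈ S.mF := by
  unfold Bd
  rw [Submodule.mem_sup]
  constructor
  · rintro ⟨_, ⟨w, rfl⟩, z, hz, rfl⟩
    exact ⟨w, by simpa using hz⟩
  · rintro ⟨w, hw⟩
    exact ⟨_, ⟨w, rfl⟩, _, hw, by abel⟩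

lemma mF_le_Bd : S.mF ≤ S.Bd := le_sup_right
lemma d_mem_Bd (w : S.F) : S.d w ∈ S.Bd := Submodule.mem_sup_left ⟨w, rfl⟩
lemma mF_le_Z : S.mF ≤ S.Z := fun _ h => map_mF S.d h
lemma dd_mem (v : S.F) : S.d (S.d v) ∈ S.mF := by
  apply S.II_le_mF; exact ⟨_, S.dd v⟩
lemma Bd_le_Z : S.Bd ≤ S.Z := by
  refine sup_le ?_ S.mF_le_Z
  rintro _ ⟨w, rfl⟩
  exact S.dd_mem w

/-- homology modulo `𝔪` -/
def E : Type u := S.Z ⧸ (S.Bd.comap S.Z.subtype)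

noncomputable instance : AddCommGroup S.E := inferInstanceAs (AddCommGroup (S.Z ⧸ (S.Bd.comap S.Z.subtype)))
noncomputable instance : Module B S.E := inferInstanceAs (Module B (S.Z ⧸ (S.Bd.comap S.Z.subtype)))

/-- class of a cycle -/
noncomputable def cl : S.Z →ₗ[B] S.E := Submodule.mkQ (S.Bd.comap S.Z.subtype)

lemma cl_surj : Function.Surjective S.cl := Submodule.mkQ_surjective _

lemma cl_eq_zero {z : S.Z} : S.cl z = 0 ↔ (z : S.F) ∈ S.Bd :=
  (Submodule.Quotient.mk_eq_zero (S.Bd.comap S.Z.subtype))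

lemma cl_eq {z w : S.Z} : S.cl z = S.cl w ↔ (z : S.F) - w ∈ S.Bd := by
  rw [← sub_eq_zero, ← map_sub, cl_eq_zero]; rfl

variable {S}

/-- induced maps -/
noncomputable def Emap {j' : ℕ} {S' : LS x c j'} (T : S.F →ₗ[B] S'.F)
    (hZ : ∀ v ∈ S.Z, T v ∈ S'.Z) (hB : ∀ v ∈ S.Bd, T v ∈ S'.Bd) : S.E →ₗ[B] S'.E :=
  Submodule.mapQ (S.Bd.comap S.Z.subtype) (S'.Bd.comap S'.Z.subtype) (T.restrict hZ)
    (fun v hv => hB _ hv)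

lemma Emap_cl {j' : ℕ} {S' : LS x c j'} (T : S.F →ₗ[B] S'.F)
    (hZ : ∀ v ∈ S.Z, T v ∈ S'.Z) (hB : ∀ v ∈ S.Bd, T v ∈ S'.Bd) (z : S.Z) :
    Emap T hZ hB (S.cl z) = S'.cl ⟨T z, hZ z z.2⟩ := rfl

lemma Good.comm_mem {T : S.F →ₗ[B] S.F} (h : S.Good T) (v : S.F) :
    S.d (T v) - T (S.d v) ∈ S.mF := S.II_le_mF (apply_mem_II h v)

lemma Good.Z {T : S.F →ₗ[B] S.F} (h : S.Good T) : ∀ v ∈ S.Z, T v ∈ S.Z := by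
  intro v hv
  rw [mem_Z]
  have := add_mem (h.comm_mem v) (map_mF T hv)
  simpa using this

lemma Good.Bd {T : S.F →ₗ[B] S.F} (h : S.Good T) : ∀ v ∈ S.Bd, T v ∈ S.Bd := by
  intro v hv
  rw [mem_Bd] at hv ⊢
  obtain ⟨w, hw⟩ := hv
  refine ⟨T w, ?_⟩
  have := sub_mem (map_mF T hw) (h.comm_mem w)
  rw [map_sub] at this
  convert this using 1
  abel

/-- action of good operators -/
noncomputable def Good.E {T : S.F →ₗ[B] S.F} (h : S.Good T) : S.E →ₗ[B] S.E := Emap T h.Z h.Bd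

lemma Good.E_cl {T : S.F →ₗ[B] S.F} (h : S.Good T) (z : S.Z) :
  h.E (S.cl z) = S.cl ⟨T z, h.Z z z.2⟩ := rfl

lemma p_mF {v : S.F} (n : ℤ) (hv : v ∈ S.mF) : S.p n v ∈ S.mF := map_mF _ hv

lemma p_Z (n : ℤ) : ∀ v ∈ S.Z, S.p n v ∈ S.Z := by
  intro v hv
  rw [mem_Z, S.hd]; exact p_mF _ hv

lemma p_Bd (n : ℤ) : ∀ v ∈ S.Bd, S.p n v ∈ S.Bd := by
  intro v hv
  rw [mem_Bd] at hv ⊢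
  obtain ⟨w, hw⟩ := hv
  refine ⟨S.p (n-1) w, ?_⟩
  rw [S.hd]
  simpa using p_mF n hw

variable (S)

/-- projections on `E` -/
noncomputable def e (n : ℤ) : S.E →ₗ[B] S.E := Emap (S.p n) (p_Z n) (p_Bd n)

lemma e_cl (n : ℤ) (z : S.Z) : S.e n (S.cl z) = S.cl ⟨S.p n z, p_Z (S := S) n z z.2⟩ :=
  Emap_cl _ _ _ _

lemma e_self (n : ℤ) (a : S.E) : S.e n (S.e n a) = S.e n a := by
  obtain ⟨z, rfl⟩ := S.cl_surj a
  simp [e_cl, prj_self]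

lemma e_ne {n m : ℤ} (h : n ≠ m) (a : S.E) : S.e n (S.e m a) = 0 := by
  obtain ⟨z, rfl⟩ := S.cl_surj a
  simp only [e_cl, prj_ne _ _ h]
  exact map_zero S.cl

lemma exists_sum_e (a : S.E) : ∃ s : Finset ℤ, ∀ t, s ⊆ t → a = ∑ n ∈ t, S.e n a := by
  obtain ⟨z, rfl⟩ := S.cl_surj a
  obtain ⟨s, hs⟩ := exists_sum_prj S.b S.deg (z : S.F)
  refine ⟨s, fun t ht => ?_⟩
  simp only [e_cl]
  rw [← map_sum]
  congr 1
  ext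
  simpa using hs t ht

lemma Good.E_e {S : LS x c j} {T : S.F →ₗ[B] S.F} (h : S.Good T) {s : ℤ} (hs : HD S.b S.deg s T) (n : ℤ) (a : S.E) :
    h.E (S.e n a) = S.e (n + s) (h.E a) := by
  obtain ⟨z, rfl⟩ := S.cl_surj a
  simp only [e_cl, Good.E_cl]
  congr 1
  exact Subtype.ext (hs n z)

/-- the action of `χ i` on `E` -/
noncomputable def Eχ (i : ℕ) : S.E →ₗ[B] S.E := (S.good_χ i).E

lemma Eχ_cl (i : ℕ) (z : S.Z) : S.Eχ i (S.cl z) = S.cl ⟨S.χ i z, (S.good_χ i).Z z z.2⟩ := rfl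

lemma Eχ_of_le {i : ℕ} (h : j ≤ i) (a : S.E) : S.Eχ i a = 0 := by
  obtain ⟨z, rfl⟩ := S.cl_surj a
  rw [Eχ_cl, cl_eq_zero]; simp [S.χ0 i h]

lemma Eχ_comm (i k : ℕ) (a : S.E) : S.Eχ i (S.Eχ k a) = S.Eχ k (S.Eχ i a) := by
  by_cases hi : i < j
  swap
  · rw [Eχ_of_le S (not_lt.1 hi), Eχ_of_le S (not_lt.1 hi), map_zero]
  obtain ⟨h, hh⟩ := S.good_χ k
  have key : ∑ i ∈ Finset.range j, x i •
      ((S.χ i ∘ₗ S.χ k - S.χ k ∘ₗ S.χ i) - (S.d ∘ₗ h i + h i ∘ₗ S.d)) = 0 := by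
    ext v
    have h0 : ∀ v, S.d (S.χ k v) - S.χ k (S.d v) = ∑ i ∈ Finset.range j, x i • h i v := by
      intro v
      have := LinearMap.congr_fun hh v
      simpa using this
    have h1 := S.dd (S.χ k v)
    have h2 := congrArg (S.χ k) (S.dd v)
    have h3 := congrArg S.d (h0 v)
    have h4 := h0 (S.d v)
    simp only [map_sub, map_sum, map_smul] at h2 h3
    simp only [LinearMap.coe_sum, Finset.sum_apply, LinearMap.smul_apply, LinearMap.sub_apply,
      LinearMap.add_apply, LinearMap.comp_apply, smul_sub, smul_add, Finset.sum_sub_distrib,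
      Finset.sum_add_distrib, LinearMap.zero_apply]
    rw [← h1, ← h2, ← h3, ← h4]
    abel
  have h5 := S.wrE.coeff S.hj _ key i hi
  obtain ⟨z, rfl⟩ := S.cl_surj a
  simp only [Eχ_cl, cl_eq]
  rw [mem_Bd]
  refine ⟨h i z, ?_⟩
  have h6 := S.II_le_mF (apply_mem_II h5 (z : S.F))
  have h7 : h i (S.d z) ∈ S.mF := map_mF _ z.2
  have := add_mem h6 h7
  simp only [LinearMap.sub_apply, LinearMap.add_apply, LinearMap.comp_apply] at this
  convert this using 1
  abel

/-- polynomial action -/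
noncomputable def rho : MvPolynomial (Fin c) B →ₐ[B] Module.End B S.E :=
  (exists_aeval (B := B) (A := Module.End B S.E) (fun i : Fin c => S.Eχ i) (fun i k => by
    ext a; exact S.Eχ_comm i k a)).choose

lemma rho_X (i : Fin c) : S.rho (MvPolynomial.X i) = S.Eχ i :=
  (exists_aeval (B := B) (A := Module.End B S.E) (fun i : Fin c => S.Eχ i) (fun i k => by
    ext a; exact S.Eχ_comm i k a)).choose_spec i

noncomputable instance : Module (MvPolynomial (Fin c) B) S.E :=
  Module.compHom S.E S.rho.toRingHom

lemma X_smul (i : Fin c) (a : S.E) : (MvPolynomial.X i : MvPolynomial (Fin c) B) • a = S.Eχ i a := by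
  change S.rho (MvPolynomial.X i) a = _
  rw [rho_X]

lemma C_smul (r : B) (a : S.E) : (MvPolynomial.C r : MvPolynomial (Fin c) B) • a = r • a := by
  change S.rho (MvPolynomial.C r) a = _
  have : S.rho (MvPolynomial.C r) = algebraMap B (Module.End B S.E) r := S.rho.commutes r
  rw [this]; rfl

instance : IsScalarTower B (MvPolynomial (Fin c) B) S.E := IsScalarTower.of_algebraMap_smul
  (fun r a => S.C_smul r a)

/-- a `B`-linear map compatible with the `χ i` is linear over the polynomial ring -/
noncomputable def toP {S : LS x c j} {j' : ℕ} {S' : LS x c j'} (f : S.E →ₗ[B] S'.E) (hf : ∀ i a, f (S.Eχ i a) = S'.Eχ i (f a)) :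
    S.E →ₗ[MvPolynomial (Fin c) B] S'.E where
  toFun := f
  map_add' := map_add f
  map_smul' := by
    intro r a
    simp only [RingHom.id_apply]
    induction r using MvPolynomial.induction_on generalizing a with
    | C r => simp [C_smul]
    | add p q hp hq => simp [add_smul, hp, hq]
    | mul_X p i hp => rw [mul_smul, hp, X_smul, hf, mul_smul, X_smul]

end loc
end LS
end SG

namespace SG
set_option linter.unusedSectionVars false
set_option linter.unusedVariables false

lemma map_smul_top {B : Type u} [CommRing B] {I : Ideal B} {M N : Type*} [AddCommGroup M]
    [Module B M] [AddCommGroup N] [Module B N] (f : M →ₗ[B] N) {v : M}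
    (hv : v ∈ I • (⊤ : Submodule B M)) : f v ∈ I • (⊤ : Submodule B N) := by
  have h := Submodule.mem_map_of_mem (f := f) hv
  rw [Submodule.map_smul''] at h
  exact Submodule.smul_mono le_rfl le_top h

lemma HD.cast {B : Type u} [CommRing B] {F : Type u} [AddCommGroup F] [Module B F] {ι : Type}
    {b : Module.Basis ι B F} {deg : ι → ℤ} {s t : ℤ} {T : F →ₗ[B] F} (h : HD b deg s T)
    (hs : s = t) : HD b deg t T := hs ▸ h

section pair
variable {B : Type u} [CommRing B] {M N : Type*} [AddCommGroup M]
    [Module B M] [AddCommGroup N] [Module B N] (e : M ≃ₗ[B] N × N)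

/-- first projection -/
def P1 : M →ₗ[B] N := LinearMap.fst B N N ∘ₗ e.toLinearMap
/-- second projection -/
def P2 : M →ₗ[B] N := LinearMap.snd B N N ∘ₗ e.toLinearMap
/-- first injection -/
def I1 : N →ₗ[B] M := e.symm.toLinearMap ∘ₗ LinearMap.inl B N N
/-- second injection -/
def I2 : N →ₗ[B] M := e.symm.toLinearMap ∘ₗ LinearMap.inr B N N

@[simp] lemma P1_I1 (a : N) : P1 e (I1 e a) = a := by simp [P1, I1]
@[simp] lemma P1_I2 (a : N) : P1 e (I2 e a) = 0 := by simp [P1, I2]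
@[simp] lemma P2_I1 (a : N) : P2 e (I1 e a) = 0 := by simp [P2, I1]
@[simp] lemma P2_I2 (a : N) : P2 e (I2 e a) = a := by simp [P2, I2]
lemma pair_ext {v w : M} (h1 : P1 e v = P1 e w) (h2 : P2 e v = P2 e w) : v = w :=
  e.injective (Prod.ext h1 h2)
lemma pair_eq (v : M) : v = I1 e (P1 e v) + I2 e (P2 e v) := by
  apply pair_ext e <;> simp
lemma pair_mem_II {x : ℕ → B} {j : ℕ} {v : M} :
    v ∈ II x j M ↔ P1 e v ∈ II x j N ∧ P2 e v ∈ II x j N := by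
  constructor
  · intro h
    exact ⟨map_mem_II _ h, map_mem_II _ h⟩
  · rintro ⟨h1, h2⟩
    rw [pair_eq e v]
    exact add_mem (map_mem_II _ h1) (map_mem_II _ h2)
lemma pair_mem_smul {I : Ideal B} {v : M} : v ∈ I • (⊤ : Submodule B M) ↔
    P1 e v ∈ I • (⊤ : Submodule B N) ∧ P2 e v ∈ I • (⊤ : Submodule B N) := by
  constructor
  · intro h
    exact ⟨map_smul_top _ h, map_smul_top _ h⟩
  · rintro ⟨h1, h2⟩
    rw [pair_eq e v]
    exact add_mem (map_smul_top _ h1) (map_smul_top _ h2)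
end pair

namespace LS
variable {B : Type u} [CommRing B] {x : ℕ → B} {c j : ℕ} [IsLocalRing B] [RegSeq x c]

section D
variable (S : LS x c (j+1))

lemma comm_last : S.d ∘ₗ S.χ j - S.χ j ∘ₗ S.d ∈ II x j (S.F →ₗ[B] S.F) := by
  refine S.wrE j S.hj _ ?_
  have := S.sum_comm_zero
  rw [Finset.sum_range_succ] at this
  rw [← neg_eq_of_add_eq_zero_right this]
  exact neg_mem ⟨_, rfl⟩

lemma hd_last : HD S.b S.deg 3 (S.d ∘ₗ S.χ j - S.χ j ∘ₗ S.d) :=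
  HD.sub ((S.hd.comp (S.hχ j)).cast (by norm_num)) (((S.hχ j).comp S.hd).cast (by norm_num))

/-- homotopies -/
noncomputable def hh : ℕ → S.F →ₗ[B] S.F := (S.hd_last.exists_coeff S.comm_last).choose
lemma hh_hd (i : ℕ) : HD S.b S.deg 3 (S.hh i) :=
  (S.hd_last.exists_coeff S.comm_last).choose_spec.1 i
lemma hh_sum (v : S.F) : S.d (S.χ j v) - S.χ j (S.d v) = ∑ i ∈ Finset.range j, x i • S.hh i v := by
  have := LinearMap.congr_fun (S.hd_last.exists_coeff S.comm_last).choose_spec.2 v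
  rw [LinearMap.sum_apply] at this
  exact this

lemma fin_prod (S : LS x c j) (r n : ℤ) : {i | Sum.elim S.deg (fun i => S.deg i - r) i = n}.Finite := by
  have : {i | Sum.elim S.deg (fun i => S.deg i - r) i = n} ⊆
      Sum.inl '' {i | S.deg i = n} ∪ Sum.inr '' {i | S.deg i = n + r} := by
    rintro (i | i) hi
    · left; exact ⟨i, hi, rfl⟩
    · right; refine ⟨i, ?_, rfl⟩
      simp only [Set.mem_ofPred_eq, Sum.elim_inr] at hi ⊢; omega
  exact Set.Finite.subset (((S.fin _).image _).union ((S.fin _).image _)) this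

/-- the differential of `D` -/
noncomputable def Dd : S.F × S.F →ₗ[B] S.F × S.F :=
  (S.d.coprod (x j • LinearMap.id)).prod ((-S.χ j).coprod (-S.d))

lemma Dd_apply (v : S.F × S.F) : S.Dd v = (S.d v.1 + x j • v.2, - S.χ j v.1 - S.d v.2) := by
  simp [Dd, sub_eq_add_neg]

/-- the operators of `D` -/
noncomputable def Dχ (i : ℕ) : S.F × S.F →ₗ[B] S.F × S.F :=
  if i < j then ((S.χ i) ∘ₗ LinearMap.fst B _ _).prod ((S.hh i).coprod (S.χ i)) else 0

lemma Dχ_apply {i : ℕ} (h : i < j) (v : S.F × S.F) :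
    S.Dχ i v = (S.χ i v.1, S.hh i v.1 + S.χ i v.2) := by
  simp [Dχ, h]

/-- eliminate the last variable -/
noncomputable def D : LS x c j where
  F := S.F × S.F
  ι := S.ι ⊕ S.ι
  b := S.b.prod S.b
  deg := Sum.elim S.deg (fun i => S.deg i - 1)
  fin := S.fin_prod 1
  hj := (Nat.le_succ _).trans S.hj
  d := S.Dd
  χ := S.Dχ
  hd := by
    intro n v
    simp only [prj_prod, Dd_apply]
    ext
    · simp [S.hd n]
    · simp only [map_sub, map_neg]
      rw [S.hd, S.hχ]
      simp [add_assoc]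
  hχ := by
    intro i n v
    by_cases hi : i < j
    · simp only [prj_prod, S.Dχ_apply hi]
      ext
      · simp [S.hχ i n]
      · simp only [map_add]
        rw [S.hh_hd, S.hχ]
        rw [show n + 1 + 2 = n + 3 by ring, show n + 2 + 1 = n + 3 by ring]
    · simp [Dχ, hi]
  χ0 := by
    intro i hi
    simp [Dχ, not_lt.2 hi]
  dd := by
    intro v
    have h1 : ∑ i ∈ Finset.range j, x i • S.Dχ i v =
      (∑ i ∈ Finset.range j, x i • S.χ i v.1, ∑ i ∈ Finset.range j, x i • S.hh i v.1 +
        ∑ i ∈ Finset.range j, x i • S.χ i v.2) := by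
      rw [← Finset.sum_add_distrib]
      have : ∀ i ∈ Finset.range j, x i • S.Dχ i v = (x i • S.χ i v.1, x i • S.hh i v.1 + x i • S.χ i v.2) := by
        intro i hi
        rw [S.Dχ_apply (Finset.mem_range.1 hi)]
        simp
      rw [Finset.sum_congr rfl this]
      ext <;> simp [Prod.fst_sum, Prod.snd_sum]
    rw [h1, ← S.hh_sum]
    have h2 := S.dd v.1
    have h3 := S.dd v.2
    rw [Finset.sum_range_succ] at h2 h3
    rw [← sub_eq_iff_eq_add] at h2 h3
    rw [← h2, ← h3]
    simp only [Dd_apply]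
    ext
    · simp [sub_eq_add_neg]; abel
    · simp [sub_eq_add_neg]; abel


/-- underlying module of `D` -/
noncomputable def De : S.D.F ≃ₗ[B] S.F × S.F := LinearEquiv.refl B (S.F × S.F)

/-- first projection -/
noncomputable abbrev q1 : S.D.F →ₗ[B] S.F := P1 S.De
/-- second projection -/
noncomputable abbrev q2 : S.D.F →ₗ[B] S.F := P2 S.De
/-- first injection -/
noncomputable abbrev i1 : S.F →ₗ[B] S.D.F := I1 S.De
/-- second injection -/
noncomputable abbrev i2 : S.F →ₗ[B] S.D.F := I2 S.De

lemma q1_d (v : S.D.F) : S.q1 (S.D.d v) = S.d (S.q1 v) + x j • S.q2 v :=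
  congrArg Prod.fst (S.Dd_apply v)
lemma q2_d (v : S.D.F) : S.q2 (S.D.d v) = - S.χ j (S.q1 v) - S.d (S.q2 v) :=
  congrArg Prod.snd (S.Dd_apply v)
lemma q1_p (n : ℤ) (v : S.D.F) : S.q1 (S.D.p n v) = S.p n (S.q1 v) :=
  congrArg Prod.fst (prj_prod S.b S.deg 1 n (S.De v))
lemma q2_p (n : ℤ) (v : S.D.F) : S.q2 (S.D.p n v) = S.p (n+1) (S.q2 v) :=
  congrArg Prod.snd (prj_prod S.b S.deg 1 n (S.De v))
lemma q1_χ {i : ℕ} (h : i < j) (v : S.D.F) : S.q1 (S.D.χ i v) = S.χ i (S.q1 v) :=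
  congrArg Prod.fst (S.Dχ_apply h v)
lemma q2_χ {i : ℕ} (h : i < j) (v : S.D.F) : S.q2 (S.D.χ i v) = S.hh i (S.q1 v) + S.χ i (S.q2 v) :=
  congrArg Prod.snd (S.Dχ_apply h v)
lemma D_dd (v : S.D.F) : S.D.d (S.D.d v) ∈ II x j S.D.F := ⟨_, S.D.dd v⟩
lemma D_mem_II {v : S.D.F} : v ∈ II x j S.D.F ↔ S.q1 v ∈ II x j S.F ∧ S.q2 v ∈ II x j S.F :=
  pair_mem_II _
lemma D_mem_mF {v : S.D.F} : v ∈ S.D.mF ↔ S.q1 v ∈ S.mF ∧ S.q2 v ∈ S.mF := pair_mem_smul _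

lemma xj_mem (v : S.F) : x j • v ∈ S.mF :=
  Submodule.smul_mem_smul (RegSeq.mem (c := c) j S.hj) trivial

/-- key step: `D(i, y) ∈ (x)`, `i ∈ (x)` implies `y ∈ (x)` -/
lemma D_key {v : S.D.F} (h : S.D.d v ∈ II x j S.D.F) (h1 : S.q1 v ∈ II x j S.F) :
    S.q2 v ∈ II x j S.F := by
  refine S.wrF j S.hj _ ?_
  have h2 := (S.D_mem_II.1 h).1
  rw [q1_d] at h2
  have := sub_mem h2 (map_mem_II S.d h1)
  simpa using this

lemma D_Ex (h : S.Ex) : S.D.Ex := by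
  intro v hv
  have hv1 := (S.D_mem_II.1 hv).1
  rw [q1_d] at hv1
  have h1 : S.d (S.q1 v) ∈ II x (j+1) S.F := by
    have := sub_mem (II_mono (Nat.le_succ j) hv1) (smul_mem_II (Nat.lt_succ_self j) (S.q2 v))
    simpa using this
  obtain ⟨w, hw⟩ := h _ h1
  obtain ⟨u, hu⟩ := mem_II_succ.1 hw
  refine ⟨S.i1 w + S.i2 u, ?_⟩
  have h3 : S.q1 (v - S.D.d (S.i1 w + S.i2 u)) ∈ II x j S.F := by
    rw [map_sub, q1_d]
    convert hu using 1
    simp [sub_sub]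
  refine S.D_mem_II.2 ⟨h3, S.D_key ?_ h3⟩
  have := sub_mem hv (S.D_dd (S.i1 w + S.i2 u))
  rwa [← map_sub] at this

lemma D_DEx (h : S.DEx) : S.D.DEx := by
  have key : ∀ φ : S.D.F →ₗ[B] B, (φ ∘ₗ S.D.d) ∘ₗ S.i2 =
     x j • (φ ∘ₗ S.i1) - (φ ∘ₗ S.i2) ∘ₗ S.d := by
    intro φ
    refine LinearMap.ext fun v => ?_
    have : S.D.d (S.i2 v) = x j • S.i1 v - S.i2 (S.d v) := by
      apply pair_ext S.De
      · rw [q1_d]; simp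
      · rw [q2_d]; simp
    simp only [LinearMap.comp_apply, this, map_sub, map_smul, LinearMap.sub_apply, LinearMap.smul_apply]
  intro φ hφ
  have hφ2 : (φ ∘ₗ S.D.d) ∘ₗ S.i2 ∈ II x j (S.F →ₗ[B] B) := map_mem_II (LinearMap.lcomp B B S.i2) hφ
  rw [key] at hφ2
  have h1 : (φ ∘ₗ S.i2) ∘ₗ S.d ∈ II x (j+1) (S.F →ₗ[B] B) := by
    have := sub_mem (smul_mem_II (Nat.lt_succ_self j) (φ ∘ₗ S.i1)) (II_mono (Nat.le_succ j) hφ2)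
    rwa [sub_sub_cancel] at this
  obtain ⟨w, hw⟩ := h _ h1
  obtain ⟨u, hu⟩ := mem_II_succ.1 hw
  obtain ⟨ψ, hψ1, hψ2⟩ : ∃ ψ : S.D.F →ₗ[B] B, ψ ∘ₗ S.i1 = u ∧ ψ ∘ₗ S.i2 = - w := by
    refine ⟨u ∘ₗ S.q1 - w ∘ₗ S.q2, ?_, ?_⟩ <;> · refine LinearMap.ext fun v => ?_; simp
  refine ⟨ψ, ?_⟩
  obtain ⟨φ', hφ'⟩ : ∃ φ', φ' = φ - ψ ∘ₗ S.D.d := ⟨_, rfl⟩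
  rw [← hφ']
  have g2 : φ' ∘ₗ S.i2 ∈ II x j (S.F →ₗ[B] B) := by
    convert hu using 1
    rw [hφ', LinearMap.sub_comp, key ψ, hψ1, hψ2, LinearMap.neg_comp]
    abel
  have g3 : φ' ∘ₗ S.D.d ∈ II x j (S.D.F →ₗ[B] B) := by
    rw [hφ', LinearMap.sub_comp]
    refine sub_mem hφ ?_
    rw [LinearMap.comp_assoc]
    refine map_mem_II (LinearMap.compRight B (M₁ := S.D.F) ψ) (a := S.D.d ∘ₗ S.D.d) ?_
    refine ⟨S.D.χ, ?_⟩
    refine LinearMap.ext fun v => ?_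
    rw [LinearMap.comp_apply]
    refine (S.D.dd v).trans ?_
    simp [LinearMap.sum_apply]
  have g1 : φ' ∘ₗ S.i1 ∈ II x j (S.F →ₗ[B] B) := by
    refine S.wrD j S.hj _ ?_
    have h5 : (φ' ∘ₗ S.D.d) ∘ₗ S.i2 ∈ II x j (S.F →ₗ[B] B) := map_mem_II (LinearMap.lcomp B B S.i2) g3
    rw [key] at h5
    have h6 : (φ' ∘ₗ S.i2) ∘ₗ S.d ∈ II x j (S.F →ₗ[B] B) := map_mem_II (LinearMap.lcomp B B S.d) g2
    have := add_mem h5 h6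
    rwa [sub_add_cancel] at this
  have : φ' = (φ' ∘ₗ S.i1) ∘ₗ S.q1 + (φ' ∘ₗ S.i2) ∘ₗ S.q2 := by
    refine LinearMap.ext fun v => ?_
    conv_lhs => rw [pair_eq S.De v, map_add]
    rfl
  rw [this]
  exact add_mem (map_mem_II (LinearMap.lcomp B B S.q1) g1)
    (map_mem_II (LinearMap.lcomp B B S.q2) g2)

lemma Df_Z : ∀ v ∈ S.Z, S.i2 v ∈ S.D.Z := by
  intro v hv
  rw [mem_Z, D_mem_mF, q1_d, q2_d]
  simpa using ⟨S.xj_mem v, hv⟩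

lemma Df_Bd : ∀ v ∈ S.Bd, S.i2 v ∈ S.D.Bd := by
  intro v hv
  obtain ⟨w, hw⟩ := S.mem_Bd.1 hv
  rw [mem_Bd]
  refine ⟨S.i2 (-w), ?_⟩
  rw [D_mem_mF, map_sub, map_sub, q1_d, q2_d]
  simpa using ⟨S.xj_mem w, hw⟩

/-- the map `E(F) → E(DF)` -/
noncomputable def Df : S.E →ₗ[B] S.D.E := Emap S.i2 S.Df_Z S.Df_Bd

lemma Df_cl (z : S.Z) : S.Df (S.cl z) = S.D.cl ⟨S.i2 z, S.Df_Z z z.2⟩ :=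
  Emap_cl _ _ _ _

lemma Df_e (n : ℤ) (a : S.E) : S.Df (S.e n a) = S.D.e (n-1) (S.Df a) := by
  obtain ⟨z, rfl⟩ := S.cl_surj a
  simp only [e_cl, Df_cl]
  congr 1
  refine Subtype.ext (pair_ext S.De ?_ ?_)
  · simp [q1_p]
  · simp [q2_p]

lemma Df_χ (a : S.E) : S.Df (S.Eχ j a) = 0 := by
  obtain ⟨z, rfl⟩ := S.cl_surj a
  rw [Eχ_cl, Df_cl, cl_eq_zero, mem_Bd]
  refine ⟨S.i1 (-(z : S.F)), ?_⟩
  rw [D_mem_mF, map_sub, map_sub, q1_d, q2_d]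
  have := z.2
  rw [mem_Z] at this
  simpa using this

lemma Df_comm (i : ℕ) (a : S.E) : S.Df (S.Eχ i a) = S.D.Eχ i (S.Df a) := by
  rcases lt_trichotomy i j with h | h | h
  · obtain ⟨z, rfl⟩ := S.cl_surj a
    simp only [Eχ_cl, Df_cl]
    congr 1
    refine Subtype.ext (pair_ext S.De ?_ ?_)
    · simp [q1_χ S h]
    · simp [q2_χ S h]
  · subst h
    rw [Df_χ, Eχ_of_le _ le_rfl]
  · rw [Eχ_of_le _ h, Eχ_of_le _ h.le, map_zero]

lemma Df_ker {a : S.E} (h : S.Df a = 0) : ∃ b, a = S.Eχ j b := by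
  obtain ⟨z, rfl⟩ := S.cl_surj a
  rw [Df_cl, cl_eq_zero, mem_Bd] at h
  obtain ⟨w, hw⟩ := h
  rw [D_mem_mF, map_sub, map_sub, q1_d, q2_d] at hw
  obtain ⟨h1, h2⟩ := hw
  simp only [P1_I2, P2_I2] at h1 h2
  have h3 : S.q1 w ∈ S.Z := by
    rw [mem_Z]
    have := neg_mem (add_mem h1 (S.xj_mem (S.q2 w)))
    simpa using this
  refine ⟨S.cl ⟨-S.q1 w, neg_mem h3⟩, ?_⟩
  rw [Eχ_cl, cl_eq, mem_Bd]
  refine ⟨-S.q2 w, ?_⟩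
  convert h2 using 1
  simp only [map_neg]
  abel

lemma inj_of_D (h : ∀ a : S.D.E, a = 0) {a : S.E} (ha : S.Eχ j a = 0) : a = 0 := by
  obtain ⟨z, rfl⟩ := S.cl_surj a
  rw [Eχ_cl, cl_eq_zero, mem_Bd] at ha
  obtain ⟨w, hw⟩ := ha
  have h1 : S.i1 z - S.i2 w ∈ S.D.Z := by
    rw [mem_Z, D_mem_mF, q1_d, q2_d]
    constructor
    · have := sub_mem (show S.d z ∈ S.mF from z.2) (S.xj_mem w)
      simpa [sub_eq_add_neg] using this
    · have := neg_mem hw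
      convert this using 1
      simp
      abel
  have h2 := h (S.D.cl ⟨_, h1⟩)
  rw [cl_eq_zero, mem_Bd] at h2
  obtain ⟨w', hw'⟩ := h2
  rw [D_mem_mF, map_sub S.q1, map_sub S.q2, q1_d, q2_d] at hw'
  rw [cl_eq_zero, mem_Bd]
  refine ⟨S.q1 w', ?_⟩
  have := add_mem hw'.1 (S.xj_mem (S.q2 w'))
  convert this using 1
  simp
  abel

/-- vanishing of `E` in degree `n` -/
def Van (S : LS x c j) (n : ℤ) : Prop := ∀ v ∈ S.Z, S.p n v ∈ S.Bd

lemma Van_iff (S : LS x c j) (n : ℤ) : S.Van n ↔ ∀ a, S.e n a = 0 := by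
  constructor
  · intro h a
    obtain ⟨z, rfl⟩ := S.cl_surj a
    rw [e_cl, cl_eq_zero]
    exact h z z.2
  · intro h v hv
    have := h (S.cl ⟨v, hv⟩)
    rwa [e_cl, cl_eq_zero] at this

lemma Van_all {S : LS x c j} (h : ∀ n, S.Van n) (a : S.E) : a = 0 := by
  obtain ⟨s, hs⟩ := S.exists_sum_e a
  rw [hs s subset_rfl]
  exact Finset.sum_eq_zero fun n _ => (S.Van_iff n).1 (h n) a

lemma D_Van {n : ℤ} (h : S.Van n) (h' : S.Van (n+1)) : S.D.Van n := by
  intro v hv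
  have hv := p_Z (S := S.D) n v hv
  rw [mem_Z, D_mem_mF, q1_d, q2_d, q1_p, q2_p] at hv
  obtain ⟨h1, h2⟩ := hv
  have h3 : S.p n (S.q1 v) ∈ S.Z := by
    rw [mem_Z]
    have := sub_mem h1 (S.xj_mem (S.p (n+1) (S.q2 v)))
    simpa using this
  have h4 := h _ h3
  rw [prj_self, mem_Bd] at h4
  obtain ⟨w, hw⟩ := h4
  have hw' : S.p n (S.q1 v) - S.d (S.p (n-1) w) ∈ S.mF := by
    have := p_mF n hw
    rw [S.hd]; rw [map_sub, prj_self] at this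
    simpa using this
  obtain ⟨w', hw'_eq⟩ : ∃ w', w' = S.p (n-1) w := ⟨_, rfl⟩
  rw [← hw'_eq] at hw'
  have h5 : S.p (n+1) (S.q2 v) + S.χ j w' ∈ S.Z := by
    rw [mem_Z, map_add]
    have h6 := map_mF (S.χ j) hw'
    have h7 := (S.good_χ j).comm_mem w'
    have := sub_mem h7 (add_mem h2 h6)
    convert this using 1
    simp only [map_sub]
    abel
  have h6 := h' _ h5
  have h7 : S.p (n+1) (S.χ j w') = S.χ j w' := by
    have := S.hχ j (n-1) w
    rw [show n - 1 + 2 = n + 1 by ring] at this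
    rw [hw'_eq, this, prj_self]
  rw [map_add, prj_self, h7, mem_Bd] at h6
  obtain ⟨w2, hw2⟩ := h6
  rw [mem_Bd]
  refine ⟨S.i1 w' - S.i2 w2, ?_⟩
  rw [D_mem_mF, map_sub S.q1, map_sub S.q2, q1_d, q2_d, q1_p, q2_p]
  constructor
  · have := add_mem hw' (S.xj_mem w2)
    convert this using 1
    simp
    abel
  · convert hw2 using 1
    simp
    abel

end D
end LS
end SG

namespace SG
set_option linter.unusedSectionVars false
set_option linter.unusedVariables false
set_option linter.style.haveILetI false
set_option linter.unusedSimpArgs false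

section PL
open CategoryTheory
variable (B : Type u) [CommRing B]

/-- projective dimension `< n` -/
def PL (M : Type u) [AddCommGroup M] [Module B M] (n : ℕ) : Prop :=
  HasProjectiveDimensionLT (ModuleCat.of B M) n

variable {B}
variable {M N Q : Type u} [AddCommGroup M] [Module B M] [AddCommGroup N] [Module B N]
  [AddCommGroup Q] [Module B Q]

lemma PL.mono {n m : ℕ} (h : PL B M n) (hm : n ≤ m) : PL B M m := by
  unfold PL at *
  exact hasProjectiveDimensionLT_of_ge _ n m hm

lemma PL_one : PL B M 1 ↔ Module.Projective B M := by
  unfold PL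
  rw [← projective_iff_hasProjectiveDimensionLT_one, IsProjective.iff_projective]

lemma PL.equiv {n : ℕ} (h : PL B M n) (e : M ≃ₗ[B] N) : PL B N n := by
  unfold PL at *
  exact hasProjectiveDimensionLT_of_iso e.toModuleIso n

lemma PL.retract {n : ℕ} (h : PL B M n) (i : N →ₗ[B] M) (r : M →ₗ[B] N)
    (hr : r ∘ₗ i = LinearMap.id) : PL B N n := by
  unfold PL at *
  exact Retract.hasProjectiveDimensionLT (X := ModuleCat.of B N) (Y := ModuleCat.of B M)
    ⟨ModuleCat.ofHom i, ModuleCat.ofHom r, by rw [← ModuleCat.ofHom_comp, hr]; rfl⟩ n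

lemma ses (f : M →ₗ[B] N) (g : N →ₗ[B] Q) (hf : Function.Injective f) (hg : Function.Surjective g)
    (h : Function.Exact f g) :
    (ShortComplex.moduleCatMk f g h.linearMap_comp_eq_zero).ShortExact where
  exact := (ShortComplex.ShortExact.moduleCat_exact_iff_function_exact _).mpr h
  mono_f := (ModuleCat.mono_iff_injective _).2 hf
  epi_g := (ModuleCat.epi_iff_surjective _).2 hg

lemma PL.one {f : M →ₗ[B] N} {g : N →ₗ[B] Q} (hf : Function.Injective f) (hg : Function.Surjective g)
    (h : Function.Exact f g) {n : ℕ} (hN : PL B N n) (hQ : PL B Q (n+1)) : PL B M n :=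
  (ses f g hf hg h).hasProjectiveDimensionLT_X₁ n hN hQ

lemma PL.two {f : M →ₗ[B] N} {g : N →ₗ[B] Q} (hf : Function.Injective f) (hg : Function.Surjective g)
    (h : Function.Exact f g) {n : ℕ} (hN : PL B M n) (hQ : PL B Q n) : PL B N n :=
  (ses f g hf hg h).hasProjectiveDimensionLT_X₂ n hN hQ

lemma PL.three {f : M →ₗ[B] N} {g : N →ₗ[B] Q} (hf : Function.Injective f) (hg : Function.Surjective g)
    (h : Function.Exact f g) {n : ℕ} (hN : PL B M n) (hQ : PL B N (n+1)) : PL B Q (n+1) :=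
  (ses f g hf hg h).hasProjectiveDimensionLT_X₃ n hN hQ
end PL

lemma basis_mem_smul {B : Type u} [CommRing B] {I : Ideal B} {M ι : Type*} [AddCommGroup M]
    [Module B M] (b : Module.Basis ι B M) {v : M} (h : ∀ i, b.repr v i ∈ I) :
    v ∈ I • (⊤ : Submodule B M) := by
  rw [← b.linearCombination_repr v, Finsupp.linearCombination_apply]
  exact Submodule.sum_mem _ fun i _ => Submodule.smul_mem_smul (h i) trivial

lemma tmul_one_eq_zero {B : Type u} [CommRing B] [IsLocalRing B] {M : Type u} [AddCommGroup M]
    [Module B M] (v : M) : (1 : ResidueField B) ⊗ₜ[B] v = 0 ↔ v ∈ maximalIdeal B • (⊤ : Submodule B M) := by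
  have e := TensorProduct.quotTensorEquivQuotSMul_mk_tmul (M := M) (I := maximalIdeal B) 1 v
  rw [one_smul] at e
  rw [← Submodule.Quotient.mk_eq_zero, ← e]
  exact (LinearEquiv.map_eq_zero_iff (TensorProduct.quotTensorEquivQuotSMul M (maximalIdeal B))).symm

lemma exists_one_tmul {B : Type u} [CommRing B] [IsLocalRing B] {M : Type u} [AddCommGroup M]
    [Module B M] (t : ResidueField B ⊗[B] M) : ∃ y, t = (1 : ResidueField B) ⊗ₜ[B] y := by
  induction t with
  | zero => exact ⟨0, by simp⟩
  | add a b ha hb =>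
    obtain ⟨y, rfl⟩ := ha
    obtain ⟨z, rfl⟩ := hb
    exact ⟨y + z, by rw [TensorProduct.tmul_add]⟩
  | tmul a y =>
    obtain ⟨r, rfl⟩ := IsLocalRing.residue_surjective a
    refine ⟨r • y, ?_⟩
    rw [← TensorProduct.smul_tmul, Algebra.smul_def, mul_one]; rfl

namespace LS
variable {B : Type u} [CommRing B] {x : ℕ → B} {c j : ℕ}

/-- denominator of the cokernel module -/
noncomputable def W (S : LS x c j) (n : ℤ) : Submodule B S.F := (LinearMap.range S.d ⊔ II x j S.F).comap (S.p n)

/-- cokernel module in degree `n` -/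
abbrev Y (S : LS x c j) (n : ℤ) : Type u := S.F ⧸ S.W n

lemma mem_W {S : LS x c j} {n : ℤ} {v : S.F} : v ∈ S.W n ↔ ∃ w, S.p n v - S.d w ∈ II x j S.F := by
  unfold W
  rw [Submodule.mem_comap, Submodule.mem_sup]
  constructor
  · rintro ⟨_, ⟨w, rfl⟩, z, hz, h⟩
    exact ⟨w, by rw [← h]; simpa using hz⟩
  · rintro ⟨w, hw⟩
    exact ⟨_, ⟨w, rfl⟩, _, hw, by abel⟩

/-- denominators of `F_n / (x)` -/
noncomputable def RW (S : LS x c j) (j' : ℕ) (n : ℤ) : Submodule B S.F := (II x j' S.F).comap (S.p n)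

lemma projF (S : LS x c j) : Module.Projective B S.F := by
  haveI := Module.Free.of_basis S.b
  infer_instance

lemma proj_range (S : LS x c j) (n : ℤ) : Module.Projective B (LinearMap.range (S.p n)) := by
  haveI := S.projF
  refine Module.Projective.of_split (LinearMap.range (S.p n)).subtype (S.p n).rangeRestrict ?_
  ext ⟨_, ⟨v, rfl⟩⟩
  simp [prj_self]

lemma prj_eq_sum (S : LS x c j) (n : ℤ) (u : S.F) :
    S.p n u = ∑ i ∈ (S.fin n).toFinset, S.b.repr u i • S.b i := by
  classical
  have := LinearMap.congr_fun (f := S.p n)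
    (g := ∑ i ∈ (S.fin n).toFinset, (LinearMap.toSpanSingleton B S.F (S.b i)) ∘ₗ S.b.coord i)
    (S.b.ext fun k => by
      simp only [prj_basis, LinearMap.sum_apply, LinearMap.comp_apply, LinearMap.toSpanSingleton_apply,
        Module.Basis.coord_apply, Module.Basis.repr_self, Finsupp.single_apply, ite_smul, one_smul, zero_smul,
        Finset.sum_ite_eq]
      simp) u
  rw [this]
  simp

section base
variable (S : LS x c 0)

lemma dd0 (v : S.F) : S.d (S.d v) = 0 := by simpa using S.dd v

lemma ex0 (h : S.Ex) {v : S.F} (hv : S.d v = 0) : ∃ w, v = S.d w := by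
  obtain ⟨w, hw⟩ := h v (by rw [hv]; exact zero_mem _)
  rw [II_zero, Submodule.mem_bot, sub_eq_zero] at hw
  exact ⟨w, hw⟩

lemma mem_W0 {n : ℤ} {v : S.F} : v ∈ S.W n ↔ ∃ w, S.p n v = S.d w := by
  rw [mem_W]
  simp [II_zero, sub_eq_zero]

lemma d_p (n : ℤ) (v : S.F) : S.d (S.p (n-1) v) = S.p n (S.d v) := by
  rw [S.hd]; simp

/-- the injection of the cokernel -/
noncomputable def Yi (n : ℤ) : S.Y (n-1) →ₗ[B] LinearMap.range (S.p n) :=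
  Submodule.liftQ _ ((S.p n).rangeRestrict ∘ₗ S.d) (by
    intro v hv
    obtain ⟨w, hw⟩ := S.mem_W0.1 hv
    rw [LinearMap.mem_ker]
    ext
    simp only [LinearMap.comp_apply, LinearMap.codRestrict_apply, LinearMap.rangeRestrict, ← d_p, hw, dd0]
    rfl)

lemma Yi_mk (n : ℤ) (v : S.F) : (S.Yi n (Submodule.Quotient.mk v) : S.F) = S.d (S.p (n-1) v) := by
  rw [d_p]; rfl

/-- the projection to the cokernel -/
noncomputable def Yp (n : ℤ) : LinearMap.range (S.p n) →ₗ[B] S.Y n :=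
  (S.W n).mkQ ∘ₗ (LinearMap.range (S.p n)).subtype

lemma Yi_inj (h : S.Ex) (n : ℤ) : Function.Injective (S.Yi n) := by
  rw [injective_iff_map_eq_zero]
  intro y hy
  obtain ⟨v, rfl⟩ := Submodule.Quotient.mk_surjective _ y
  have := S.Yi_mk n v
  rw [hy] at this
  obtain ⟨w, hw⟩ := S.ex0 h this.symm
  rw [Submodule.Quotient.mk_eq_zero, mem_W0]
  exact ⟨w, hw⟩

lemma Yp_surj (n : ℤ) : Function.Surjective (S.Yp n) := by
  intro y
  obtain ⟨v, rfl⟩ := Submodule.Quotient.mk_surjective _ y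
  refine ⟨⟨S.p n v, v, rfl⟩, ?_⟩
  refine (Submodule.Quotient.eq _).2 ?_
  rw [mem_W0]
  exact ⟨0, by simp [prj_self]⟩

lemma Y_exact (n : ℤ) : Function.Exact (S.Yi n) (S.Yp n) := by
  rintro ⟨_, v, rfl⟩
  constructor
  · intro h
    have h := (Submodule.Quotient.mk_eq_zero (S.W n)).1 h
    obtain ⟨w, hw⟩ := S.mem_W0.1 h
    refine ⟨Submodule.Quotient.mk w, Subtype.ext ?_⟩
    have hw : S.p n (S.p n v) = S.d w := hw
    rw [Yi_mk, d_p]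
    change S.p n (S.d w) = S.p n v
    rw [← hw, prj_self, prj_self]
  · rintro ⟨y, hy⟩
    obtain ⟨w, rfl⟩ := Submodule.Quotient.mk_surjective _ y
    have := congrArg Subtype.val hy
    rw [Yi_mk] at this
    simp only at this
    refine (Submodule.Quotient.mk_eq_zero (S.W n)).2 (S.mem_W0.2 ⟨S.p (n-1) w, ?_⟩)
    change S.p n (S.p n v) = _
    rw [prj_self, this]

lemma Y_left (h : S.Ex) {n : ℤ} (hp : Module.Projective B (S.Y n)) : Module.Projective B (S.Y (n-1)) := by
  rw [← PL_one] at hp ⊢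
  exact PL.one (S.Yi_inj h n) (S.Yp_surj n) (S.Y_exact n) (PL_one.2 (S.proj_range n)) (hp.mono (by omega))

lemma Y_left_nat (h : S.Ex) {n : ℤ} (hp : Module.Projective B (S.Y n)) (k : ℕ) :
    Module.Projective B (S.Y (n-k)) := by
  induction k with
  | zero =>
    rw [show n - ((0:ℕ):ℤ) = n by simp]; exact hp
  | succ k ih =>
    have := S.Y_left h ih
    rwa [show n - ((k+1 : ℕ) : ℤ) = n - k - 1 by push_cast; ring]

lemma Y_pd (h : S.Ex) {n : ℤ} {k : ℕ} (hp : PL B (S.Y n) (k+1)) : Module.Projective B (S.Y (n-k)) := by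
  induction k generalizing n with
  | zero =>
    rw [show n - ((0:ℕ):ℤ) = n by simp]; exact PL_one.1 hp
  | succ k ih =>
    have h1 : PL B (S.Y (n-1)) (k+1) :=
      PL.one (S.Yi_inj h n) (S.Yp_surj n) (S.Y_exact n) ((PL_one.2 (S.proj_range n)).mono (by omega)) hp
    have := ih h1
    rwa [show n - ((k+1 : ℕ) : ℤ) = n - 1 - k by push_cast; ring]

lemma mkQ_p (n : ℤ) (v : S.F) : (S.W n).mkQ (S.p n v) = (S.W n).mkQ v := by
  refine (Submodule.Quotient.eq _).2 (S.mem_W0.2 ⟨0, by simp [prj_self]⟩)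

lemma Y_right (h : S.DEx) {n : ℤ} (hp : Module.Projective B (S.Y (n-1))) : Module.Projective B (S.Y n) := by
  classical
  obtain ⟨s, hs⟩ := Module.projective_lifting_property (S.W (n-1)).mkQ LinearMap.id
    (Submodule.mkQ_surjective _)
  -- functionals
  have h1 : ∀ i : S.ι, ∃ ψ : S.F →ₗ[B] B, (S.b.coord i ∘ₗ s ∘ₗ (S.W (n-1)).mkQ) = ψ ∘ₗ S.d := by
    intro i
    obtain ⟨ψ, hψ⟩ := h (S.b.coord i ∘ₗ s ∘ₗ (S.W (n-1)).mkQ) (by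
      rw [II_zero, Submodule.mem_bot]
      refine LinearMap.ext fun v => ?_
      have : (S.W (n-1)).mkQ (S.d v) = 0 := by
        refine (Submodule.Quotient.mk_eq_zero _).2 (S.mem_W0.2 ⟨S.p (n-1-1) v, ?_⟩)
        rw [d_p]
      simp only [LinearMap.comp_apply, this, map_zero, LinearMap.zero_apply])
    rw [II_zero, Submodule.mem_bot, sub_eq_zero] at hψ
    exact ⟨ψ, hψ⟩
  choose ψ hψ using h1
  let θ : S.F →ₗ[B] S.F := ∑ i ∈ (S.fin (n-1)).toFinset, (LinearMap.toSpanSingleton B S.F (S.b i)) ∘ₗ ψ i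
  have hθ : ∀ v, θ (S.d v) = S.p (n-1) (s ((S.W (n-1)).mkQ v)) := by
    intro v
    have e1 : ∀ i, ψ i (S.d v) = S.b.repr (s ((S.W (n-1)).mkQ v)) i := fun i =>
      (LinearMap.congr_fun (hψ i) v).symm
    simp only [θ, LinearMap.sum_apply, LinearMap.comp_apply, LinearMap.toSpanSingleton_apply, e1]
    generalize s ((S.W (n-1)).mkQ v) = u
    exact (S.prj_eq_sum _ u).symm
  let ρ : S.F →ₗ[B] S.Y (n-1) := (S.W (n-1)).mkQ ∘ₗ θ
  have hρ : ∀ v, ρ (S.d v) = (S.W (n-1)).mkQ v := by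
    intro v
    simp only [ρ, LinearMap.comp_apply, hθ, mkQ_p]
    exact LinearMap.congr_fun hs _
  let τ : S.F →ₗ[B] S.F := S.p n - (LinearMap.range (S.p n)).subtype ∘ₗ S.Yi n ∘ₗ ρ ∘ₗ S.p n
  have hτ : S.W n ≤ LinearMap.ker τ := by
    intro v hv
    obtain ⟨w, hw⟩ := S.mem_W0.1 hv
    have : S.p n v = S.d (S.p (n-1) w) := by rw [d_p, ← hw, prj_self]
    simp only [LinearMap.mem_ker, τ, LinearMap.sub_apply, LinearMap.comp_apply, Submodule.subtype_apply]
    rw [hw, hρ]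
    have e2 := S.Yi_mk n w
    refine sub_eq_zero.2 ?_
    rw [← hw, this]
    exact e2.symm
  haveI := S.projF
  refine Module.Projective.of_split ((S.W n).liftQ τ hτ) (S.W n).mkQ ?_
  refine Submodule.linearMap_qext _ (LinearMap.ext fun v => ?_)
  simp only [LinearMap.comp_apply, Submodule.mkQ_apply, Submodule.liftQ_apply, LinearMap.id_apply]
  refine (Submodule.Quotient.eq _).2 ?_
  rw [mem_W0]
  obtain ⟨u, hu⟩ := Submodule.Quotient.mk_surjective _ (ρ (S.p n v))
  refine ⟨- S.p (n-1) u, ?_⟩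
  have e3 := S.Yi_mk n u
  rw [hu] at e3
  simp only [τ, LinearMap.sub_apply, LinearMap.comp_apply, map_sub, Submodule.subtype_apply, map_neg, prj_self, e3]
  rw [d_p, prj_self]; abel

end base

section loc
variable [IsLocalRing B] [RegSeq x c]

section base
variable (S : LS x c 0)

lemma van_of_proj (h : S.Ex) {n : ℤ} (hp : Module.Projective B (S.Y (n+1))) : S.Van n := by
  intro v hv
  obtain ⟨s, hs⟩ := Module.projective_lifting_property (S.W (n+1)).mkQ LinearMap.id
    (Submodule.mkQ_surjective _)
  have h1 : ∀ u, ∃ w, S.p (n+1) (u - s ((S.W (n+1)).mkQ u)) = S.d w := by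
    intro u
    refine S.mem_W0.1 ((Submodule.Quotient.mk_eq_zero _).1 ?_)
    change (S.W (n+1)).mkQ (u - s ((S.W (n+1)).mkQ u)) = 0
    rw [map_sub, sub_eq_zero]
    exact (LinearMap.congr_fun hs ((S.W (n+1)).mkQ u)).symm
  choose L hL using fun i => h1 (S.b i)
  let L' : S.F →ₗ[B] S.F := S.b.constr B L
  have hL' : ∀ u, S.d (L' u) = S.p (n+1) (u - s ((S.W (n+1)).mkQ u)) := by
    have e0 : S.d ∘ₗ L' = S.p (n+1) ∘ₗ ((LinearMap.id : S.F →ₗ[B] S.F) - s.comp (S.W (n+1)).mkQ) := by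
      refine S.b.ext fun i => ?_
      have e1 : L' (S.b i) = L i := S.b.constr_basis B L i
      rw [LinearMap.comp_apply, e1, ← hL]
      rfl
    intro u
    have e2 := LinearMap.congr_fun e0 u
    exact e2
  have h2 : (S.W (n+1)).mkQ (S.d (S.p n v)) = 0 := by
    refine (Submodule.Quotient.mk_eq_zero _).2 (S.mem_W0.2 ⟨S.p n v, ?_⟩)
    rw [S.hd, prj_self]
  have h3 := hL' (S.d (S.p n v))
  rw [h2, map_zero, sub_zero] at h3
  have h4 : S.d (S.p n v - L' (S.d (S.p n v))) = 0 := by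
    rw [map_sub, h3, S.hd, prj_self, sub_self]
  obtain ⟨w, hw⟩ := S.ex0 h h4
  rw [mem_Bd]
  refine ⟨w, ?_⟩
  rw [← hw, sub_sub_cancel]
  exact map_mF L' (p_Z (S := S) n v hv)

lemma proj_of_van (h : S.Ex) {n : ℤ} (hv : S.Van n) : Module.Projective B (S.Y n) := by
  classical
  haveI : Finite {i // S.deg i = n} := (S.fin n).to_subtype
  haveI : Finite {i // S.deg i = n + 1} := (S.fin (n+1)).to_subtype
  haveI := Fintype.ofFinite {i // S.deg i = n + 1}
  haveI := Fintype.ofFinite {i // S.deg i = n}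
  -- finiteness of Y
  haveI : Module.Finite B (S.Y n) := by
    refine ⟨Submodule.fg_def.2 ⟨Set.range fun i : {i // S.deg i = n} => (S.W n).mkQ (S.b i), Set.finite_range _, ?_⟩⟩
    rw [eq_top_iff, ← LinearMap.range_eq_top.2 (Submodule.mkQ_surjective (S.W n)),
      LinearMap.range_eq_map, ← S.b.span_eq, Submodule.map_span, Submodule.span_le]
    rintro _ ⟨_, ⟨i, rfl⟩, rfl⟩
    by_cases hi : S.deg i = n
    · exact Submodule.subset_span ⟨⟨i, hi⟩, rfl⟩
    · rw [← mkQ_p, prj_basis, if_neg hi, map_zero]; exact zero_mem _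
  let Λ : S.F →ₗ[B] ({i // S.deg i = n + 1} → B) := LinearMap.pi fun i => S.b.coord i
  have hΛ : ∀ v, Λ (S.p (n+1) v) ∈ maximalIdeal B • (⊤ : Submodule B ({i // S.deg i = n + 1} → B)) →
      S.p (n+1) v ∈ S.mF := by
    intro v hv
    refine basis_mem_smul S.b fun i => ?_
    by_cases hi : S.deg i = n + 1
    · have := map_smul_top (LinearMap.proj (R := B) (φ := fun _ => B) (⟨i, hi⟩ : {i // S.deg i = n + 1})) hv
      simpa [Λ] using this
    · have : S.b.coord i (S.p (n+1) v) = 0 := by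
        refine LinearMap.congr_fun (f := S.b.coord i ∘ₗ S.p (n+1)) (g := 0) (S.b.ext fun k => ?_) v
        simp only [LinearMap.comp_apply, prj_basis]
        split_ifs with hk
        · have : i ≠ k := by rintro rfl; exact hi hk
          simp [Finsupp.single_apply, this.symm]
        · simp
      change S.b.coord i (S.p (n+1) v) ∈ _
      rw [this]; exact zero_mem _
  let l : S.Y n →ₗ[B] ({i // S.deg i = n + 1} → B) := (S.W n).liftQ (Λ ∘ₗ S.d ∘ₗ S.p n) (by
    intro v hv
    obtain ⟨w, hw⟩ := S.mem_W0.1 hv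
    simp [hw, dd0])
  have hl : ∃ l', l' ∘ₗ l = LinearMap.id := by
    rw [IsLocalRing.split_injective_iff_lTensor_residueField_injective, injective_iff_map_eq_zero]
    intro t ht
    obtain ⟨y, rfl⟩ := exists_one_tmul t
    obtain ⟨v, rfl⟩ := Submodule.Quotient.mk_surjective _ y
    rw [LinearMap.lTensor_tmul, tmul_one_eq_zero] at ht
    rw [tmul_one_eq_zero]
    have h1 : S.p n v ∈ S.Z := by
      rw [mem_Z, S.hd]
      apply hΛ
      rw [← S.hd]
      exact ht
    have h2 := hv _ h1
    rw [prj_self, mem_Bd] at h2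
    obtain ⟨w, hw⟩ := h2
    have h3 := map_smul_top (S.W n).mkQ hw
    have h4 : (S.W n).mkQ (S.d w) = 0 :=
      (Submodule.Quotient.mk_eq_zero _).2 (S.mem_W0.2 ⟨S.p (n-1) w, by rw [d_p]⟩)
    rw [map_sub, h4, sub_zero, mkQ_p] at h3
    exact h3
  obtain ⟨l', hl'⟩ := hl
  exact Module.Projective.of_split l l' hl'

lemma base_van (h : S.Ex) (h' : S.DEx) {n : ℤ} {k : ℕ} (hp : PL B (S.Y n) k) (m : ℤ) : S.Van m := by
  have h1 := S.Y_pd h (hp.mono (Nat.le_succ k))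
  have h2 : ∀ i : ℕ, Module.Projective B (S.Y (n - k + i)) := by
    intro i
    induction i with
    | zero =>
      rw [show n - k + ((0:ℕ):ℤ) = n - k by simp]; exact h1
    | succ i ih =>
      refine S.Y_right h' ?_
      rwa [show n - k + ((i+1:ℕ):ℤ) - 1 = n - k + i by push_cast; ring]
  refine S.van_of_proj h ?_
  have h3 := S.Y_left_nat h (h2 (m + 1 - (n-k)).toNat) ((n - k + (m + 1 - (n-k)).toNat) - (m+1)).toNat
  rwa [show (n - k + (m + 1 - (n-k)).toNat) - (((n - k + (m + 1 - (n-k)).toNat) - (m+1)).toNat : ℤ) = m + 1 by omega] at h3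

end base

/-- bounded above implies zero -/
lemma bounded_zero (S : LS x c j) (h : S.Ex) {n0 : ℤ} (hv : ∀ n, n0 ≤ n → S.Van n) (n : ℤ) : S.Van n := by
  induction j generalizing n n0 with
  | zero =>
    refine S.van_of_proj h ?_
    have h1 := S.Y_left_nat h (S.proj_of_van h (hv (max n0 (n+1)) (le_max_left _ _))) (max n0 (n+1) - (n+1)).toNat
    have := le_max_right n0 (n+1)
    rwa [show max n0 (n+1) - ((max n0 (n+1) - (n+1)).toNat : ℤ) = n + 1 by omega] at h1
  | succ j ih =>
    have h1 := ih S.D (S.D_Ex h) (n0 := n0) (fun m hm => S.D_Van (hv m hm) (hv (m+1) (by omega)))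
    have h2 : ∀ a : S.E, S.Eχ j a = 0 → a = 0 := fun a => S.inj_of_D (Van_all h1)
    have h3 : ∀ k : ℕ, ∀ a n, S.e (n + 2 * k) (((S.Eχ j)^k) a) = 0 → S.e n a = 0 := by
      intro k
      induction k with
      | zero => intro a n h; simpa using h
      | succ k ihk =>
        intro a n h
        apply h2
        have e1 : S.Eχ j (S.e n a) = S.e (n+2) (S.Eχ j a) := (S.good_χ j).E_e (S.hχ j) n a
        rw [e1]
        apply ihk
        rw [pow_succ, Module.End.mul_apply] at h
        rwa [show n + 2 + 2 * (k:ℤ) = n + 2 * ((k+1 : ℕ) : ℤ) by push_cast; ring]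
    rw [Van_iff]
    intro a
    apply h3 (n0 - n).toNat
    apply (S.Van_iff _).1
    apply hv
    omega

lemma RW_pd (S : LS x c j) (n : ℤ) : ∀ j' ≤ c, ∃ k, PL B (S.F ⧸ S.RW j' n) k := by
  intro j'
  induction j' with
  | zero =>
    intro _
    have h1 : PL B (LinearMap.range (S.p n)) 1 := PL_one.2 (S.proj_range n)
    refine ⟨1, h1.equiv ?_⟩
    have h2 : S.RW 0 n = LinearMap.ker (S.p n) := by
      unfold RW; rw [II_zero]; rfl
    rw [h2]
    exact (LinearMap.quotKerEquivRange _).symm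
  | succ j' ih =>
    intro hj'
    obtain ⟨k, hk⟩ := ih (by omega)
    have hle : S.RW j' n ≤ S.RW (j'+1) n := Submodule.comap_mono (II_mono (Nat.le_succ _))
    let f : (S.F ⧸ S.RW j' n) →ₗ[B] (S.F ⧸ S.RW j' n) := x j' • LinearMap.id
    let g : (S.F ⧸ S.RW j' n) →ₗ[B] (S.F ⧸ S.RW (j'+1) n) := Submodule.factor hle
    have hf : Function.Injective f := by
      rw [injective_iff_map_eq_zero]
      intro y hy
      obtain ⟨v, rfl⟩ := Submodule.Quotient.mk_surjective _ y
      have hy : (Submodule.Quotient.mk (x j' • v) : S.F ⧸ S.RW j' n) = 0 := hy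
      rw [Submodule.Quotient.mk_eq_zero] at hy ⊢
      refine S.wrF j' (by omega) _ ?_
      have hy : S.p n (x j' • v) ∈ II x j' S.F := hy
      rwa [map_smul] at hy
    have hg : Function.Surjective g := by
      intro y
      obtain ⟨v, rfl⟩ := Submodule.Quotient.mk_surjective _ y
      exact ⟨Submodule.Quotient.mk v, rfl⟩
    have hfg : Function.Exact f g := by
      intro y
      obtain ⟨v, rfl⟩ := Submodule.Quotient.mk_surjective _ y
      constructor
      · intro h
        have h : (Submodule.Quotient.mk v : S.F ⧸ S.RW (j'+1) n) = 0 := h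
        rw [Submodule.Quotient.mk_eq_zero] at h
        obtain ⟨w, hw⟩ := mem_II_succ.1 (show S.p n v ∈ II x (j'+1) S.F from h)
        refine ⟨Submodule.Quotient.mk w, ?_⟩
        change (Submodule.Quotient.mk (x j' • w) : S.F ⧸ S.RW j' n) = _
        refine ((Submodule.Quotient.eq _).2 ?_).symm
        have := map_mem_II (S.p n) hw
        rw [map_sub, prj_self] at this
        change S.p n (v - x j' • w) ∈ II x j' S.F
        rwa [map_sub]
      · rintro ⟨y, hy⟩
        obtain ⟨w, rfl⟩ := Submodule.Quotient.mk_surjective _ y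
        rw [← hy]
        change (Submodule.Quotient.mk (x j' • w) : S.F ⧸ S.RW (j'+1) n) = 0
        rw [Submodule.Quotient.mk_eq_zero]
        change S.p n (x j' • w) ∈ II x (j'+1) S.F
        rw [map_smul]
        exact smul_mem_II (by omega) _
    exact ⟨k+1, PL.three hf hg hfg hk (hk.mono (by omega))⟩

lemma D_pd (S : LS x c (j+1)) {n : ℤ} {k : ℕ} (hp : PL B (S.Y n) k) : ∃ k', PL B (S.D.Y n) k' := by
  obtain ⟨k2, hk2⟩ := S.RW_pd (n+1) j ((Nat.le_succ _).trans S.hj)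
  let f : (S.F ⧸ S.RW j (n+1)) →ₗ[B] S.D.Y n := Submodule.mapQ _ _ S.i2 (by
    intro v hv
    rw [Submodule.mem_comap, mem_W]
    refine ⟨0, ?_⟩
    rw [D_mem_II]
    simp only [map_zero, sub_zero, q1_p, q2_p, P1_I2, P2_I2]
    exact ⟨zero_mem _, hv⟩)
  let g : S.D.Y n →ₗ[B] S.Y n := Submodule.mapQ _ _ S.q1 (by
    intro v hv
    rw [Submodule.mem_comap]
    rw [mem_W] at hv ⊢
    obtain ⟨w, hw⟩ := hv
    refine ⟨S.q1 w, ?_⟩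
    have := (S.D_mem_II.1 hw).1
    rw [map_sub, q1_d, q1_p] at this
    have := add_mem (II_mono (Nat.le_succ j) this) (smul_mem_II (Nat.lt_succ_self j) (S.q2 w))
    convert this using 1
    abel)
  have hf : Function.Injective f := by
    rw [injective_iff_map_eq_zero]
    intro y hy
    obtain ⟨v, rfl⟩ := Submodule.Quotient.mk_surjective _ y
    have hy : (Submodule.Quotient.mk (S.i2 v) : S.D.Y n) = 0 := hy
    rw [Submodule.Quotient.mk_eq_zero, mem_W] at hy
    obtain ⟨w, hw⟩ := hy
    rw [Submodule.Quotient.mk_eq_zero]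
    have h1 := S.D_mem_II.1 hw
    rw [map_sub, map_sub, q1_p, q2_p] at h1
    simp only [P1_I2, P2_I2, map_zero, zero_sub] at h1
    have h2 := S.D_key (S.D_dd w) (by simpa using h1.1)
    have := add_mem h1.2 h2
    rw [sub_add_cancel] at this
    exact this
  have hg : Function.Surjective g := by
    intro y
    obtain ⟨v, rfl⟩ := Submodule.Quotient.mk_surjective _ y
    refine ⟨Submodule.Quotient.mk (S.i1 v), ?_⟩
    change Submodule.Quotient.mk (S.q1 (S.i1 v)) = _
    rw [P1_I1]
  have hfg : Function.Exact f g := by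
    intro y
    obtain ⟨v, rfl⟩ := Submodule.Quotient.mk_surjective _ y
    constructor
    · intro h
      have h : (Submodule.Quotient.mk (S.q1 v) : S.Y n) = 0 := h
      rw [Submodule.Quotient.mk_eq_zero, mem_W] at h
      obtain ⟨w, hw⟩ := h
      obtain ⟨u, hu⟩ := mem_II_succ.1 hw
      let t := S.i1 w + S.i2 u
      refine ⟨Submodule.Quotient.mk (S.q2 (v - S.D.p n (S.D.d t))), ?_⟩
      change (Submodule.Quotient.mk (S.i2 _) : S.D.Y n) = _
      refine ((Submodule.Quotient.eq _).2 ?_).symm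
      rw [mem_W]
      refine ⟨S.D.p (n-1) t, ?_⟩
      rw [S.D.hd, D_mem_II]
      constructor
      · have := map_mem_II (S.p n) hu
        simp only [map_sub, map_add, prj_self] at this
        simp only [map_sub, q1_p, P1_I2, q1_d, t, map_add, P1_I1, P2_I1, P2_I2, sub_add_cancel, map_zero]
        convert this using 1
        simp
        abel
      · simp only [map_sub, q2_p, P2_I2, prj_self, sub_add_cancel, sub_sub_cancel, sub_self]
        exact zero_mem _
    · rintro ⟨y, hy⟩
      obtain ⟨w, rfl⟩ := Submodule.Quotient.mk_surjective _ y
      rw [← hy]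
      change (Submodule.Quotient.mk (S.q1 (S.i2 w)) : S.Y n) = 0
      rw [P1_I2]; rfl
  exact ⟨k + k2, PL.two hf hg hfg (hk2.mono (by omega)) (hp.mono (by omega))⟩

end loc
end LS
end SG

namespace SG
set_option linter.unusedSectionVars false
set_option linter.unusedVariables false
set_option linter.style.haveILetI false
set_option linter.unusedSimpArgs false

namespace LS
variable {B : Type u} [CommRing B] {x : ℕ → B} {c j : ℕ}
variable [IsLocalRing B] [RegSeq x c]

lemma χ_e (S : LS x c j) (i : ℕ) (n : ℤ) (a : S.E) : S.Eχ i (S.e n a) = S.e (n+2) (S.Eχ i a) :=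
  (S.good_χ i).E_e (S.hχ i) n a

lemma e_χ (S : LS x c j) (i : ℕ) (n : ℤ) (a : S.E) : S.e n (S.Eχ i a) = S.Eχ i (S.e (n-2) a) := by
  rw [χ_e]; simp

lemma hom_ext (S : LS x c j) {a b : S.E} (h : ∀ m, S.e m a = S.e m b) : a = b := by
  obtain ⟨s, hs⟩ := S.exists_sum_e a
  obtain ⟨t, ht⟩ := S.exists_sum_e b
  classical
  rw [hs (s ∪ t) Finset.subset_union_left, ht (s ∪ t) Finset.subset_union_right]
  exact Finset.sum_congr rfl fun m _ => h m

/-- elements of degree at least `n` -/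
noncomputable def Ege (S : LS x c j) (n : ℤ) : Submodule (MvPolynomial (Fin c) B) S.E where
  carrier := {a | ∀ m < n, S.e m a = 0}
  zero_mem' := fun m _ => map_zero _
  add_mem' := fun {a b} ha hb m hm => by rw [map_add, ha m hm, hb m hm, add_zero]
  smul_mem' := by
    intro r a ha
    change ∀ m < n, S.e m a = 0 at ha
    change ∀ m < n, S.e m (r • a) = 0
    induction r using MvPolynomial.induction_on generalizing a with
    | C r => intro m hm; rw [C_smul, map_smul, ha m hm, smul_zero]
    | add p q hp hq => intro m hm; rw [add_smul, map_add, hp ha m hm, hq ha m hm, add_zero]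
    | mul_X p i hp =>
      rw [mul_smul]
      apply hp
      intro m hm
      rw [X_smul, e_χ, ha _ (by omega), map_zero]

lemma mem_Ege {S : LS x c j} {n : ℤ} {a : S.E} : a ∈ S.Ege n ↔ ∀ m < n, S.e m a = 0 := Iff.rfl

lemma e_mem_Ege {S : LS x c j} {n m : ℤ} {a : S.E} (h : n ≤ m) : S.e m a ∈ S.Ege n :=
  fun k hk => S.e_ne (by omega) _

lemma e_mem_Ege' {S : LS x c j} {n m : ℤ} {a : S.E} (h : a ∈ S.Ege n) : S.e m a ∈ S.Ege n := by
  by_cases hm : n ≤ m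
  · exact e_mem_Ege hm
  · rw [h m (by omega)]; exact zero_mem _

lemma e_smul_mem {S : LS x c j} {G : Submodule (MvPolynomial (Fin c) B) S.E}
    (r : MvPolynomial (Fin c) B) (g : S.E) (hg : ∀ m, S.e m g ∈ G) (m : ℤ) : S.e m (r • g) ∈ G := by
  induction r using MvPolynomial.induction_on generalizing g m with
  | C r => rw [C_smul, map_smul, ← C_smul]; exact G.smul_mem _ (hg m)
  | add p q hp hq => rw [add_smul, map_add]; exact add_mem (hp _ hg _) (hq _ hg _)
  | mul_X p i hp =>
    rw [mul_smul]
    apply hp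
    intro m
    rw [X_smul, e_χ, ← X_smul]
    exact G.smul_mem _ (hg _)

lemma span_hom {S : LS x c j} {T : Set S.E} (hT : ∀ t ∈ T, ∃ m, S.e m t = t) {g : S.E}
    (hg : g ∈ Submodule.span (MvPolynomial (Fin c) B) T) :
    ∀ m, S.e m g ∈ Submodule.span (MvPolynomial (Fin c) B) T := by
  induction hg using Submodule.span_induction with
  | mem t ht =>
    intro m
    obtain ⟨k, hk⟩ := hT t ht
    by_cases h : m = k
    · rw [h, hk]; exact Submodule.subset_span ht
    · rw [← hk, S.e_ne h]; exact zero_mem _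
  | zero => intro m; rw [map_zero]; exact zero_mem _
  | add a b _ _ ha hb => intro m; rw [map_add]; exact add_mem (ha m) (hb m)
  | smul r a _ ha => exact e_smul_mem r a ha

lemma range_p_fg (S : LS x c j) (n : ℤ) : (LinearMap.range (S.p n)).FG := by
  classical
  refine Submodule.fg_def.2 ⟨S.b '' {i | S.deg i = n}, (S.fin n).image _, ?_⟩
  refine le_antisymm (Submodule.span_le.2 ?_) ?_
  · rintro _ ⟨i, rfl, rfl⟩
    exact ⟨S.b i, prj_basis_same _ _ _⟩
  · rw [LinearMap.range_eq_map, ← S.b.span_eq, Submodule.map_span, Submodule.span_le]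
    rintro _ ⟨_, ⟨i, rfl⟩, rfl⟩
    rw [prj_basis]
    split_ifs with h
    · exact Submodule.subset_span ⟨i, h, rfl⟩
    · exact zero_mem _

lemma range_e_fg [IsNoetherianRing B] (S : LS x c j) (n : ℤ) : IsNoetherian B (LinearMap.range (S.e n)) := by
  haveI : IsNoetherian B (LinearMap.range (S.p n)) := isNoetherian_of_fg_of_noetherian _ (S.range_p_fg n)
  have h1 : LinearMap.range (S.p n) ⊓ S.Z ≤ LinearMap.range (S.p n) := inf_le_left
  haveI : IsNoetherian B (LinearMap.range (S.p n) ⊓ S.Z : Submodule B S.F) := isNoetherian_of_le h1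
  let f : (LinearMap.range (S.p n) ⊓ S.Z : Submodule B S.F) →ₗ[B] S.E :=
    S.cl ∘ₗ Submodule.inclusion inf_le_right
  haveI : IsNoetherian B (LinearMap.range f) := isNoetherian_of_surjective f.rangeRestrict f.range_rangeRestrict
  refine isNoetherian_of_le (t := LinearMap.range f) ?_
  rintro _ ⟨a, rfl⟩
  obtain ⟨z, rfl⟩ := S.cl_surj a
  rw [e_cl]
  exact ⟨⟨S.p n z, ⟨z, rfl⟩, p_Z (S := S) n z z.2⟩, rfl⟩

/-- finite generation of truncations -/
def FG (S : LS x c j) : Prop := ∀ n, (S.Ege n).FG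

lemma fg_of_le [IsNoetherianRing B] {M : Type*} [AddCommGroup M] [Module (MvPolynomial (Fin c) B) M]
    {N N' : Submodule (MvPolynomial (Fin c) B) M} (h : N ≤ N') (hN : N'.FG) : N.FG := by
  haveI := isNoetherian_of_fg_of_noetherian _ hN
  haveI := isNoetherian_of_le h
  exact Submodule.fg_top N |>.1 (IsNoetherian.noetherian _)

lemma FG_step [IsNoetherianRing B] (S : LS x c (j+1)) (h : S.D.FG) : S.FG := by
  classical
  intro n
  let f := toP S.Df S.Df_comm
  have hf : ∀ a, f a = S.Df a := fun a => rfl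
  have h1 : ((S.Ege n).map f).FG := by
    refine fg_of_le ?_ (h (n-1))
    rintro _ ⟨a, ha, rfl⟩
    intro m hm
    have := S.Df_e (m+1) a
    rw [add_sub_cancel_right] at this
    rw [hf, ← this, ha _ (by omega), map_zero]
  obtain ⟨T, hT, hT2⟩ := Submodule.fg_def.1 h1
  have h2 : ∀ t : T, ∃ a ∈ S.Ege n, f a = t := by
    intro t
    have : (t : S.D.E) ∈ (S.Ege n).map f := by rw [← hT2]; exact Submodule.subset_span t.2
    exact this
  choose l hl hl2 using h2
  choose s hs using fun t => S.exists_sum_e (l t)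
  obtain ⟨U, hU, hU2⟩ := Submodule.fg_def.1 ((Submodule.fg_top _).1 ((S.range_e_fg n).noetherian ⊤))
  obtain ⟨V, hV, hV2⟩ := Submodule.fg_def.1 ((Submodule.fg_top _).1 ((S.range_e_fg (n+1)).noetherian ⊤))
  haveI := hT.to_subtype
  let T' : Set S.E := (⋃ t, (fun m => S.e m (l t)) '' (s t : Set ℤ)) ∪ (U ∪ V)
  have hT'fin : T'.Finite :=
    (Set.finite_iUnion fun t => (s t).finite_toSet.image _).union (hU.union hV)
  have hUe : ∀ u ∈ U, S.e n u = u := by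
    intro u hu
    obtain ⟨a, rfl⟩ : u ∈ LinearMap.range (S.e n) := by rw [← hU2]; exact Submodule.subset_span hu
    exact S.e_self _ _
  have hVe : ∀ u ∈ V, S.e (n+1) u = u := by
    intro u hu
    obtain ⟨a, rfl⟩ : u ∈ LinearMap.range (S.e (n+1)) := by rw [← hV2]; exact Submodule.subset_span hu
    exact S.e_self _ _
  have hT'h : ∀ t ∈ T', ∃ m, S.e m t = t := by
    rintro t (ht | ht | ht)
    · rw [Set.mem_iUnion] at ht
      obtain ⟨t, m, _, rfl⟩ := ht
      exact ⟨m, S.e_self _ _⟩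
    · exact ⟨n, hUe t ht⟩
    · exact ⟨n+1, hVe t ht⟩
  set G := Submodule.span (MvPolynomial (Fin c) B) T' with hG
  have hGe : ∀ g ∈ G, ∀ m, S.e m g ∈ G := fun g hg => span_hom hT'h hg
  have hGB : ∀ {W : Set S.E}, W ⊆ T' → ∀ a ∈ Submodule.span B W, a ∈ G := by
    intro W hW a ha
    induction ha using Submodule.span_induction with
    | mem t ht => exact Submodule.subset_span (hW ht)
    | zero => exact zero_mem _
    | add a b _ _ ha hb => exact add_mem ha hb
    | smul r a _ ha => rw [← C_smul]; exact G.smul_mem _ ha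
  have hGle : G ≤ S.Ege n := by
    rw [hG, Submodule.span_le]
    rintro t (ht | ht | ht)
    · rw [Set.mem_iUnion] at ht
      obtain ⟨t, m, _, rfl⟩ := ht
      exact e_mem_Ege' (hl t)
    · rw [← hUe t ht]; exact e_mem_Ege le_rfl
    · rw [← hVe t ht]; exact e_mem_Ege (by omega)
  have hlG : ∀ t, l t ∈ G := by
    intro t
    rw [hs t (s t) subset_rfl]
    refine sum_mem fun m hm => Submodule.subset_span (Or.inl ?_)
    rw [Set.mem_iUnion]
    exact ⟨t, m, hm, rfl⟩
  have hfG : ∀ a ∈ S.Ege n, ∃ g ∈ G, f g = f a := by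
    have : (S.Ege n).map f ≤ G.map f := by
      rw [← hT2, Submodule.span_le]
      intro t ht
      exact ⟨l ⟨t, ht⟩, hlG _, hl2 _⟩
    intro a ha
    exact this ⟨a, ha, rfl⟩
  have key : ∀ k : ℕ, ∀ a, S.e (n+k) a ∈ G := by
    intro k
    induction k using Nat.strong_induction_on with
    | _ k ih =>
      intro a
      rcases k with _ | _ | k
      · refine hGB (W := U) (fun u hu => Or.inr (Or.inl hu)) _ ?_
        rw [hU2]
        exact ⟨a, by simp⟩
      · refine hGB (W := V) (fun u hu => Or.inr (Or.inr hu)) _ ?_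
        rw [hV2]
        exact ⟨a, by simp⟩
      · obtain ⟨g, hg, hga⟩ := hfG (S.e (n + (k+1+1:ℕ)) a) (e_mem_Ege (by omega))
        have h3 : S.Df (S.e (n + (k+1+1:ℕ)) a - g) = 0 := by
          rw [map_sub, ← hf, ← hf, hga, sub_self]
        obtain ⟨b, hb⟩ := S.Df_ker h3
        have h4 : S.e (n + (k+1+1:ℕ)) a = S.e (n + (k+1+1:ℕ)) g + S.Eχ j (S.e (n + k) b) := by
          have := congrArg (S.e (n + (k+1+1:ℕ))) hb
          rw [map_sub, e_self, e_χ, show n + ((k+1+1:ℕ):ℤ) - 2 = n + k by push_cast; ring] at this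
          rw [← this]; abel
        rw [h4]
        refine add_mem (hGe g hg _) ?_
        have h5 := S.X_smul ⟨j, Nat.lt_of_succ_le S.hj⟩ (S.e (n+k) b)
        rw [← h5]
        exact G.smul_mem _ (ih k (by omega) b)
  have : S.Ege n = G := by
    refine le_antisymm (fun a ha => ?_) hGle
    obtain ⟨s, hs⟩ := S.exists_sum_e a
    rw [hs s subset_rfl]
    refine sum_mem fun m _ => ?_
    by_cases hm : m < n
    · rw [ha m hm]; exact zero_mem _
    · have := key (m - n).toNat a
      rwa [show n + ((m-n).toNat : ℤ) = m by omega] at this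
  rw [this]
  exact Submodule.fg_def.2 ⟨T', hT'fin, rfl⟩

lemma FG_of_pd [IsNoetherianRing B] (S : LS x c j) (h : S.Ex) (h' : S.DEx) {n : ℤ} {k : ℕ}
    (hp : PL B (S.Y n) k) : S.FG := by
  induction j generalizing n k with
  | zero =>
    intro m
    have h0 := Van_all (S.base_van h h' hp)
    have : S.Ege m = ⊥ := by
      rw [eq_bot_iff]
      intro a _
      exact h0 a
    rw [this]
    exact Submodule.fg_bot
  | succ j ih =>
    obtain ⟨k', hk'⟩ := S.D_pd hp
    exact S.FG_step (ih S.D (S.D_Ex h) (S.D_DEx h') hk')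

end LS
end SG

namespace SG
set_option linter.unusedSectionVars false
set_option linter.unusedVariables false
set_option linter.style.haveILetI false
set_option linter.unusedSimpArgs false

/-- graded prime avoidance -/
lemma avoid {R : Type*} [CommRing R] (A : ℕ → Set R) (h0 : 0 ∈ A 1)
    (ha : ∀ s, ∀ f ∈ A s, ∀ g ∈ A s, f + g ∈ A s)
    (hm : ∀ s t, ∀ f ∈ A s, ∀ g ∈ A t, f * g ∈ A (s+t)) (Q : Finset (Ideal R))
    (hp : ∀ p ∈ Q, p.IsPrime) (hQ : ∀ p ∈ Q, ∃ s, 0 < s ∧ ∃ f ∈ A s, f ∉ p) :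
    ∃ s, 0 < s ∧ ∃ f ∈ A s, ∀ p ∈ Q, f ∉ p := by
  classical
  have hpow : ∀ s, ∀ f ∈ A s, ∀ k : ℕ, f ^ (k+1) ∈ A ((k+1) * s) := by
    intro s f hf k
    induction k with
    | zero => simpa using hf
    | succ k ih =>
      have := hm _ _ _ ih _ hf
      rw [pow_succ]
      convert this using 1
      ring_nf
  induction hn : Q.card using Nat.strong_induction_on generalizing Q with
  | _ n ih =>
    rcases Q.eq_empty_or_nonempty with rfl | ⟨p, hpQ⟩
    · exact ⟨1, one_pos, 0, h0, by simp⟩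
    have hz : ∀ q ∈ Q, ∃ z, (∃ s, 0 < s ∧ z ∈ A s) ∧ ∀ q' ∈ Q.erase q, z ∉ q' := by
      intro q hq
      obtain ⟨s, hs, f, hf, hf2⟩ := ih (Q.erase q).card (by rw [← hn]; exact Finset.card_erase_lt_of_mem hq) (Q.erase q)
        (fun p hp' => hp p (Finset.mem_of_mem_erase hp')) (fun p hp' => hQ p (Finset.mem_of_mem_erase hp')) rfl
      exact ⟨f, ⟨s, hs, hf⟩, hf2⟩
    choose! z hz1 hz2 using hz
    by_cases hcase : ∃ q ∈ Q, z q ∉ q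
    · obtain ⟨q, hq, hzq⟩ := hcase
      obtain ⟨s, hs, hs2⟩ := hz1 q hq
      refine ⟨s, hs, z q, hs2, fun q' hq' => ?_⟩
      by_cases h : q' = q
      · rw [h]; exact hzq
      · exact hz2 q hq q' (Finset.mem_erase.2 ⟨h, hq'⟩)
    push Not at hcase
    rcases (Q.erase p).eq_empty_or_nonempty with he | hne
    · obtain ⟨s, hs, f, hf, hfp⟩ := hQ p hpQ
      refine ⟨s, hs, f, hf, fun q hq => ?_⟩
      by_cases h : q = p
      · rw [h]; exact hfp
      · have : q ∈ Q.erase p := Finset.mem_erase.2 ⟨h, hq⟩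
        rw [he] at this; simp at this
    have hy : ∃ s, 0 < s ∧ (∏ q ∈ Q.erase p, z q) ∈ A s := by
      refine Finset.prod_induction_nonempty (p := fun f => ∃ s, 0 < s ∧ f ∈ A s) _ ?_ hne ?_
      · rintro a b ⟨s, hs, hs'⟩ ⟨t, ht, ht'⟩
        exact ⟨s + t, by omega, hm _ _ _ hs' _ ht'⟩
      · intro q hq
        exact hz1 q (Finset.mem_of_mem_erase hq)
    set y := ∏ q ∈ Q.erase p, z q with hydef
    have hyp : y ∉ p := by
      have := hp p hpQ
      rw [hydef, Ideal.IsPrime.prod_mem_iff]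
      rintro ⟨q, hq, hqp⟩
      exact hz2 q (Finset.mem_of_mem_erase hq) p (Finset.mem_erase.2 ⟨(Finset.ne_of_mem_erase hq).symm, hpQ⟩) hqp
    have hyq : ∀ q ∈ Q.erase p, y ∈ q := fun q hq =>
      Ideal.mem_of_dvd _ (Finset.dvd_prod_of_mem z hq) (hcase q (Finset.mem_of_mem_erase hq))
    obtain ⟨t, ht, hyt⟩ := hy
    obtain ⟨s, hs, hzs⟩ := hz1 p hpQ
    obtain ⟨t, rfl⟩ : ∃ t', t = t' + 1 := ⟨t - 1, by omega⟩
    obtain ⟨s, rfl⟩ : ∃ s', s = s' + 1 := ⟨s - 1, by omega⟩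
    refine ⟨(t+1)*(s+1), by positivity, (z p)^(t+1) + y^(s+1), ha _ _ (hpow _ _ hzs t) _ ?_, ?_⟩
    · rw [mul_comm]; exact hpow _ _ hyt s
    · intro q hq hmem
      have hqp := hp q hq
      by_cases h : q = p
      · subst h
        have h1 : (z q)^(t+1) ∈ q := Ideal.pow_mem_of_mem _ (hcase q hpQ) _ (by omega)
        have h2 := (Ideal.add_mem_iff_right _ h1).1 hmem
        exact hyp (hqp.mem_of_pow_mem _ h2)
      · have hq' : q ∈ Q.erase p := Finset.mem_erase.2 ⟨h, hq⟩
        have h1 : y^(s+1) ∈ q := Ideal.pow_mem_of_mem _ (hyq q hq') _ (by omega)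
        have h2 := (Ideal.add_mem_iff_left _ h1).1 hmem
        exact hz2 p hpQ q hq' (hqp.mem_of_pow_mem _ h2)

namespace LS
variable {B : Type u} [CommRing B] {x : ℕ → B} {c j : ℕ}
variable [IsLocalRing B] [RegSeq x c]

/-- polynomials acting through homogeneous good operators -/
def Ops (S : LS x c j) (s : ℕ) : Set (MvPolynomial (Fin c) B) :=
  {f | ∃ Z : S.F →ₗ[B] S.F, HD S.b S.deg (2*s) Z ∧ ∃ hZ : S.Good Z, ∀ a : S.E, f • a = hZ.E a}

lemma Ops_zero (S : LS x c j) : 0 ∈ S.Ops 1 := by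
  refine ⟨0, HD.zero _, by unfold Good; simp, fun a => ?_⟩
  obtain ⟨z, rfl⟩ := S.cl_surj a
  rw [Good.E_cl, zero_smul]
  exact (map_zero S.cl).symm

lemma Ops_X (S : LS x c j) (i : Fin c) : MvPolynomial.X i ∈ S.Ops 1 :=
  ⟨S.χ i, by simpa using S.hχ i, S.good_χ i, fun a => X_smul S i a⟩

lemma Ops_add (S : LS x c j) (s : ℕ) : ∀ f ∈ S.Ops s, ∀ g ∈ S.Ops s, f + g ∈ S.Ops s := by
  rintro f ⟨Z, hZ, gZ, hf⟩ g ⟨W, hW, gW, hg⟩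
  refine ⟨Z + W, hZ.add hW, gZ.add gW, fun a => ?_⟩
  rw [add_smul, hf, hg]
  obtain ⟨z, rfl⟩ := S.cl_surj a
  rw [Good.E_cl, Good.E_cl, Good.E_cl, ← map_add]
  rfl

lemma Ops_mul (S : LS x c j) (s t : ℕ) : ∀ f ∈ S.Ops s, ∀ g ∈ S.Ops t, f * g ∈ S.Ops (s+t) := by
  rintro f ⟨Z, hZ, gZ, hf⟩ g ⟨W, hW, gW, hg⟩
  refine ⟨Z ∘ₗ W, ?_, gZ.comp gW, fun a => ?_⟩
  · have := hZ.comp hW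
    convert this using 1
    push_cast; ring
  rw [mul_smul, hg, hf]
  obtain ⟨z, rfl⟩ := S.cl_surj a
  rw [Good.E_cl, Good.E_cl, Good.E_cl]
  rfl

/-- bounded socle elements -/
noncomputable def Soc (S : LS x c j) (n : ℤ) : Submodule (MvPolynomial (Fin c) B) S.E where
  carrier := {a | (∀ m, n < m → S.e m a = 0) ∧ ∀ i : Fin c, S.Eχ i a = 0}
  zero_mem' := ⟨fun m _ => map_zero _, fun i => map_zero _⟩
  add_mem' := fun {a b} ha hb => ⟨fun m hm => by rw [map_add, ha.1 m hm, hb.1 m hm, add_zero],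
    fun i => by rw [map_add, ha.2, hb.2, add_zero]⟩
  smul_mem' := by
    intro r a ha
    induction r using MvPolynomial.induction_on with
    | C r => exact ⟨fun m hm => by rw [C_smul, map_smul, ha.1 m hm, smul_zero],
        fun i => by rw [C_smul, map_smul, ha.2, smul_zero]⟩
    | add p q hp hq => exact ⟨fun m hm => by rw [add_smul, map_add, hp.1 m hm, hq.1 m hm, add_zero],
        fun i => by rw [add_smul, map_add, hp.2, hq.2, add_zero]⟩
    | mul_X p i hp =>
      rw [mul_smul, X_smul, ha.2, smul_zero]
      exact ⟨fun m _ => map_zero _, fun i => map_zero _⟩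

lemma mem_Soc {S : LS x c j} {n : ℤ} {a : S.E} :
    a ∈ S.Soc n ↔ (∀ m, n < m → S.e m a = 0) ∧ ∀ i : Fin c, S.Eχ i a = 0 := Iff.rfl

/-- the full socle -/
noncomputable def SocAll (S : LS x c j) : Submodule (MvPolynomial (Fin c) B) S.E where
  carrier := {a | ∀ i : Fin c, S.Eχ i a = 0}
  zero_mem' := fun i => map_zero _
  add_mem' := fun {a b} ha hb => fun i => by rw [map_add, ha, hb, add_zero]
  smul_mem' := by
    intro r a ha i
    rw [← X_smul, smul_comm, X_smul, ha, smul_zero]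

lemma bdd_above (S : LS x c j) (a : S.E) : ∃ n0, ∀ m, n0 < m → S.e m a = 0 := by
  obtain ⟨s, hs⟩ := S.exists_sum_e a
  obtain ⟨n0, hn0⟩ := s.bddAbove
  refine ⟨n0, fun m hm => ?_⟩
  rw [hs s subset_rfl, map_sum]
  refine Finset.sum_eq_zero fun k hk => S.e_ne ?_ a
  have := hn0 hk
  omega

lemma socle_bdd [IsNoetherianRing B] (S : LS x c j) (h : S.FG) :
    ∃ n1, 0 ≤ n1 ∧ ∀ a ∈ S.Ege 0, (∀ i : Fin c, S.Eχ i a = 0) → a ∈ S.Soc n1 := by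
  obtain ⟨T, hT, hT2⟩ := Submodule.fg_def.1 (fg_of_le (N := S.Ege 0 ⊓ S.SocAll) inf_le_left (h 0))
  choose n hn using S.bdd_above
  obtain ⟨n1, hn1⟩ := (hT.image n).bddAbove
  refine ⟨max n1 0, le_max_right _ _, fun a ha ha2 => ?_⟩
  have : a ∈ S.Ege 0 ⊓ S.SocAll := ⟨ha, ha2⟩
  rw [← hT2] at this
  refine (Submodule.span_le.2 ?_) this
  intro t ht
  have ht' : t ∈ S.Ege 0 ⊓ S.SocAll := by rw [← hT2]; exact Submodule.subset_span ht
  refine ⟨fun m hm => hn t m ?_, ht'.2⟩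
  have := hn1 ⟨t, ht, rfl⟩
  have := le_max_left n1 0
  omega

lemma exists_regular [IsNoetherianRing B] (S : LS x c j) (h : S.FG) :
    ∃ s : ℕ, 0 < s ∧ ∃ Z : S.F →ₗ[B] S.F, HD S.b S.deg (2*s) Z ∧ ∃ hZ : S.Good Z, ∃ n1 : ℤ,
      (∀ a ∈ S.Ege n1, hZ.E a = 0 → a = 0) ∧ ∀ i a, hZ.E (S.Eχ i a) = S.Eχ i (hZ.E a) := by
  classical
  obtain ⟨n1, hn0, hn1⟩ := S.socle_bdd h
  haveI : IsNoetherian (MvPolynomial (Fin c) B) (S.Ege (n1+1)) := isNoetherian_of_fg_of_noetherian _ (h _)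
  have hfin := associatedPrimes.finite (MvPolynomial (Fin c) B) (S.Ege (n1+1))
  obtain ⟨s, hs, f, ⟨Z, hZ, gZ, hf⟩, hfp⟩ := avoid S.Ops S.Ops_zero S.Ops_add S.Ops_mul hfin.toFinset (by
    intro p hp
    rw [Set.Finite.mem_toFinset] at hp
    exact hp.isPrime) (by
    intro p hp
    rw [Set.Finite.mem_toFinset] at hp
    by_contra hcon
    push Not at hcon
    have hX : ∀ i, MvPolynomial.X i ∈ p := fun i => hcon 1 one_pos _ (S.Ops_X i)
    obtain ⟨hpp, a, ha⟩ := isAssociatedPrime_iff.1 hp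
    have h1 : ∀ i : Fin c, S.Eχ i (a : S.E) = 0 := by
      intro i
      have h4 := hX i
      rw [ha, Submodule.mem_colon_singleton, Submodule.mem_bot] at h4
      rw [← X_smul]
      exact congrArg Subtype.val h4
    have h2 := hn1 a (fun m hm => a.2 m (by omega)) h1
    have h3 : (a : S.E) = 0 := by
      refine S.hom_ext fun m => ?_
      rw [map_zero]
      by_cases hm : m < n1 + 1
      · exact a.2 m hm
      · exact h2.1 m (by omega)
    refine hpp.ne_top ((Ideal.eq_top_iff_one _).2 ?_)
    rw [ha, Submodule.mem_colon_singleton, Submodule.mem_bot, one_smul]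
    exact Subtype.ext h3)
  refine ⟨s, hs, Z, hZ, gZ, n1+1, ?_, ?_⟩
  · intro a ha h0
    by_contra hne
    have h1 : f ∈ {r : MvPolynomial (Fin c) B | ∃ y : S.Ege (n1+1), y ≠ 0 ∧ r • y = 0} := by
      refine ⟨⟨a, ha⟩, fun hh => hne (congrArg Subtype.val hh), Subtype.ext ?_⟩
      change f • a = 0
      rw [hf, h0]
    rw [← biUnion_associatedPrimes_eq_zero_divisors] at h1
    simp only [Set.mem_iUnion] at h1
    obtain ⟨p, hp, hfp'⟩ := h1
    exact hfp p (by rwa [Set.Finite.mem_toFinset]) hfp'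
  · intro i a
    by_cases hi : i < c
    · rw [← hf, ← hf]
      have := S.X_smul ⟨i, hi⟩ a
      rw [← this, smul_comm, X_smul]
    · rw [Eχ_of_le _ (S.hj.trans (not_lt.1 hi)), Eχ_of_le _ (S.hj.trans (not_lt.1 hi)), map_zero]

end LS
end SG

namespace SG
set_option linter.unusedSectionVars false
set_option linter.unusedVariables false
set_option linter.style.haveILetI false
set_option linter.unusedSimpArgs false

namespace LS
variable {B : Type u} [CommRing B] {x : ℕ → B} {c j : ℕ}

/-- homogeneous good operator -/
structure Op (S : LS x c j) where
  T : S.F →ₗ[B] S.F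
  σ : ℤ
  hs : HD S.b S.deg σ T
  hT : S.Good T

variable [IsLocalRing B] [RegSeq x c]

section K
variable {S : LS x c j} (O : S.Op)

lemma Op.hd_comm : HD S.b S.deg (O.σ + 1) (S.d ∘ₗ O.T - O.T ∘ₗ S.d) :=
  HD.sub ((S.hd.comp O.hs).cast (by ring)) ((O.hs.comp S.hd).cast (by ring))

/-- homotopies -/
noncomputable def Op.h : ℕ → S.F →ₗ[B] S.F := (O.hd_comm.exists_coeff O.hT).choose
lemma Op.h_hd (i : ℕ) : HD S.b S.deg (O.σ + 1) (O.h i) :=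
  (O.hd_comm.exists_coeff O.hT).choose_spec.1 i
lemma Op.h_sum (v : S.F) : S.d (O.T v) - O.T (S.d v) = ∑ i ∈ Finset.range j, x i • O.h i v := by
  have := LinearMap.congr_fun (O.hd_comm.exists_coeff O.hT).choose_spec.2 v
  rw [LinearMap.sum_apply] at this
  exact this

/-- the differential of the cone -/
noncomputable def Op.Kd : S.F × S.F →ₗ[B] S.F × S.F :=
  (S.d.coprod O.T).prod ((0 : S.F →ₗ[B] S.F).coprod (-S.d))

lemma Op.Kd_apply (v : S.F × S.F) : O.Kd v = (S.d v.1 + O.T v.2, - S.d v.2) := by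
  simp [Kd]

/-- the operators of the cone -/
noncomputable def Op.Kχ (i : ℕ) : S.F × S.F →ₗ[B] S.F × S.F :=
  if i < j then ((S.χ i).coprod (O.h i)).prod ((S.χ i) ∘ₗ LinearMap.snd B _ _) else 0

lemma Op.Kχ_apply {i : ℕ} (h : i < j) (v : S.F × S.F) :
    O.Kχ i v = (S.χ i v.1 + O.h i v.2, S.χ i v.2) := by
  simp [Kχ, h]

/-- the cone -/
noncomputable def Op.K : LS x c j where
  F := S.F × S.F
  ι := S.ι ⊕ S.ι
  b := S.b.prod S.b
  deg := Sum.elim S.deg (fun i => S.deg i - (1 - O.σ))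
  fin := S.fin_prod _
  hj := S.hj
  d := O.Kd
  χ := O.Kχ
  hd := by
    intro n v
    simp only [prj_prod, O.Kd_apply]
    ext
    · simp only [map_add]
      rw [S.hd, O.hs]
      rw [show n + (1 - O.σ) + O.σ = n + 1 by ring]
    · simp only [map_neg]
      rw [S.hd]
      rw [show n + (1 - O.σ) + 1 = n + 1 + (1 - O.σ) by ring]
  hχ := by
    intro i n v
    by_cases hi : i < j
    · simp only [prj_prod, O.Kχ_apply hi]
      ext
      · simp only [map_add]
        rw [S.hχ, O.h_hd]
        rw [show n + (1 - O.σ) + (O.σ + 1) = n + 2 by ring]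
      · simp only
        rw [S.hχ]
        rw [show n + (1 - O.σ) + 2 = n + 2 + (1 - O.σ) by ring]
    · simp [Kχ, hi]
  χ0 := by
    intro i hi
    simp [Kχ, not_lt.2 hi]
  dd := by
    intro v
    have h1 : ∑ i ∈ Finset.range j, x i • O.Kχ i v =
      (∑ i ∈ Finset.range j, x i • S.χ i v.1 + ∑ i ∈ Finset.range j, x i • O.h i v.2,
        ∑ i ∈ Finset.range j, x i • S.χ i v.2) := by
      rw [← Finset.sum_add_distrib]
      have : ∀ i ∈ Finset.range j, x i • O.Kχ i v = (x i • S.χ i v.1 + x i • O.h i v.2, x i • S.χ i v.2) := by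
        intro i hi
        rw [O.Kχ_apply (Finset.mem_range.1 hi)]
        simp
      rw [Finset.sum_congr rfl this]
      ext <;> simp [Prod.fst_sum, Prod.snd_sum]
    rw [h1, ← O.h_sum, ← S.dd, ← S.dd]
    simp only [O.Kd_apply]
    ext
    · simp [sub_eq_add_neg]; abel
    · simp

/-- underlying module of the cone -/
noncomputable def Op.Ke : O.K.F ≃ₗ[B] S.F × S.F := LinearEquiv.refl B (S.F × S.F)

/-- first projection -/
noncomputable abbrev Op.q1 : O.K.F →ₗ[B] S.F := P1 O.Ke
/-- second projection -/
noncomputable abbrev Op.q2 : O.K.F →ₗ[B] S.F := P2 O.Ke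
/-- first injection -/
noncomputable abbrev Op.i1 : S.F →ₗ[B] O.K.F := I1 O.Ke
/-- second injection -/
noncomputable abbrev Op.i2 : S.F →ₗ[B] O.K.F := I2 O.Ke

lemma Op.q1_d (v : O.K.F) : O.q1 (O.K.d v) = S.d (O.q1 v) + O.T (O.q2 v) :=
  congrArg Prod.fst (O.Kd_apply v)
lemma Op.q2_d (v : O.K.F) : O.q2 (O.K.d v) = - S.d (O.q2 v) :=
  congrArg Prod.snd (O.Kd_apply v)
lemma Op.q1_p (n : ℤ) (v : O.K.F) : O.q1 (O.K.p n v) = S.p n (O.q1 v) :=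
  congrArg Prod.fst (prj_prod S.b S.deg (1 - O.σ) n (O.Ke v))
lemma Op.q2_p (n : ℤ) (v : O.K.F) : O.q2 (O.K.p n v) = S.p (n+(1-O.σ)) (O.q2 v) :=
  congrArg Prod.snd (prj_prod S.b S.deg (1 - O.σ) n (O.Ke v))
lemma Op.q1_χ {i : ℕ} (h : i < j) (v : O.K.F) : O.q1 (O.K.χ i v) = S.χ i (O.q1 v) + O.h i (O.q2 v) :=
  congrArg Prod.fst (O.Kχ_apply h v)
lemma Op.q2_χ {i : ℕ} (h : i < j) (v : O.K.F) : O.q2 (O.K.χ i v) = S.χ i (O.q2 v) :=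
  congrArg Prod.snd (O.Kχ_apply h v)
lemma Op.mem_II {v : O.K.F} : v ∈ II x j O.K.F ↔ O.q1 v ∈ II x j S.F ∧ O.q2 v ∈ II x j S.F :=
  pair_mem_II _
lemma Op.mem_mF {v : O.K.F} : v ∈ O.K.mF ↔ O.q1 v ∈ S.mF ∧ O.q2 v ∈ S.mF := pair_mem_smul _

lemma Op.K_Ex (h : S.Ex) : O.K.Ex := by
  intro v hv
  obtain ⟨h1, h2⟩ := O.mem_II.1 hv
  rw [O.q1_d] at h1
  rw [O.q2_d, neg_mem_iff] at h2
  obtain ⟨w, hw⟩ := h _ h2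
  have h3 := apply_mem_II O.hT w
  have h4 := map_mem_II O.T hw
  rw [map_sub] at h4
  obtain ⟨u, hu⟩ := h (O.q1 v + O.T w) (by
    have := add_mem (sub_mem h1 h4) h3
    convert this using 1
    simp; abel)
  refine ⟨O.i1 u - O.i2 w, ?_⟩
  rw [O.mem_II]
  simp only [map_sub O.q1, map_sub O.q2, O.q1_d, O.q2_d, P1_I1, P1_I2, P2_I1, P2_I2, map_neg, zero_sub, sub_zero, map_sub O.K.d]
  constructor
  · convert hu using 1
    simp
    abel
  · simpa using hw

lemma Op.i1_Z : ∀ v ∈ S.Z, O.i1 v ∈ O.K.Z := by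
  intro v hv
  rw [mem_Z, O.mem_mF, O.q1_d, O.q2_d]
  simpa using S.mem_Z.1 hv

lemma Op.i1_Bd : ∀ v ∈ S.Bd, O.i1 v ∈ O.K.Bd := by
  intro v hv
  obtain ⟨w, hw⟩ := S.mem_Bd.1 hv
  rw [LS.mem_Bd]
  refine ⟨O.i1 w, ?_⟩
  rw [O.mem_mF, map_sub O.q1, map_sub O.q2, O.q1_d, O.q2_d]
  simpa using hw

lemma Op.q2_Z : ∀ v ∈ O.K.Z, O.q2 v ∈ S.Z := by
  intro v hv
  rw [mem_Z, O.mem_mF, O.q1_d, O.q2_d] at hv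
  rw [mem_Z]
  simpa using hv.2

lemma Op.q2_Bd : ∀ v ∈ O.K.Bd, O.q2 v ∈ S.Bd := by
  intro v hv
  obtain ⟨w, hw⟩ := O.K.mem_Bd.1 hv
  rw [O.mem_mF, map_sub O.q1, map_sub O.q2, O.q1_d, O.q2_d] at hw
  rw [LS.mem_Bd]
  exact ⟨- O.q2 w, by simpa using hw.2⟩

/-- inclusion -/
noncomputable def Op.f : S.E →ₗ[B] O.K.E := Emap O.i1 O.i1_Z O.i1_Bd
/-- projection -/
noncomputable def Op.g : O.K.E →ₗ[B] S.E := Emap O.q2 O.q2_Z O.q2_Bd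

lemma Op.f_cl (z : S.Z) : O.f (S.cl z) = O.K.cl ⟨O.i1 z, O.i1_Z z z.2⟩ := Emap_cl _ _ _ _
lemma Op.g_cl (z : O.K.Z) : O.g (O.K.cl z) = S.cl ⟨O.q2 z, O.q2_Z z z.2⟩ := Emap_cl _ _ _ _

lemma Op.f_e (n : ℤ) (a : S.E) : O.f (S.e n a) = O.K.e n (O.f a) := by
  obtain ⟨z, rfl⟩ := S.cl_surj a
  simp only [e_cl, O.f_cl]
  congr 1
  apply Subtype.ext
  apply pair_ext O.Ke
  · rw [P1_I1]; erw [O.q1_p]; rw [P1_I1]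
  · rw [P2_I1]; erw [O.q2_p]; rw [P2_I1, map_zero]

lemma Op.g_e (n : ℤ) (a : O.K.E) : O.g (O.K.e n a) = S.e (n + (1 - O.σ)) (O.g a) := by
  obtain ⟨z, rfl⟩ := O.K.cl_surj a
  simp only [e_cl, O.g_cl]
  congr 1
  exact Subtype.ext (O.q2_p n z)

lemma Op.f_χ (i : ℕ) (a : S.E) : O.f (S.Eχ i a) = O.K.Eχ i (O.f a) := by
  by_cases hi : i < j
  · obtain ⟨z, rfl⟩ := S.cl_surj a
    simp only [Eχ_cl, O.f_cl]
    congr 1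
    apply Subtype.ext
    apply pair_ext O.Ke
    · rw [P1_I1]; erw [O.q1_χ hi]; rw [P1_I1, P2_I1, map_zero, add_zero]
    · rw [P2_I1]; erw [O.q2_χ hi]; rw [P2_I1, map_zero]
  · rw [Eχ_of_le _ (not_lt.1 hi), Eχ_of_le _ (not_lt.1 hi), map_zero]

lemma Op.g_χ (i : ℕ) (a : O.K.E) : O.g (O.K.Eχ i a) = S.Eχ i (O.g a) := by
  by_cases hi : i < j
  · obtain ⟨z, rfl⟩ := O.K.cl_surj a
    simp only [Eχ_cl, O.g_cl]
    congr 1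
    exact Subtype.ext (O.q2_χ hi z)
  · rw [Eχ_of_le _ (not_lt.1 hi), Eχ_of_le _ (not_lt.1 hi), map_zero]

/-- action on `E` -/
noncomputable abbrev Op.t : S.E →ₗ[B] S.E := O.hT.E

lemma Op.t_e (n : ℤ) (a : S.E) : O.t (S.e n a) = S.e (n + O.σ) (O.t a) := O.hT.E_e O.hs n a

lemma Op.f_t (a : S.E) : O.f (O.t a) = 0 := by
  obtain ⟨z, rfl⟩ := S.cl_surj a
  rw [Op.t, Good.E_cl, O.f_cl, cl_eq_zero, LS.mem_Bd]
  refine ⟨O.i2 z, ?_⟩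
  rw [O.mem_mF, map_sub O.q1, map_sub O.q2, O.q1_d, O.q2_d]
  have hz := S.mem_Z.1 z.2
  simpa using hz

lemma Op.f_ker {a : S.E} (h : O.f a = 0) : ∃ b, a = O.t b := by
  obtain ⟨z, rfl⟩ := S.cl_surj a
  rw [O.f_cl, cl_eq_zero, LS.mem_Bd] at h
  obtain ⟨w, hw⟩ := h
  rw [O.mem_mF, map_sub O.q1, map_sub O.q2, O.q1_d, O.q2_d] at hw
  simp only [P1_I1, P2_I1, zero_sub, neg_neg] at hw
  refine ⟨S.cl ⟨O.q2 w, hw.2⟩, ?_⟩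
  rw [Op.t, Good.E_cl, cl_eq, LS.mem_Bd]
  refine ⟨O.q1 w, ?_⟩
  convert hw.1 using 1
  abel

lemma Op.t_g (a : O.K.E) : O.t (O.g a) = 0 := by
  obtain ⟨z, rfl⟩ := O.K.cl_surj a
  have hz := z.2
  rw [mem_Z, O.mem_mF, O.q1_d, O.q2_d] at hz
  rw [O.g_cl, Op.t, Good.E_cl, cl_eq_zero, LS.mem_Bd]
  refine ⟨- O.q1 z, ?_⟩
  convert hz.1 using 1
  simp; abel

lemma Op.t_ker {a : S.E} (h : O.t a = 0) : ∃ b, a = O.g b := by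
  obtain ⟨z, rfl⟩ := S.cl_surj a
  rw [Op.t, Good.E_cl, cl_eq_zero, LS.mem_Bd] at h
  obtain ⟨w, hw⟩ := h
  refine ⟨O.K.cl ⟨O.i2 z - O.i1 w, ?_⟩, ?_⟩
  · rw [mem_Z, O.mem_mF, O.q1_d, O.q2_d]
    simp only [map_sub, P1_I1, P2_I1, P1_I2, P2_I2, zero_sub, sub_zero, map_neg, neg_mem_iff, map_zero]
    refine ⟨?_, z.2⟩
    convert hw using 1
    abel
  · rw [O.g_cl]
    congr 1
    apply Subtype.ext
    simp

lemma Op.g_f (a : S.E) : O.g (O.f a) = 0 := by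
  obtain ⟨z, rfl⟩ := S.cl_surj a
  rw [O.f_cl, O.g_cl, cl_eq_zero]
  simp

lemma Op.g_ker {a : O.K.E} (h : O.g a = 0) : ∃ b, a = O.f b := by
  obtain ⟨z, rfl⟩ := O.K.cl_surj a
  rw [O.g_cl, cl_eq_zero, LS.mem_Bd] at h
  obtain ⟨w, hw⟩ := h
  have hw : O.q2 z - S.d w ∈ S.mF := hw
  have hz := z.2
  rw [mem_Z, O.mem_mF, O.q1_d, O.q2_d] at hz
  refine ⟨S.cl ⟨O.q1 z + O.T w, ?_⟩, ?_⟩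
  · rw [mem_Z]
    have h1 := O.hT.comm_mem w
    have h2 := map_mF O.T hw
    have := add_mem (sub_mem hz.1 h2) h1
    convert this using 1
    simp; abel
  · rw [O.f_cl, cl_eq, LS.mem_Bd]
    refine ⟨- O.i2 w, ?_⟩
    rw [O.mem_mF]
    simp only [map_sub O.q1, map_sub O.q2, map_neg, O.q1_d, O.q2_d, P1_I1, P2_I1, P1_I2, P2_I2]
    constructor
    · convert zero_mem S.mF using 1
      simp
    · simpa using hw

lemma Op.K_FG [IsNoetherianRing B] (h : S.FG) : O.K.FG := by
  intro n
  let f := toP O.f O.f_χ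
  let g := toP O.g O.g_χ
  refine Submodule.fg_of_fg_map_of_fg_inf_ker g ?_ ?_
  · refine fg_of_le ?_ (h (n + (1 - O.σ)))
    rintro _ ⟨a, ha, rfl⟩
    intro m hm
    have := O.g_e (m - (1 - O.σ)) a
    rw [sub_add_cancel] at this
    change S.e m (O.g a) = 0
    rw [← this, ha _ (by omega), map_zero]
  · refine fg_of_le (N' := (S.Ege n).map f) ?_ ((h n).map f)
    rintro a ⟨ha, ha2⟩
    obtain ⟨b, hb⟩ := O.g_ker (show O.g a = 0 from ha2)
    obtain ⟨s, hs⟩ := O.K.exists_sum_e a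
    rw [hs s subset_rfl]
    refine sum_mem fun m _ => ?_
    by_cases hm : m < n
    · rw [ha m hm]; exact zero_mem _
    · refine ⟨S.e m b, e_mem_Ege (by omega), ?_⟩
      change O.f (S.e m b) = _
      rw [O.f_e, hb]

end K
end LS
end SG

namespace SG
set_option linter.unusedSectionVars false
set_option linter.unusedVariables false
set_option linter.style.haveILetI false
set_option linter.unusedSimpArgs false

/-- summed growth -/
def HG (l : ℤ → ℕ) (t : ℕ) : Prop :=
  ∃ a : ℕ, ∀ N : ℕ, ∑ m ∈ Finset.range (N+1), l (m : ℤ) ≤ a * (N+1)^t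

lemma num_one {l k : ℤ → ℕ} {σ n2 t : ℕ} (hσ : 0 < σ)
    (h2 : ∀ n : ℤ, (n2 : ℤ) ≤ n → k n + l (n - σ) ≤ l n) (h : HG l (t+1)) : HG k t := by
  obtain ⟨a, ha⟩ := h
  set W : ℕ → ℕ := fun N => ∑ i ∈ Finset.range σ, l ((N:ℤ) - i) with hW
  have hWs : ∀ N : ℕ, W (N+1) + l ((N:ℤ) + 1 - σ) = W N + l ((N:ℤ)+1) := by
    intro N
    have e1 := Finset.sum_range_succ (fun i : ℕ => l ((N:ℤ) + 1 - i)) σ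
    have e2 := Finset.sum_range_succ' (fun i : ℕ => l ((N:ℤ) + 1 - i)) σ
    simp only [hW]
    push_cast at e1 e2 ⊢
    rw [e1] at e2
    rw [e2]
    simp only [sub_zero]
    congr 1
    apply Finset.sum_congr rfl
    intro i _
    congr 1
    ring
  have hWk : ∀ N : ℕ, n2 ≤ N + 1 → W N + k ((N:ℤ)+1) ≤ W (N+1) := by
    intro N hN
    have := hWs N
    have := h2 ((N:ℤ)+1) (by exact_mod_cast hN)
    omega
  have hmono : ∀ N i : ℕ, n2 ≤ N → W N ≤ W (N+i) := by
    intro N i hN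
    induction i with
    | zero => rfl
    | succ i ih =>
      have := hWk (N+i) (by omega)
      have e : N + (i+1) = N + i + 1 := by ring
      rw [e]
      omega
  set c0 := ∑ m ∈ Finset.range (n2 + σ + 1), k (m:ℤ) with hc0
  have hk : ∀ i : ℕ, ∑ m ∈ Finset.range (n2 + σ + i + 1), k (m:ℤ) ≤ c0 + W (n2 + σ + i) := by
    intro i
    induction i with
    | zero => simp only [Nat.add_zero]; rw [hc0]; exact Nat.le_add_right _ _
    | succ i ih =>
      have := hWk (n2+σ+i) (by omega)
      have e : n2 + σ + (i+1) + 1 = (n2 + σ + i + 1) + 1 := by ring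
      rw [e, Finset.sum_range_succ]
      push_cast at this ⊢
      have e : n2 + σ + (i+1) = n2 + σ + i + 1 := by ring
      rw [e]
      omega
  have hWb : ∀ N : ℕ, n2 + σ ≤ N → W N ≤ σ * a * 2^(t+1) * (N+1)^t := by
    intro N hN
    have h1 : (N+1) * W N ≤ ∑ i ∈ Finset.range (N+1), W (N+i) := by
      have := Finset.sum_le_sum (s := Finset.range (N+1)) (f := fun _ => W N)
        (g := fun i => W (N+i)) (fun i _ => hmono N i (by omega))
      simpa using this
    have h3 : ∑ i ∈ Finset.range (N+1), W (N+i) ≤ σ * (a * (2*N+1)^(t+1)) := by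
      simp only [hW]
      rw [Finset.sum_comm]
      have : ∀ i ∈ Finset.range σ, ∑ y ∈ Finset.range (N+1), l (((N+y : ℕ) : ℤ) - i)
          ≤ a * (2*N+1)^(t+1) := by
        intro i hi
        have hi := Finset.mem_range.1 hi
        refine le_trans ?_ (le_trans (ha (2*N)) (by push_cast; rfl))
        have : ∑ y ∈ Finset.range (N+1), l (((N+y : ℕ) : ℤ) - i)
          = ∑ m ∈ (Finset.range (N+1)).image (fun y => N + y - i), l (m:ℤ) := by
          rw [Finset.sum_image]
          · apply Finset.sum_congr rfl
            intro y _
            congr 1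
            push_cast [show i ≤ N + y by omega]
            rfl
          · intro y _ y' _ hy
            simp only at hy
            omega
        rw [this]
        apply Finset.sum_le_sum_of_subset
        intro m hm
        simp only [Finset.mem_image, Finset.mem_range] at hm ⊢
        omega
      have := Finset.sum_le_sum this
      simpa using this
    have h4 : (2*N+1)^(t+1) ≤ 2^(t+1) * (N+1)^(t+1) := by
      rw [← mul_pow]
      exact Nat.pow_le_pow_left (by omega) _
    have h5 : (N+1) * W N ≤ (N+1) * (σ * a * 2^(t+1) * (N+1)^t) := by
      calc _ ≤ _ := h1
        _ ≤ _ := h3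
        _ ≤ σ * (a * (2^(t+1) * (N+1)^(t+1))) := by gcongr
        _ = _ := by ring
    exact Nat.le_of_mul_le_mul_left h5 (by omega)
  refine ⟨c0 + σ * a * 2^(t+1), fun N => ?_⟩
  have hp : 1 ≤ (N+1)^t := Nat.one_le_pow _ _ (by omega)
  rcases le_total N (n2+σ) with hN | hN
  · have : ∑ m ∈ Finset.range (N+1), k (m:ℤ) ≤ c0 :=
      Finset.sum_le_sum_of_subset (Finset.range_mono (by omega))
    nlinarith [Nat.zero_le (σ * a * 2^(t+1) * (N+1)^t)]
  · obtain ⟨i, rfl⟩ := Nat.exists_eq_add_of_le hN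
    have := hk i
    have := hWb _ hN
    nlinarith

lemma num_two {l k : ℤ → ℕ} {σ t : ℕ} (hσ : 0 < σ)
    (h1 : ∀ n : ℤ, l n ≤ l (n + σ) + k (n + σ - 1))
    (h : ∃ a : ℕ, ∀ N : ℕ, ∑ m ∈ Finset.range (N+1), k (-(m : ℤ)) ≤ a * (N+1)^t) :
    ∃ a : ℕ, ∀ m : ℕ, l (-(m:ℤ)) ≤ a * (m+1)^t := by
  obtain ⟨a, ha⟩ := h
  set c0 := ∑ m ∈ Finset.range (σ+1), l (m:ℤ) with hc0
  have hl : ∀ m : ℕ, l ((σ:ℤ) - m) ≤ c0 + ∑ i ∈ Finset.range m, k ((σ:ℤ) - 1 - i) := by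
    intro m
    induction m using Nat.strong_induction_on with
    | _ m ih =>
      rcases le_or_gt m σ with hm | hm
      · have : l ((σ:ℤ) - m) ≤ c0 := by
          have := Finset.single_le_sum (f := fun m : ℕ => l (m:ℤ)) (s := Finset.range (σ+1))
            (fun _ _ => Nat.zero_le _) (a := σ - m) (Finset.mem_range.2 (by omega))
          simp only [Nat.cast_sub hm] at this
          exact this
        omega
      · obtain ⟨q, rfl⟩ := Nat.exists_eq_add_of_lt hm
        have e := ih (q+1) (by omega)
        have e2 := h1 ((σ:ℤ) - ((σ + q + 1 : ℕ):ℤ))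
        have e3 : (σ:ℤ) - ((σ + q + 1 : ℕ):ℤ) + σ = (σ:ℤ) - ((q+1 : ℕ):ℤ) := by push_cast; ring
        rw [e3] at e2
        have e4 : (σ:ℤ) - ((q+1:ℕ):ℤ) - 1 = (σ:ℤ) - 1 - ((q+1 : ℕ):ℤ) := by ring
        rw [e4] at e2
        have e5 : ∑ i ∈ Finset.range (q+2), k ((σ:ℤ) - 1 - i)
          ≤ ∑ i ∈ Finset.range (σ+q+1), k ((σ:ℤ) - 1 - i) :=
          Finset.sum_le_sum_of_subset (Finset.range_mono (by omega))
        rw [Finset.sum_range_succ] at e5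
        omega
  set c1 := ∑ i ∈ Finset.range σ, k ((σ:ℤ) - 1 - i)
  refine ⟨c0 + c1 + a, fun m => ?_⟩
  have hp : 1 ≤ (m+1)^t := Nat.one_le_pow _ _ (by omega)
  have e := hl (σ + m)
  have e1 : (σ:ℤ) - ((σ+m:ℕ):ℤ) = -(m:ℤ) := by push_cast; ring
  rw [e1, Finset.sum_range_add] at e
  have e2 : ∑ i ∈ Finset.range m, k ((σ:ℤ) - 1 - ((σ+i:ℕ):ℤ))
      ≤ ∑ i ∈ Finset.range (m+1), k (-(i:ℤ)) := by
    rw [Finset.sum_range_succ']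
    refine le_trans (le_of_eq ?_) (Nat.le_add_right _ _)
    apply Finset.sum_congr rfl
    intro i _
    congr 1
    push_cast
    ring
  have e3 := ha m
  have hc1 : ∑ i ∈ Finset.range σ, k ((σ:ℤ) - 1 - i) = c1 := rfl
  rw [hc1] at e
  have e4 : l (-(m:ℤ)) ≤ c0 + c1 + a * (m+1)^t := by omega
  calc _ ≤ _ := e4
    _ ≤ (c0 + c1) * (m+1)^t + a * (m+1)^t := by gcongr; exact Nat.le_mul_of_pos_right _ hp
    _ = _ := by ring

namespace LS
variable {B : Type u} [CommRing B] {x : ℕ → B} {c j : ℕ}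
variable [IsLocalRing B] [RegSeq x c] [IsNoetherianRing B]

/-- graded length -/
noncomputable def ell (S : LS x c j) (n : ℤ) : ℕ :=
  (Module.length B (LinearMap.range (S.e n))).toNat

lemma m_kill (S : LS x c j) (r : B) (hr : r ∈ maximalIdeal B) (a : S.E) : r • a = 0 := by
  obtain ⟨z, rfl⟩ := S.cl_surj a
  rw [← map_smul]
  rw [S.cl_eq_zero]
  apply S.mF_le_Bd
  exact Submodule.smul_mem_smul hr trivial

lemma len_gen {M : Type*} [AddCommGroup M] [Module B M] [IsNoetherian B M]
    (h : ∀ r ∈ maximalIdeal B, ∀ a : M, r • a = 0) : Module.length B M ≠ ⊤ := by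
  have ht : Module.IsTorsionBySet B M (maximalIdeal B : Set B) := fun a r => h r.1 r.2 a
  letI : Module (B ⧸ maximalIdeal B) M := ht.module
  haveI : IsScalarTower B (B ⧸ maximalIdeal B) M := ht.isScalarTower
  letI : Field (B ⧸ maximalIdeal B) := Ideal.Quotient.field _
  haveI : Module.Finite (B ⧸ maximalIdeal B) M := Module.Finite.of_restrictScalars_finite B _ _
  haveI : IsArtinian (B ⧸ maximalIdeal B) M := inferInstance
  haveI : IsArtinian B M :=
    isArtinian_of_surjective_algebraMap (R := B ⧸ maximalIdeal B) Ideal.Quotient.mk_surjective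
  exact Module.length_ne_top

lemma len_ne_top (S : LS x c j) (n : ℤ) : Module.length B (LinearMap.range (S.e n)) ≠ ⊤ := by
  haveI := S.range_e_fg n
  apply len_gen
  intro r hr a
  ext
  exact S.m_kill r hr a

lemma ell_coe (S : LS x c j) (n : ℤ) :
    (S.ell n : ℕ∞) = Module.length B (LinearMap.range (S.e n)) :=
  ENat.coe_toNat (S.len_ne_top n)

lemma len_one {M N P : Type*} [AddCommGroup M] [Module B M] [AddCommGroup N] [Module B N]
    [AddCommGroup P] [Module B P] (φ : M →ₗ[B] N) (ψ : P →ₗ[B] M)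
    (h : LinearMap.ker φ ≤ LinearMap.range ψ) :
    Module.length B M ≤ Module.length B N + Module.length B P := by
  rw [Module.length_eq_add_of_exact (LinearMap.ker φ).subtype φ.rangeRestrict
    (Submodule.subtype_injective _) φ.surjective_rangeRestrict (by
      rw [LinearMap.exact_iff]; simp), add_comm]
  gcongr
  · exact Module.length_le_of_injective (LinearMap.range φ).subtype (Submodule.subtype_injective _)
  · exact (Module.length_le_of_injective _ (Submodule.inclusion_injective h)).trans
      (Module.length_le_of_surjective ψ.rangeRestrict ψ.surjective_rangeRestrict)

lemma len_two {M N P : Type*} [AddCommGroup M] [Module B M] [AddCommGroup N] [Module B N]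
    [AddCommGroup P] [Module B P] (φ : M →ₗ[B] N) (ψ : P →ₗ[B] M)
    (h : ∀ a, φ (ψ a) = 0) (hψ : Function.Injective ψ) (hφ : Function.Surjective φ) :
    Module.length B N + Module.length B P ≤ Module.length B M := by
  rw [Module.length_eq_add_of_exact (LinearMap.ker φ).subtype φ
    (Submodule.subtype_injective _) hφ (by
      rw [LinearMap.exact_iff]; simp), add_comm]
  gcongr
  exact Module.length_le_of_injective (ψ.codRestrict (LinearMap.ker φ) h) (by
    intro a b hab
    exact hψ (congrArg Subtype.val hab))

lemma range_e_iff (S : LS x c j) {n : ℤ} {a : S.E} :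
    a ∈ LinearMap.range (S.e n) ↔ S.e n a = a := by
  constructor
  · rintro ⟨b, rfl⟩
    exact S.e_self n b
  · intro h
    exact ⟨a, h⟩

lemma Op.ineq_one {S : LS x c j} (O : S.Op) (n : ℤ) :
    S.ell n ≤ S.ell (n + O.σ) + O.K.ell (n + O.σ - 1) := by
  have ht : ∀ a ∈ LinearMap.range (S.e n), O.t a ∈ LinearMap.range (S.e (n + O.σ)) := by
    rintro _ ⟨b, rfl⟩
    rw [O.t_e]
    exact ⟨_, rfl⟩
  have hgd : n + O.σ - 1 + (1 - O.σ) = n := by ring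
  have hg : ∀ a ∈ LinearMap.range (O.K.e (n + O.σ - 1)), O.g a ∈ LinearMap.range (S.e n) := by
    rintro _ ⟨b, rfl⟩
    rw [O.g_e, hgd]
    exact ⟨_, rfl⟩
  have := len_one (O.t.restrict ht) (O.g.restrict hg) (by
    rintro ⟨a, ha⟩ h
    have h : O.t a = 0 := congrArg Subtype.val h
    obtain ⟨b, rfl⟩ := O.t_ker h
    refine ⟨⟨O.K.e (n + O.σ - 1) b, ⟨_, rfl⟩⟩, ?_⟩
    apply Subtype.ext
    change O.g (O.K.e (n + O.σ - 1) b) = O.g b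
    rw [O.g_e, hgd]
    exact S.range_e_iff.1 ha)
  rw [← ell_coe, ← ell_coe, ← ell_coe] at this
  exact_mod_cast this

lemma Op.ineq_two {S : LS x c j} (O : S.Op) {n1 : ℤ}
    (hi : ∀ a ∈ S.Ege n1, O.t a = 0 → a = 0) (n : ℤ) (hn : n1 + O.σ ≤ n) (hn' : n1 ≤ n + (1 - O.σ)) :
    O.K.ell n + S.ell (n - O.σ) ≤ S.ell n := by
  have htd : n - O.σ + O.σ = n := by ring
  have ht : ∀ a ∈ LinearMap.range (S.e (n - O.σ)), O.t a ∈ LinearMap.range (S.e n) := by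
    rintro _ ⟨b, rfl⟩
    rw [O.t_e, htd]
    exact ⟨_, rfl⟩
  have hf : ∀ a ∈ LinearMap.range (S.e n), O.f a ∈ LinearMap.range (O.K.e n) := by
    rintro _ ⟨b, rfl⟩
    rw [O.f_e]
    exact ⟨_, rfl⟩
  have := len_two (O.f.restrict hf) (O.t.restrict ht) (by
      rintro ⟨a, ha⟩
      exact Subtype.ext (O.f_t a)) (by
      rw [← LinearMap.ker_eq_bot, LinearMap.ker_eq_bot']
      rintro ⟨a, ha⟩ h
      have h : O.t a = 0 := congrArg Subtype.val h
      apply Subtype.ext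
      refine hi a ?_ h
      rw [← S.range_e_iff.1 ha]
      exact e_mem_Ege (by omega)) (by
      rintro ⟨a, ha⟩
      have h0 : O.g a = 0 := by
        refine hi _ ?_ (O.t_g a)
        rw [← O.K.range_e_iff.1 ha, O.g_e]
        exact e_mem_Ege (by omega)
      obtain ⟨b, rfl⟩ := O.g_ker h0
      refine ⟨⟨S.e n b, ⟨_, rfl⟩⟩, Subtype.ext ?_⟩
      change O.f (S.e n b) = O.f b
      rw [O.f_e]
      exact O.K.range_e_iff.1 ha)
  rw [← ell_coe, ← ell_coe, ← ell_coe] at this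
  exact_mod_cast this

lemma Van_of_ell (S : LS x c j) {n : ℤ} (h : S.ell n = 0) : S.Van n := by
  rw [Van_iff]
  intro a
  have h2 := S.ell_coe n
  rw [h] at h2
  have := Module.length_eq_zero_iff.1 h2.symm
  exact congrArg Subtype.val (Subsingleton.elim (⟨S.e n a, ⟨_, rfl⟩⟩ : LinearMap.range (S.e n)) 0)

lemma ell_of_Van (S : LS x c j) {n : ℤ} (h : S.Van n) : S.ell n = 0 := by
  rw [Van_iff] at h
  have : Subsingleton (LinearMap.range (S.e n)) := by
    constructor
    rintro ⟨_, a, rfl⟩ ⟨_, b, rfl⟩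
    apply Subtype.ext
    change S.e n a = S.e n b
    rw [h, h]
  unfold ell
  rw [Module.length_eq_zero]
  rfl

lemma growth_zero (S : LS x c j) (h : S.Ex) (hg : HG S.ell 0) (n : ℤ) : S.ell n = 0 := by
  apply ell_of_Van
  obtain ⟨a, ha⟩ := hg
  simp only [pow_zero, mul_one] at ha
  suffices ∃ n0 : ℕ, ∀ m : ℕ, n0 ≤ m → S.ell (m:ℤ) = 0 by
    obtain ⟨n0, hn0⟩ := this
    refine S.bounded_zero h (n0 := n0) ?_ n
    intro m hm
    apply Van_of_ell
    lift m to ℕ using by omega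
    exact hn0 m (by exact_mod_cast hm)
  by_contra! hc
  have : ∀ k : ℕ, ∃ N : ℕ, k ≤ ∑ m ∈ Finset.range (N+1), S.ell (m:ℤ) := by
    intro k
    induction k with
    | zero => exact ⟨0, Nat.zero_le _⟩
    | succ k ih =>
      obtain ⟨N, hN⟩ := ih
      obtain ⟨m, hm, hm0⟩ := hc (N+1)
      refine ⟨m, ?_⟩
      rw [Finset.sum_range_succ]
      have : ∑ m ∈ Finset.range (N+1), S.ell (m:ℤ) ≤ ∑ m ∈ Finset.range m, S.ell (m:ℤ) :=
        Finset.sum_le_sum_of_subset (Finset.range_mono hm)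
      omega
  obtain ⟨N, hN⟩ := this (a+1)
  have := ha N
  omega

/-- the growth theorem -/
lemma growth (t : ℕ) : ∀ (S : LS x c j), S.Ex → S.FG → HG S.ell (t+1) →
    ∃ a : ℕ, ∀ m : ℕ, S.ell (-(m:ℤ)) ≤ a * (m+1)^t := by
  induction t with
  | zero =>
    intro S h hF hg
    obtain ⟨s, hs, Z, hZ, hZ', n1, hi, -⟩ := exists_regular S hF
    let O : S.Op := ⟨Z, 2*s, hZ, hZ'⟩
    have hk : HG O.K.ell 0 := by
      refine num_one (σ := 2*s) (n2 := (n1 + 2 * s).toNat) (by omega) (fun n hn => ?_) hg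
      have := O.ineq_two hi n (by change n1 + 2 * (s:ℤ) ≤ n; omega) (by
        change n1 ≤ n + (1 - 2 * (s:ℤ)); omega)
      exact_mod_cast this
    have hk0 := O.K.growth_zero (O.K_Ex h) hk
    refine num_two (σ := 2*s) (k := O.K.ell) (by omega) (fun n => ?_) ⟨0, fun N => ?_⟩
    · exact_mod_cast O.ineq_one n
    · simp [hk0]
  | succ t ih =>
    intro S h hF hg
    obtain ⟨s, hs, Z, hZ, hZ', n1, hi, -⟩ := exists_regular S hF
    let O : S.Op := ⟨Z, 2*s, hZ, hZ'⟩
    have hk : HG O.K.ell (t+1) := by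
      refine num_one (σ := 2*s) (n2 := (n1 + 2 * s).toNat) (by omega) (fun n hn => ?_) hg
      have := O.ineq_two hi n (by change n1 + 2 * (s:ℤ) ≤ n; omega) (by
        change n1 ≤ n + (1 - 2 * (s:ℤ)); omega)
      exact_mod_cast this
    obtain ⟨a, ha⟩ := ih O.K (O.K_Ex h) (O.K_FG hF) hk
    refine num_two (σ := 2*s) (k := O.K.ell) (by omega) (fun n => ?_) ⟨a, fun N => ?_⟩
    · exact_mod_cast O.ineq_one n
    · calc _ ≤ ∑ m ∈ Finset.range (N+1), a * (N+1)^t := by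
            apply Finset.sum_le_sum
            intro m hm
            refine (ha m).trans ?_
            have := Finset.mem_range.1 hm
            gcongr
            omega
        _ = _ := by simp; ring

end LS
end SG

namespace SG
set_option linter.unusedSectionVars false
set_option linter.unusedVariables false
set_option linter.style.haveILetI false
set_option linter.unusedSimpArgs false

lemma num_fin (l : ℤ → ℕ) (h0 : HG l 0 → ∀ n, l n = 0)
    (h1 : ∀ t, HG l (t+1) → ∃ a : ℕ, ∀ m : ℕ, l (-(m:ℤ)) ≤ a * (m+1)^t) :
    complexityPlus (fun n => l (-n)) ≤ complexityPlus l := by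
  unfold complexityPlus
  apply sInf_le_sInf
  rintro _ ⟨s, rfl, a, ha⟩
  refine ⟨s, rfl, ?_⟩
  obtain ⟨N0, hN0⟩ := eventually_atTop.1 ha
  cases s with
  | zero =>
    have hz : ∀ n, l n = 0 := by
      apply h0
      obtain ⟨N1, hN1⟩ := exists_nat_gt (max a 0)
      refine ⟨∑ m ∈ Finset.range (N0 + N1 + 1), l (m:ℤ), fun N => ?_⟩
      simp only [pow_zero, mul_one]
      rcases le_total N (N0+N1) with h | h
      · exact Finset.sum_le_sum_of_subset (Finset.range_mono (by omega))
      · apply le_of_eq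
        symm
        apply Finset.sum_subset (Finset.range_mono (by omega))
        intro m _ hm
        have hm : N0 + N1 + 1 ≤ m := by simpa using hm
        have h2 := hN0 m (by omega)
        have hm1 : max a 0 < (m:ℝ) := hN1.trans_le (by exact_mod_cast (by omega : N1 ≤ m))
        have hmp : (0:ℝ) < m := (le_max_right _ _).trans_lt hm1
        have h3 : a * (m:ℝ) ^ (((0:ℕ):ℤ) - 1) < 1 := by
          simp only [Nat.cast_zero, zero_sub, zpow_neg_one]
          rw [← div_eq_mul_inv, div_lt_one hmp]
          exact (le_max_left _ _).trans_lt hm1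
        have h4 : (l (m:ℤ) : ℝ) < 1 := h2.trans_lt h3
        have : l (m:ℤ) < 1 := by exact_mod_cast h4
        omega
    refine ⟨0, Eventually.of_forall fun n => ?_⟩
    simp [hz]
  | succ t =>
    have hg : HG l (t+1) := by
      obtain ⟨a', ha'⟩ := exists_nat_gt a
      have hb : ∀ m : ℕ, N0 ≤ m → l (m:ℤ) ≤ a' * (m+1)^t := by
        intro m hm
        have h2 := hN0 m hm
        have e : (m:ℝ) ^ (((t+1:ℕ):ℤ) - 1) = (m:ℝ)^t := by
          rw [show (((t+1:ℕ):ℤ) - 1) = (t:ℤ) by push_cast; ring, zpow_natCast]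
        rw [e] at h2
        have : (l (m:ℤ) : ℝ) ≤ a' * (m+1)^t := by
          refine h2.trans ?_
          gcongr
          linarith
        exact_mod_cast this
      set c0 := ∑ m ∈ Finset.range N0, l (m:ℤ)
      refine ⟨c0 + a', fun N => ?_⟩
      have h3 : ∀ m ∈ Finset.range (N+1), l (m:ℤ) ≤ (c0 + a') * (N+1)^t := by
        intro m hm
        have hm := Finset.mem_range.1 hm
        rcases le_or_gt N0 m with h | h
        · refine (hb m h).trans ?_
          gcongr <;> omega
        · have : l (m:ℤ) ≤ c0 := Finset.single_le_sum (f := fun m : ℕ => l (m:ℤ))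
            (fun _ _ => Nat.zero_le _) (Finset.mem_range.2 h)
          calc _ ≤ c0 + a' := by omega
            _ ≤ _ := Nat.le_mul_of_pos_right _ (by positivity)
      refine (Finset.sum_le_sum h3).trans (le_of_eq ?_)
      simp
      ring
    obtain ⟨b, hb⟩ := h1 t hg
    refine ⟨b * 2^t, eventually_atTop.2 ⟨1, fun n hn => ?_⟩⟩
    have e : (n:ℝ) ^ (((t+1:ℕ):ℤ) - 1) = (n:ℝ)^t := by
      rw [show (((t+1:ℕ):ℤ) - 1) = (t:ℤ) by push_cast; ring, zpow_natCast]
    rw [e]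
    have h5 : (l (-(n:ℤ)) : ℝ) ≤ b * (n+1)^t := by exact_mod_cast hb n
    refine h5.trans ?_
    rw [mul_assoc, ← mul_pow]
    have : (1:ℝ) ≤ n := by exact_mod_cast hn
    gcongr
    linarith

open Matrix

/-- a totally acyclic cochain complex given by matrices -/
structure CC (R : Type u) [CommRing R] where
  r : ℤ → ℕ
  m : ∀ n : ℤ, Matrix (Fin (r (n+1))) (Fin (r n)) R
  ex : ∀ n v, m (n+1) *ᵥ v = 0 ↔ ∃ w, m n *ᵥ w = v
  dex : ∀ n v, v ᵥ* m n = 0 ↔ ∃ w, w ᵥ* m (n+1) = v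

section flat
variable {A A' : Type u} [CommRing A] [CommRing A'] [Algebra A A']

lemma psr_mat {k l : ℕ} (M : Matrix (Fin l) (Fin k) A) (t : A' ⊗[A] (Fin k → A)) :
    TensorProduct.piScalarRight A A' A' (Fin l) (M.mulVecLin.lTensor A' t) =
      M.map (algebraMap A A') *ᵥ TensorProduct.piScalarRight A A' A' (Fin k) t := by
  induction t with
  | zero => simp
  | add a b ha hb => rw [map_add, map_add, ha, hb, map_add, mulVec_add]
  | tmul a v =>
    ext i
    simp [mulVec, dotProduct, Finset.sum_smul, Algebra.smul_def, Finset.mul_sum, Finset.sum_mul, mul_assoc]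

lemma flat_exact [Module.Flat A A'] {k l q : ℕ} {M : Matrix (Fin l) (Fin k) A} {N : Matrix (Fin q) (Fin l) A}
    (h : ∀ v, N *ᵥ v = 0 ↔ ∃ w, M *ᵥ w = v) (v : Fin l → A') :
    N.map (algebraMap A A') *ᵥ v = 0 ↔ ∃ w, M.map (algebraMap A A') *ᵥ w = v := by
  have hex : Function.Exact (M.mulVecLin.lTensor A') (N.mulVecLin.lTensor A') := by
    apply Module.Flat.lTensor_exact
    intro v
    rw [mulVecLin_apply, h]
    rfl
  obtain ⟨t, rfl⟩ := (TensorProduct.piScalarRight A A' A' (Fin l)).surjective v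
  rw [← psr_mat, LinearEquiv.map_eq_zero_iff, hex t]
  constructor
  · rintro ⟨s, rfl⟩
    exact ⟨_, (psr_mat _ _).symm⟩
  · rintro ⟨w, hw⟩
    obtain ⟨s, rfl⟩ := (TensorProduct.piScalarRight A A' A' (Fin k)).surjective w
    rw [← psr_mat] at hw
    exact ⟨s, (TensorProduct.piScalarRight A A' A' (Fin l)).injective hw⟩

/-- flat base change -/
def CC.map (X : CC A) (A' : Type u) [CommRing A'] [Algebra A A'] [Module.Flat A A'] : CC A' where
  r := X.r
  m n := (X.m n).map (algebraMap A A')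
  ex n v := flat_exact (X.ex n) v
  dex n v := by
    have := flat_exact (A' := A') (M := (X.m (n+1))ᵀ) (N := (X.m n)ᵀ) (by
      intro v
      simp only [mulVec_transpose]
      exact X.dex n v) v
    simp only [transpose_map, mulVec_transpose] at this
    exact this

/-- presentation of a base changed module -/
noncomputable def prs {k : ℕ} {N : Type u} [AddCommGroup N] [Module A N] (q : (Fin k → A) →ₗ[A] N) :
    (Fin k → A') →ₗ[A'] A' ⊗[A] N :=
  (q.baseChange A') ∘ₗ (TensorProduct.piScalarRight A A' A' (Fin k)).symm.toLinearMap

lemma prs_surj {k : ℕ} {N : Type u} [AddCommGroup N] [Module A N] (q : (Fin k → A) →ₗ[A] N)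
    (h : Function.Surjective q) : Function.Surjective (prs (A' := A') q) := by
  unfold prs
  rw [LinearMap.coe_comp]
  exact (LinearMap.lTensor_surjective A' h).comp (LinearEquiv.surjective _)

lemma prs_ker [Module.Flat A A'] {k l : ℕ} {N : Type u} [AddCommGroup N] [Module A N] (q : (Fin k → A) →ₗ[A] N)
    (i : N →ₗ[A] (Fin l → A)) (hi : Function.Injective i) (M : Matrix (Fin l) (Fin k) A)
    (h : i ∘ₗ q = M.mulVecLin) (v : Fin k → A') :
    prs q v = 0 ↔ M.map (algebraMap A A') *ᵥ v = 0 := by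
  obtain ⟨t, rfl⟩ := (TensorProduct.piScalarRight A A' A' (Fin k)).surjective v
  rw [← psr_mat, LinearEquiv.map_eq_zero_iff, ← h]
  have : prs q (TensorProduct.piScalarRight A A' A' (Fin k) t) = q.lTensor A' t := by
    unfold prs
    rw [LinearMap.comp_apply, LinearEquiv.coe_coe, LinearEquiv.symm_apply_apply]
    rfl
  rw [this, LinearMap.lTensor_comp, LinearMap.comp_apply,
    map_eq_zero_iff _ (Module.Flat.lTensor_preserves_injective_linearMap i hi)]
end flat

end SG

namespace SG
set_option linter.unusedSectionVars false
set_option linter.unusedVariables false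
set_option linter.style.haveILetI false
set_option linter.unusedSimpArgs false

open Matrix

section lift
variable {B A' : Type u} [CommRing B] [IsLocalRing B] [CommRing A'] {x : ℕ → B} {c : ℕ} [RegSeq x c]
  {g : B →+* A'} (hg : Function.Surjective g) (X : CC A')

/-- index set -/
abbrev CC.I (X : CC A') : Type := Σ n : ℤ, Fin (X.r n)

/-- underlying module of the lift -/
abbrev CC.Fr (X : CC A') (B : Type u) [CommRing B] : Type u := X.I →₀ B

/-- the basis -/
noncomputable abbrev CC.bs (X : CC A') (B : Type u) [CommRing B] : Module.Basis X.I B (X.Fr B) := Finsupp.basisSingleOne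

/-- homogeneous vector -/
noncomputable def CC.hv (X : CC A') (B : Type u) [CommRing B] (n : ℤ) : (Fin (X.r n) → B) →ₗ[B] X.Fr B :=
  Fintype.linearCombination B (fun k => X.bs B ⟨n, k⟩)

lemma CC.hv_apply (n : ℤ) (v : Fin (X.r n) → B) : X.hv B n v = ∑ k, v k • X.bs B ⟨n, k⟩ := rfl

lemma CC.hv_same (n : ℤ) (v : Fin (X.r n) → B) (k) : X.hv B n v ⟨n, k⟩ = v k := by
  classical
  rw [hv_apply, Finsupp.finset_sum_apply]
  simp [Finsupp.single_apply]

lemma CC.hv_ne {n q : ℤ} (h : n ≠ q) (v : Fin (X.r n) → B) (k) : X.hv B n v ⟨q, k⟩ = 0 := by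
  classical
  rw [hv_apply, Finsupp.finset_sum_apply]
  simp [Finsupp.single_apply, h]

/-- lifted differential -/
noncomputable def CC.dF (X : CC A') {g : B →+* A'} (hg : Function.Surjective g) : X.Fr B →ₗ[B] X.Fr B :=
  (X.bs B).constr B (fun i => X.hv B (i.1+1) (fun k => Function.surjInv hg (X.m i.1 k i.2)))

lemma CC.dF_basis (n : ℤ) (i : Fin (X.r n)) : X.dF hg (X.bs B ⟨n, i⟩) =
    X.hv B (n+1) (fun k => Function.surjInv hg (X.m n k i)) := by
  unfold CC.dF
  rw [Module.Basis.constr_basis]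

/-- reduction -/
def CC.vec (X : CC A') (g : B →+* A') (v : X.Fr B) (n : ℤ) : Fin (X.r n) → A' := fun k => g (v ⟨n, k⟩)

lemma CC.vec_add (v w : X.Fr B) (n : ℤ) : X.vec g (v + w) n = X.vec g v n + X.vec g w n := by
  ext k; simp [CC.vec]
lemma CC.vec_sub (v w : X.Fr B) (n : ℤ) : X.vec g (v - w) n = X.vec g v n - X.vec g w n := by
  ext k; simp [CC.vec]
lemma CC.vec_smul (b : B) (v : X.Fr B) (n : ℤ) : X.vec g (b • v) n = g b • X.vec g v n := by
  ext k; simp [CC.vec]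

lemma CC.vec_hv_same (n : ℤ) (v : Fin (X.r n) → B) : X.vec g (X.hv B n v) n = fun k => g (v k) := by
  ext k; simp [CC.vec, hv_same]
lemma CC.vec_hv_ne {n q : ℤ} (h : n ≠ q) (v : Fin (X.r n) → B) : X.vec g (X.hv B n v) q = 0 := by
  ext k; simp [CC.vec, hv_ne X h]

lemma CC.mem_II (hk : ∀ b, g b = 0 ↔ b ∈ II x c B) {v : X.Fr B} : v ∈ II x c (X.Fr B) ↔ ∀ n, X.vec g v n = 0 := by
  rw [basis_mem_II (X.bs B)]
  constructor
  · intro h n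
    ext k
    exact (hk _).2 (h ⟨n, k⟩)
  · rintro h ⟨n, k⟩
    exact (hk _).1 (congrFun (h n) k)

lemma CC.prj_apply (n : ℤ) (v : X.Fr B) (i : X.I) :
    prj (X.bs B) Sigma.fst n v i = if i.1 = n then v i else 0 := by
  classical
  have : Finsupp.lapply i ∘ₗ prj (X.bs B) Sigma.fst n =
     if i.1 = n then Finsupp.lapply i else (0 : X.Fr B →ₗ[B] B) := by
    refine (X.bs B).ext fun q => ?_
    rw [LinearMap.comp_apply, prj_basis]
    by_cases h : q = i
    · subst h
      split_ifs <;> simp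
    · split_ifs <;> simp [Finsupp.single_apply, h]
  have := LinearMap.congr_fun this v
  rw [LinearMap.comp_apply] at this
  refine this.trans ?_
  split_ifs <;> rfl

lemma CC.prj_hv (n : ℤ) (v : Fin (X.r n) → B) : prj (X.bs B) Sigma.fst n (X.hv B n v) = X.hv B n v := by
  ext ⟨q, k⟩
  rw [prj_apply]
  split_ifs with h
  · rfl
  · rw [hv_ne X (Ne.symm h)]

lemma CC.prj_eq_hv (n : ℤ) (v : X.Fr B) : prj (X.bs B) Sigma.fst n v = X.hv B n (fun k => v ⟨n, k⟩) := by
  ext ⟨q, k⟩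
  rw [prj_apply]
  split_ifs with h
  · obtain rfl : q = n := h
    rw [hv_same]
  · rw [hv_ne X (Ne.symm h)]

lemma CC.vec_prj (n : ℤ) (v : X.Fr B) : X.vec g (prj (X.bs B) Sigma.fst n v) n = X.vec g v n := by
  rw [prj_eq_hv, vec_hv_same]
  rfl

lemma CC.hd : HD (X.bs B) Sigma.fst 1 (X.dF hg) := by
  refine HD.of_basis fun i => ?_
  rw [X.dF_basis hg]
  exact X.prj_hv _ _

lemma CC.vec_d (v : X.Fr B) (n : ℤ) : X.vec g (X.dF hg v) (n+1) = X.m n *ᵥ X.vec g v n := by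
  induction v using Finsupp.induction_linear with
  | zero => ext k; simp [CC.vec, mulVec, dotProduct]
  | add v w hv hw => rw [map_add, vec_add, vec_add, hv, hw, mulVec_add]
  | single i a =>
    obtain ⟨q, i⟩ := i
    have e : Finsupp.single (⟨q, i⟩ : X.I) a = a • X.bs B ⟨q, i⟩ := by simp
    rw [e, map_smul, vec_smul, vec_smul, mulVec_smul, dF_basis]
    congr 1
    by_cases h : q = n
    · subst h
      rw [vec_hv_same]
      have : X.vec g (X.bs B ⟨q, i⟩) q = Pi.single i 1 := by
        classical
        ext k
        simp [CC.vec, Finsupp.single_apply, Pi.single_apply, apply_ite g, eq_comm]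
      rw [this, mulVec_single_one]
      ext k
      exact Function.surjInv_eq hg _
    · rw [vec_hv_ne X (by omega)]
      have : X.vec g (X.bs B ⟨q, i⟩) n = 0 := by
        classical
        ext k
        simp [CC.vec, Finsupp.single_apply, h]
      rw [this, mulVec_zero]

lemma CC.mm (n : ℤ) (v) : X.m (n+1) *ᵥ (X.m n *ᵥ v) = 0 := (X.ex n _).2 ⟨v, rfl⟩

lemma CC.dd_mem (hk : ∀ b, g b = 0 ↔ b ∈ II x c B) : X.dF hg ∘ₗ X.dF hg ∈ II x c (X.Fr B →ₗ[B] X.Fr B) := by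
  rw [hom_mem_II (X.bs B)]
  intro i
  rw [X.mem_II hk]
  intro n
  obtain ⟨n, rfl⟩ : ∃ q, n = q + 1 + 1 := ⟨n - 2, by ring⟩
  rw [LinearMap.comp_apply, vec_d, vec_d, mm]

/-- the lifted system -/
noncomputable def CC.LS (X : CC A') (hg : Function.Surjective g) (hk : ∀ b, g b = 0 ↔ b ∈ II x c B) : LS x c c where
  F := X.Fr B
  ι := X.I
  b := X.bs B
  deg := Sigma.fst
  fin n := by
    refine (Set.finite_range (fun k : Fin (X.r n) => (⟨n, k⟩ : X.I))).subset ?_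
    rintro ⟨q, k⟩ (rfl : q = n)
    exact ⟨k, rfl⟩
  hj := le_rfl
  d := X.dF hg
  χ i := if i < c then (((X.hd hg).comp (X.hd hg)).exists_coeff (X.dd_mem hg hk)).choose i else 0
  hd := X.hd hg
  hχ i := by
    split_ifs
    · exact ((((X.hd hg).comp (X.hd hg)).exists_coeff (X.dd_mem hg hk)).choose_spec.1 i).cast (by ring)
    · exact HD.zero _
  χ0 i hi := if_neg (by omega)
  dd v := by
    have := LinearMap.congr_fun (((X.hd hg).comp (X.hd hg)).exists_coeff (X.dd_mem hg hk)).choose_spec.2 v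
    rw [LinearMap.sum_apply] at this
    refine this.trans (Finset.sum_congr rfl fun i hi => ?_)
    rw [if_pos (Finset.mem_range.1 hi)]
    rfl

variable (hk : ∀ b, g b = 0 ↔ b ∈ II x c B)

lemma CC.LS_Ex : (X.LS hg hk).Ex := by
  intro v hv
  change X.Fr B at v
  change X.dF hg v ∈ II x c (X.Fr B) at hv
  change ∃ w : X.Fr B, v - X.dF hg w ∈ II x c (X.Fr B)
  have key : v ∈ LinearMap.range (X.dF hg) ⊔ II x c (X.Fr B) := by
    refine prj_mem_of (X.bs B) Sigma.fst _ fun n => ?_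
    obtain ⟨n, rfl⟩ : ∃ q, n = q + 1 := ⟨n - 1, by ring⟩
    rw [X.mem_II hk] at hv
    have h1 := hv (n+1+1)
    rw [vec_d, X.ex] at h1
    obtain ⟨w, hw⟩ := h1
    rw [← sub_add_cancel (prj (X.bs B) Sigma.fst (n+1) v) (X.dF hg (X.hv B n (fun k => Function.surjInv hg (w k))))]
    rw [add_comm]
    refine Submodule.add_mem_sup ⟨_, rfl⟩ ?_
    rw [X.mem_II hk]
    intro q
    obtain ⟨q, rfl⟩ : ∃ s, q = s + 1 := ⟨q - 1, by ring⟩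
    rw [vec_sub, vec_d, prj_eq_hv]
    by_cases h : n = q
    · subst h
      rw [vec_hv_same, vec_hv_same]
      simp only [Function.surjInv_eq]
      rw [hw]
      exact sub_self _
    · rw [vec_hv_ne X h, vec_hv_ne X (by omega), mulVec_zero, sub_zero]
  obtain ⟨_, ⟨w, rfl⟩, z, hz, rfl⟩ := Submodule.mem_sup.1 key
  exact ⟨w, by simpa using hz⟩

lemma CC.mem_W_aux (hk : ∀ b, g b = 0 ↔ b ∈ II x c B) {v : X.Fr B} {n : ℤ} :
    (∃ w : X.Fr B, prj (X.bs B) Sigma.fst n v - X.dF hg w ∈ II x c (X.Fr B)) ↔ X.m n *ᵥ X.vec g v n = 0 := by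
  constructor
  · rintro ⟨w, hw⟩
    rw [X.mem_II hk] at hw
    have := hw n
    obtain ⟨n, rfl⟩ : ∃ s, n = s + 1 := ⟨n - 1, by ring⟩
    rw [vec_sub, vec_prj, vec_d, sub_eq_zero] at this
    rw [this, mm]
  · intro h
    have : X.dF hg (prj (X.bs B) Sigma.fst n v) ∈ II x c (X.Fr B) := by
      rw [X.mem_II hk]
      intro q
      obtain ⟨q, rfl⟩ : ∃ s, q = s + 1 := ⟨q - 1, by ring⟩
      rw [vec_d]
      by_cases hq : n = q
      · subst hq
        rw [vec_prj, h]
      · rw [prj_eq_hv, vec_hv_ne X hq, mulVec_zero]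
    exact X.LS_Ex hg hk (prj (X.bs B) Sigma.fst n v) this

lemma CC.mem_W {v : (X.LS hg hk).F} {n : ℤ} : v ∈ (X.LS hg hk).W n ↔ X.m n *ᵥ X.vec g v n = 0 := by
  rw [SG.LS.mem_W]
  exact X.mem_W_aux hg hk

lemma CC.dual_comp (φ : X.Fr B →ₗ[B] B) (n : ℤ) (i : Fin (X.r n)) :
    g (φ (X.dF hg (X.bs B ⟨n, i⟩))) = ((fun k => g (φ (X.bs B ⟨n+1, k⟩))) ᵥ* X.m n) i := by
  rw [dF_basis, hv_apply, map_sum, map_sum]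
  simp only [vecMul, dotProduct]
  refine Finset.sum_congr rfl fun k _ => ?_
  rw [map_smul, smul_eq_mul, map_mul, Function.surjInv_eq hg, mul_comm]

lemma CC.LS_DEx : (X.LS hg hk).DEx := by
  intro φ hφ
  change X.Fr B →ₗ[B] B at φ
  change φ ∘ₗ X.dF hg ∈ II x c (X.Fr B →ₗ[B] B) at hφ
  change ∃ ψ : X.Fr B →ₗ[B] B, φ - ψ ∘ₗ X.dF hg ∈ II x c (X.Fr B →ₗ[B] B)
  rw [hom_mem_II (X.bs B)] at hφ
  have h1 : ∀ n, (fun k => g (φ (X.bs B ⟨n+1, k⟩))) ᵥ* X.m n = 0 := by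
    intro n
    ext i
    rw [← X.dual_comp hg]
    exact (hk _).2 (hφ _)
  have h2 : ∀ q, ∃ w : Fin (X.r q) → A', ∀ n (h : q = n + 1),
      (cast (by rw [h]) w : Fin (X.r (n+1)) → A') ᵥ* X.m n = fun k => g (φ (X.bs B ⟨n, k⟩)) := by
    intro q
    obtain ⟨n, rfl⟩ : ∃ s, q = s + 1 + 1 := ⟨q - 2, by ring⟩
    obtain ⟨w, hw⟩ := (X.dex _ _).1 (h1 n)
    refine ⟨w, fun n' h => ?_⟩
    obtain rfl : n' = n + 1 := by omega
    exact hw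
  choose w hw using h2
  refine ⟨(X.bs B).constr B (fun i => Function.surjInv hg (w i.1 i.2)), ?_⟩
  rw [hom_mem_II (X.bs B)]
  rintro ⟨n, i⟩
  rw [← hk, LinearMap.sub_apply, LinearMap.comp_apply, map_sub, X.dual_comp hg]
  simp only [Module.Basis.constr_basis, Function.surjInv_eq]
  have := congrFun (hw (n+1) n rfl) i
  rw [cast_eq] at this
  rw [this, sub_self]

/-- identification of the cokernel module -/
lemma CC.Y_equiv {T : Type u} [AddCommGroup T] [Module A' T] [Module B T] (hT : ∀ (b : B) (t : T), b • t = g b • t)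
    (n : ℤ) (π : (Fin (X.r n) → A') →ₗ[A'] T) (hπ : Function.Surjective π)
    (hπk : ∀ v, π v = 0 ↔ X.m n *ᵥ v = 0) : Nonempty (T ≃ₗ[B] (X.LS hg hk).Y n) := by
  let f0 : X.Fr B →ₗ[B] T :=
    { toFun := fun v => π (X.vec g v n)
      map_add' := fun v w => by rw [vec_add, map_add]
      map_smul' := fun b v => by rw [vec_smul, map_smul, hT]; rfl }
  let f : (X.LS hg hk).F →ₗ[B] T := f0
  have hf : Function.Surjective f := by
    intro t
    obtain ⟨v, rfl⟩ := hπ t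
    refine ⟨X.hv B n (fun k => Function.surjInv hg (v k)), ?_⟩
    change π _ = _
    rw [vec_hv_same]
    simp only [Function.surjInv_eq]
  have hker : LinearMap.ker f = (X.LS hg hk).W n := by
    ext v
    rw [X.mem_W hg hk, ← hπk]
    rfl
  exact ⟨((Submodule.quotEquivOfEq _ _ hker.symm).trans (f.quotKerEquivOfSurjective hf)).symm⟩

section min
variable (hmin : ∀ n k i, X.m n k i ∈ nonunits A')

lemma CC.d_mF (hmin : ∀ n k i, X.m n k i ∈ nonunits A') (v : X.Fr B) :
    X.dF hg v ∈ maximalIdeal B • (⊤ : Submodule B (X.Fr B)) := by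
  suffices LinearMap.range (X.dF hg) ≤ maximalIdeal B • (⊤ : Submodule B (X.Fr B)) from this ⟨v, rfl⟩
  rw [LinearMap.range_eq_map, ← (X.bs B).span_eq, LinearMap.map_span_le]
  rintro _ ⟨⟨n, i⟩, rfl⟩
  rw [dF_basis, hv_apply]
  refine Submodule.sum_mem _ fun k _ => Submodule.smul_mem_smul ?_ ?_
  swap
  · rw [(X.bs B).span_eq]; trivial
  rw [mem_maximalIdeal]
  intro hu
  have := hu.map g
  rw [Function.surjInv_eq hg] at this
  exact hmin _ _ _ this

lemma CC.ell_eq [IsNoetherianRing B] (hmin : ∀ n k i, X.m n k i ∈ nonunits A') (n : ℤ) :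
    (X.LS hg hk).ell n = X.r n := by
  set S := X.LS hg hk with hS
  have hZ : ∀ v : S.F, v ∈ S.Z := by
    intro v
    rw [SG.LS.mem_Z]
    exact X.d_mF hg hmin v
  have hBd : ∀ v : S.F, v ∈ S.Bd ↔ v ∈ S.mF := by
    intro v
    refine ⟨fun h => ?_, fun h => S.mF_le_Bd h⟩
    obtain ⟨w, hw⟩ := (SG.LS.mem_Bd S).1 h
    have h2 : S.d w ∈ S.mF := X.d_mF hg hmin w
    have := add_mem hw h2
    rwa [sub_add_cancel] at this
  let f : (Fin (X.r n) → B) →ₗ[B] S.E := S.cl ∘ₗ (X.hv B n).codRestrict S.Z (fun v => hZ _)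
  have hfr : LinearMap.range f = LinearMap.range (S.e n) := by
    ext a
    rw [S.range_e_iff]
    constructor
    · rintro ⟨v, rfl⟩
      change S.e n (S.cl _) = S.cl _
      rw [SG.LS.e_cl]
      congr 1
      apply Subtype.ext
      exact X.prj_hv n v
    · intro h
      obtain ⟨z, rfl⟩ := S.cl_surj a
      rw [SG.LS.e_cl] at h
      rw [← h]
      let y : X.Fr B := z.1
      refine ⟨fun k => y ⟨n, k⟩, ?_⟩
      change S.cl _ = S.cl _
      congr 1
      apply Subtype.ext
      exact (X.prj_eq_hv n z.1).symm
  let q : (Fin (X.r n) → B) →ₗ[B] (Fin (X.r n) → B ⧸ maximalIdeal B) :=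
    (Submodule.mkQ (maximalIdeal B)).compLeft _
  have hq : Function.Surjective q := by
    intro v
    choose w hw using fun k => Submodule.mkQ_surjective (maximalIdeal B) (v k)
    exact ⟨w, funext hw⟩
  have hker : LinearMap.ker q = LinearMap.ker f := by
    ext v
    have e1 : v ∈ LinearMap.ker f ↔ X.hv B n v ∈ S.mF := by
      rw [LinearMap.mem_ker]
      change S.cl _ = 0 ↔ _
      rw [SG.LS.cl_eq_zero]
      exact hBd _
    rw [e1, LinearMap.mem_ker]
    constructor
    · intro h
      refine basis_mem_smul (X.bs B) ?_
      rintro ⟨p, k⟩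
      by_cases hp : n = p
      · subst hp
        change X.hv B n v ⟨n, k⟩ ∈ _
        rw [hv_same]
        exact (Submodule.Quotient.mk_eq_zero _).1 (congrFun h k)
      · change X.hv B n v ⟨p, k⟩ ∈ _
        rw [hv_ne X hp]
        exact zero_mem _
    · intro h
      funext k
      refine (Submodule.Quotient.mk_eq_zero _).2 ?_
      have : ∀ w ∈ maximalIdeal B • (⊤ : Submodule B (X.Fr B)), w ⟨n, k⟩ ∈ maximalIdeal B := by
        intro w hw
        refine Submodule.smul_induction_on hw ?_ ?_
        · intro r hr y _
          exact Ideal.mul_mem_right _ _ hr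
        · intro a b ha hb
          exact add_mem ha hb
      have := this _ h
      rwa [hv_same] at this
  have e := ((q.quotKerEquivOfSurjective hq).symm.trans
    ((Submodule.quotEquivOfEq _ _ hker).trans f.quotKerEquivRange)).length_eq
  have hl : Module.length B (Fin (X.r n) → B ⧸ maximalIdeal B) = X.r n := by
    haveI : IsSimpleModule B (B ⧸ maximalIdeal B) :=
      isSimpleModule_iff_isCoatom.2 (maximalIdeal.isMaximal B).out
    rw [Module.length_pi, Module.length_eq_one, mul_one]
    simp
  unfold SG.LS.ell
  rw [← hfr, ← e, hl]
  rfl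
end min

end lift
end SG

namespace SG
set_option linter.unusedSectionVars false
set_option linter.unusedVariables false
set_option linter.style.haveILetI false
set_option linter.unusedSimpArgs false

open Matrix

section core
variable {B A' : Type u} [CommRing B] [IsLocalRing B] [IsNoetherianRing B] [CommRing A'] {x : ℕ → B} {c : ℕ} [RegSeq x c]
  {g : B →+* A'}

/-- one-sided comparison -/
lemma CC.main (hg : Function.Surjective g) (hk : ∀ b, g b = 0 ↔ b ∈ II x c B) (X : CC A')
    (hmin : ∀ n k i, X.m n k i ∈ nonunits A')
    {T : Type u} [AddCommGroup T] [Module A' T] [Module B T] (hT : ∀ (b : B) (t : T), b • t = g b • t)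
    (n : ℤ) (π : (Fin (X.r n) → A') →ₗ[A'] T) (hπ : Function.Surjective π)
    (hπk : ∀ v, π v = 0 ↔ X.m n *ᵥ v = 0) {l : ℕ} (hp : PL B T l) :
    complexityPlus (fun n => X.r (-n)) ≤ complexityPlus X.r := by
  obtain ⟨e⟩ := X.Y_equiv hg hk hT n π hπ hπk
  have hE := X.LS_Ex hg hk
  have hF := (X.LS hg hk).FG_of_pd hE (X.LS_DEx hg hk) (hp.equiv e)
  have he : (X.LS hg hk).ell = X.r := funext fun n => X.ell_eq hg hk hmin n
  rw [← he]
  apply num_fin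
  · exact (X.LS hg hk).growth_zero hE
  · intro t ht
    exact SG.LS.growth t _ hE hF ht
end core

section tac
variable {A : Type u} [CommRing A] (X : TotallyAcyclicComplex A)

/-- differential with flexible indices -/
def dt (p q : ℤ) (h : p = q + 1) : X.C p →ₗ[A] X.C q := by
  subst h
  exact X.d q

lemma dt_ex {p q s : ℤ} (h : p = q + 1) (h' : q = s + 1) (v : X.C q) :
    dt X q s h' v = 0 ↔ ∃ w, dt X p q h w = v := by
  subst h'
  subst h
  have := X.exact s
  change v ∈ LinearMap.ker (X.d s) ↔ v ∈ LinearMap.range (X.d (s+1))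
  rw [this]

lemma dt_dex {p q s : ℤ} (h : p = q + 1) (h' : q = s + 1) (φ : X.C q →ₗ[A] A) :
    φ ∘ₗ dt X p q h = 0 ↔ ∃ ψ : X.C s →ₗ[A] A, ψ ∘ₗ dt X q s h' = φ := by
  subst h'
  subst h
  have := X.dualExact s
  change φ ∈ LinearMap.ker (X.d (s+1)).dualMap ↔ φ ∈ LinearMap.range (X.d s).dualMap
  rw [this]

variable [Nontrivial A]

/-- chosen bases -/
noncomputable def tb (n : ℤ) : Module.Basis (Fin (Module.finrank A (X.C n))) A (X.C n) :=
  haveI := X.free n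
  haveI := X.fin n
  Module.finBasis A (X.C n)

/-- matrix of the differential -/
noncomputable def tm (p q : ℤ) (h : p = q + 1) :
    Matrix (Fin (Module.finrank A (X.C q))) (Fin (Module.finrank A (X.C p))) A :=
  LinearMap.toMatrix (tb X p) (tb X q) (dt X p q h)

lemma tm_mulVec {p q : ℤ} (h : p = q + 1) (v : X.C p) :
    tm X p q h *ᵥ (tb X p).equivFun v = (tb X q).equivFun (dt X p q h v) :=
  LinearMap.toMatrix_mulVec_repr _ _ _ _

lemma tm_ex {p q s : ℤ} (h : p = q + 1) (h' : q = s + 1) (v : Fin (Module.finrank A (X.C q)) → A) :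
    tm X q s h' *ᵥ v = 0 ↔ ∃ w, tm X p q h *ᵥ w = v := by
  obtain ⟨v, rfl⟩ := (tb X q).equivFun.surjective v
  rw [tm_mulVec, LinearEquiv.map_eq_zero_iff, dt_ex X h h']
  constructor
  · rintro ⟨w, rfl⟩
    exact ⟨_, tm_mulVec X h w⟩
  · rintro ⟨w, hw⟩
    obtain ⟨w, rfl⟩ := (tb X p).equivFun.surjective w
    rw [tm_mulVec] at hw
    exact ⟨w, (tb X q).equivFun.injective hw⟩

/-- functionals in coordinates -/
noncomputable def tf (n : ℤ) : (Fin (Module.finrank A (X.C n)) → A) ≃ₗ[A] (X.C n →ₗ[A] A) :=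
  (tb X n).constr A

lemma tf_basis (n : ℤ) (u) (i) : tf X n u (tb X n i) = u i := by
  unfold tf; rw [Module.Basis.constr_basis]

lemma tf_symm (n : ℤ) (φ : X.C n →ₗ[A] A) (i) : (tf X n).symm φ i = φ (tb X n i) := by
  obtain ⟨u, rfl⟩ := (tf X n).surjective φ
  rw [LinearEquiv.symm_apply_apply, tf_basis]

lemma tf_comp {p q : ℤ} (h : p = q + 1) (u) :
    tf X q u ∘ₗ dt X p q h = tf X p (u ᵥ* tm X p q h) := by
  refine (tb X p).ext fun i => ?_
  rw [LinearMap.comp_apply, tf_basis]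
  conv_lhs => rw [← (tb X q).sum_repr (dt X p q h (tb X p i)), map_sum]
  simp only [vecMul, dotProduct]
  refine Finset.sum_congr rfl fun k _ => ?_
  rw [map_smul, tf_basis, smul_eq_mul, mul_comm, tm, LinearMap.toMatrix_apply]

lemma tm_dex {p q s : ℤ} (h : p = q + 1) (h' : q = s + 1) (v : Fin (Module.finrank A (X.C q)) → A) :
    v ᵥ* tm X p q h = 0 ↔ ∃ w, w ᵥ* tm X q s h' = v := by
  rw [← (tf X p).map_eq_zero_iff, ← tf_comp, dt_dex X h h']
  constructor
  · rintro ⟨ψ, hψ⟩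
    obtain ⟨w, rfl⟩ := (tf X s).surjective ψ
    rw [tf_comp] at hψ
    exact ⟨w, (tf X q).injective hψ⟩
  · rintro ⟨w, rfl⟩
    exact ⟨tf X s w, tf_comp X h' w⟩

/-- the complex, reversed -/
noncomputable def cc1 : CC A where
  r n := Module.finrank A (X.C (-n))
  m n := tm X (-n) (-(n+1)) (by ring)
  ex n v := tm_ex X _ _ v
  dex n v := tm_dex X _ _ v

/-- the dual complex -/
noncomputable def cc2 : CC A where
  r n := Module.finrank A (X.C n)
  m n := (tm X (n+1) n rfl)ᵀ
  ex n v := by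
    simp only [mulVec_transpose]
    exact tm_dex X _ _ v
  dex n v := by
    simp only [vecMul_transpose]
    exact tm_ex X _ _ v

lemma tm_min [IsLocalRing A] (hmin : ∀ n : ℤ, LinearMap.range (X.d n) ≤
      (maximalIdeal A) • (⊤ : Submodule A (X.C n))) {p q : ℤ} (h : p = q + 1) (k i) :
    tm X p q h k i ∈ maximalIdeal A := by
  subst h
  rw [tm, LinearMap.toMatrix_apply]
  have h1 : X.d q (tb X (q+1) i) ∈ (maximalIdeal A) • (⊤ : Submodule A (X.C q)) := hmin q ⟨_, rfl⟩
  change (tb X q).repr (X.d q (tb X (q+1) i)) k ∈ _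
  generalize X.d q (tb X (q+1) i) = w at h1
  refine Submodule.smul_induction_on h1 ?_ ?_
  · intro r hr y _
    simpa using Ideal.mul_mem_right _ _ hr
  · intro a b ha hb
    simpa using add_mem ha hb

/-- `M` -/
abbrev tM : Type u := ↥(LinearMap.range (X.d (-1)))

/-- generators of `M` -/
noncomputable def q1 : (Fin (Module.finrank A (X.C (-1+1))) → A) →ₗ[A] tM X :=
  (X.d (-1)).rangeRestrict ∘ₗ (tb X (-1+1)).equivFun.symm.toLinearMap

lemma q1_surj : Function.Surjective (q1 X) := by
  unfold q1
  rw [LinearMap.coe_comp]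
  exact (LinearMap.surjective_rangeRestrict _).comp (LinearEquiv.surjective _)

/-- embedding of `M` -/
noncomputable def i1 : tM X →ₗ[A] (Fin (Module.finrank A (X.C (-1))) → A) :=
  (tb X (-1)).equivFun.toLinearMap ∘ₗ (LinearMap.range (X.d (-1))).subtype

lemma i1_inj : Function.Injective (i1 X) := by
  unfold i1
  rw [LinearMap.coe_comp]
  exact (LinearEquiv.injective _).comp (Submodule.subtype_injective _)

lemma i1_q1 : i1 X ∘ₗ q1 X = (tm X (-1+1) (-1) rfl).mulVecLin := by
  apply LinearMap.ext
  intro v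
  obtain ⟨w, rfl⟩ := (tb X (-1+1)).equivFun.surjective v
  rw [mulVecLin_apply, tm_mulVec]
  change (tb X (-1)).equivFun (X.d (-1) ((tb X (-1+1)).equivFun.symm ((tb X (-1+1)).equivFun w))) = _
  rw [LinearEquiv.symm_apply_apply]
  rfl

/-- generators of `M*` -/
noncomputable def q2 : (Fin (Module.finrank A (X.C (-1))) → A) →ₗ[A] Module.Dual A (tM X) :=
  (LinearMap.range (X.d (-1))).subtype.dualMap ∘ₗ (tf X (-1)).toLinearMap

/-- embedding of `M*` -/
noncomputable def i2 : Module.Dual A (tM X) →ₗ[A] (Fin (Module.finrank A (X.C (-1+1))) → A) :=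
  (tf X (-1+1)).symm.toLinearMap ∘ₗ (X.d (-1)).rangeRestrict.dualMap

lemma i2_inj : Function.Injective (i2 X) := by
  unfold i2
  rw [LinearMap.coe_comp]
  exact (LinearEquiv.injective _).comp
    (LinearMap.dualMap_injective_of_surjective (LinearMap.surjective_rangeRestrict _))

lemma i2_q2 : i2 X ∘ₗ q2 X = ((tm X (-1+1) (-1) rfl)ᵀ).mulVecLin := by
  apply LinearMap.ext
  intro v
  apply (tf X (-1+1)).injective
  rw [mulVecLin_apply]
  change tf X (-1+1) ((tf X (-1+1)).symm ((tf X (-1) v) ∘ₗ (LinearMap.range (X.d (-1))).subtype ∘ₗ (X.d (-1)).rangeRestrict))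
    = tf X (-1+1) ((tm X (-1+1) (-1) rfl)ᵀ *ᵥ v)
  rw [LinearEquiv.apply_symm_apply, mulVec_transpose, ← tf_comp]
  rfl

lemma q2_surj : Function.Surjective (q2 X) := by
  intro φ
  have h : (φ ∘ₗ (X.d (-1)).rangeRestrict) ∘ₗ dt X (-1+1+1) (-1+1) rfl = 0 := by
    ext v
    have : X.d (-1) (X.d (-1+1) v) = 0 := by
      rw [← LinearMap.mem_ker, ← X.exact]
      exact ⟨_, rfl⟩
    have e : (X.d (-1)).rangeRestrict (X.d (-1+1) v) = 0 := Subtype.ext this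
    change φ ((X.d (-1)).rangeRestrict (X.d (-1+1) v)) = 0
    rw [e, map_zero]
  obtain ⟨ψ, hψ⟩ := (dt_dex X (p := -1+1+1) (q := -1+1) (s := -1) rfl rfl _).1 h
  obtain ⟨u, rfl⟩ := (tf X (-1)).surjective ψ
  refine ⟨u, ?_⟩
  apply LinearMap.ext
  rintro ⟨_, w, rfl⟩
  exact LinearMap.congr_fun hψ w

end tac

lemma wr_of_list {B : Type u} [CommRing B] (xs : List B)
    (h : RingTheory.Sequence.IsWeaklyRegular B xs) :
    WR (fun i => xs.getD i 0) xs.length B ∧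
    ∀ b, b ∈ Ideal.ofList xs ↔ b ∈ II (fun i => xs.getD i 0) xs.length B := by
  have key : ∀ j, j ≤ xs.length → ∀ b, b ∈ Ideal.ofList (xs.take j) ↔ b ∈ II (fun i => xs.getD i 0) j B := by
    intro j
    induction j with
    | zero => intro _ b; simp [II_zero]
    | succ j ih =>
      intro hj b
      have hj' : j < xs.length := by omega
      rw [List.take_succ_eq_append_getElem hj', Ideal.ofList_append, Ideal.ofList_singleton,
        Submodule.mem_sup, mem_II_succ]
      have e : xs.getD j 0 = xs[j] := by simp [hj']
      simp only [e]
      constructor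
      · rintro ⟨y, hy, z, hz, rfl⟩
        obtain ⟨a, rfl⟩ := Ideal.mem_span_singleton'.1 hz
        refine ⟨a, ?_⟩
        rw [← ih (by omega)]
        convert hy using 1
        simp [mul_comm]
      · rintro ⟨a, ha⟩
        rw [← ih (by omega)] at ha
        exact ⟨_, ha, _, Ideal.mem_span_singleton'.2 ⟨a, rfl⟩, by simp [mul_comm]⟩
  constructor
  · intro j hj a ha
    rw [← key j hj.le] at ha ⊢
    have h1 := h.regular_mod_prev j hj
    have h2 := h1 (a₁ := (Submodule.Quotient.mk a)) (a₂ := 0)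
    have e : xs.getD j 0 = xs[j] := by simp [hj]
    have h3 : (Submodule.Quotient.mk a : B ⧸ (Ideal.ofList (xs.take j) • (⊤ : Submodule B B))) = 0 := by
      apply h2
      simp only [smul_zero]
      rw [← Submodule.Quotient.mk_smul, Submodule.Quotient.mk_eq_zero]
      simpa [e, hj] using ha
    rw [Submodule.Quotient.mk_eq_zero] at h3
    simpa using h3
  · intro b
    have := key xs.length le_rfl b
    rwa [List.take_length] at this

lemma PL_of_res {B : Type u} [CommRing B] (n : ℕ) : ∀ {M : Type u} [AddCommGroup M] [Module B M]
    (R : FiniteFreeResolution B M), R.len = n → PL B M (n+1) := by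
  induction n with
  | zero =>
    intro M _ _ R h
    letI := R.acg
    letI := R.mod
    haveI := R.bounded 0 (by omega)
    haveI : Subsingleton M := R.augSurj.subsingleton
    rw [PL_one]
    infer_instance
  | succ n ih =>
    intro M _ _ R h
    letI := R.acg
    letI := R.mod
    haveI := R.free
    have h0 : ∀ v, R.d 0 v ∈ LinearMap.ker R.aug := fun v => by rw [← R.ex0]; exact ⟨v, rfl⟩
    let R' : FiniteFreeResolution B (LinearMap.ker R.aug) :=
      { len := n
        F := fun n => R.F (n+1)
        free := fun n => R.free _
        fin := fun n => R.fin _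
        d := fun n => R.d (n+1)
        aug := (R.d 0).codRestrict _ h0
        augSurj := by
          rintro ⟨a, ha⟩
          rw [← R.ex0] at ha
          obtain ⟨v, rfl⟩ := ha
          exact ⟨v, rfl⟩
        ex0 := by rw [R.ex, LinearMap.ker_codRestrict]
        ex := fun n => R.ex _
        bounded := fun m hm => R.bounded _ (by omega) }
    refine PL.three (f := (LinearMap.ker R.aug).subtype) (g := R.aug) (Submodule.subtype_injective _)
      R.augSurj (by rw [LinearMap.exact_iff]; simp) (ih R' rfl) ?_
    refine PL.mono (n := 1) (PL_one.2 inferInstance) (by omega)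

end SG

open SG
theorem symmetric_growth_of_quasiDeformation
    (A : Type u) [CommRing A] [IsNoetherianRing A] [IsLocalRing A]
    (X : TotallyAcyclicComplex A)
    -- minimality of the complex C
    (hmin : ∀ n : ℤ, LinearMap.range (X.d n) ≤
      (maximalIdeal A) • (⊤ : Submodule A (X.C n)))
    -- a quasi-deformation A → A' ← B
    (A' : Type u) [CommRing A'] [IsNoetherianRing A'] [IsLocalRing A']
    [Algebra A A'] [Module.Flat A A'] (hflatLocal : IsLocalHom (algebraMap A A'))
    (B : Type u) [CommRing B] [IsNoetherianRing B] [IsLocalRing B]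
    (g : B →+* A') (hg : Function.Surjective g) (hgLocal : IsLocalHom g)
    (xs : List B) (hxs : ∀ x ∈ xs, x ∈ maximalIdeal B)
    (hreg : RingTheory.Sequence.IsRegular B xs)
    (hker : RingHom.ker g = Ideal.ofList xs)
    -- (M ⊗_A A') ⊕ (M* ⊗_A A'), regarded as a B-module via g : B → A',
    -- has finite projective dimension over B, where M = Im(d₀)
    (hpd : letI M := ↥(LinearMap.range (X.d (-1)))
      letI T := (A' ⊗[A] M) × (A' ⊗[A] (Module.Dual A M))
      letI : Module B T := Module.compHom T g
      Nonempty (FiniteFreeResolution B T)) :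
    -- conclusion: C has symmetric growth
    complexityPlus (fun n => Module.finrank A (X.C n)) =
      complexityMinus (fun n => Module.finrank A (X.C n)) := by
  obtain ⟨hwr, hII⟩ := wr_of_list xs hreg.toIsWeaklyRegular
  haveI : RegSeq (fun i => xs.getD i 0) xs.length :=
    ⟨fun i hi => hxs _ (by simp [hi]), hwr⟩
  have hk : ∀ b, g b = 0 ↔ b ∈ II (fun i => xs.getD i 0) xs.length B := by
    intro b
    rw [← hII, ← hker]
    rfl
  letI m1 : Module B (A' ⊗[A] tM X) := Module.compHom _ g
  letI m2 : Module B (A' ⊗[A] (Module.Dual A (tM X))) := Module.compHom _ g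
  obtain ⟨R⟩ := hpd
  letI m3 : Module B ((A' ⊗[A] tM X) × (A' ⊗[A] (Module.Dual A (tM X)))) := Module.compHom _ g
  have hPL : PL B ((A' ⊗[A] tM X) × (A' ⊗[A] (Module.Dual A (tM X)))) (R.len+1) := PL_of_res R.len R rfl
  have hu : ∀ a ∈ maximalIdeal A, algebraMap A A' a ∈ nonunits A' := by
    intro a ha hu
    exact ha (hflatLocal.map_nonunit a hu)
  have hP1 : PL B (A' ⊗[A] tM X) (R.len+1) :=
    hPL.retract ⟨⟨fun a => (a, 0), fun a b => by simp⟩, fun b a => by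
        refine Prod.ext rfl ?_
        exact (smul_zero (g b)).symm⟩
      ⟨⟨Prod.fst, fun a b => rfl⟩, fun b a => rfl⟩ rfl
  have hP2 : PL B (A' ⊗[A] (Module.Dual A (tM X))) (R.len+1) :=
    hPL.retract ⟨⟨fun a => (0, a), fun a b => by simp⟩, fun b a => by
        refine Prod.ext ?_ rfl
        exact (smul_zero (g b)).symm⟩
      ⟨⟨Prod.snd, fun a b => rfl⟩, fun b a => rfl⟩ rfl
  have c1 := CC.main hg hk ((cc1 X).map A') (fun n k i => hu _ (tm_min X hmin _ _ _))
    (T := A' ⊗[A] tM X) (fun _ _ => rfl) 0 (prs (q1 X)) (prs_surj _ (q1_surj X))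
    (prs_ker _ (i1 X) (i1_inj X) _ (i1_q1 X)) hP1
  have c2 := CC.main hg hk ((cc2 X).map A') (fun n k i => hu _ (tm_min X hmin _ _ _))
    (T := A' ⊗[A] (Module.Dual A (tM X))) (fun _ _ => rfl) (-1) (prs (q2 X)) (prs_surj _ (q2_surj X))
    (prs_ker _ (i2 X) (i2_inj X) _ (i2_q2 X)) hP2
  apply le_antisymm
  · have e : (fun n : ℤ => ((cc1 X).map A').r (-n)) = fun n => Module.finrank A (X.C n) := by
      funext n
      change Module.finrank A (X.C (- -n)) = _
      rw [neg_neg]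
    rw [e] at c1
    exact c1
  · exact c2
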